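/- Let R and R′ be Legendrian equivalent rectangular diagrams, and let α be a rectangular path whose ends lie on edges of R. Write R = β ∪ γ ∪ δ, where β and γ are the two rectangular paths into which the ends of α divide the connected component of R containing those edges, and δ is the union of the remaining components. Then there exists a rectangular path α′ whose ends lie on edges of R′ and a decomposition R′ = β′ ∪ γ′ ∪ δ′ such that the rectangular Θ-diagrams (α, β, γ, δ) and (α′, β′, γ′, δ′) are Legendrian equivalent. -/

import Mathlib

noncomputable section
open scoped Classical

/-- A point of the plane. -/
abbrev Pt : Type := ℝ × ℝ

/-- A rectangular diagram: a finite set of points in the plane such that every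
vertical or horizontal straight line contains either no points or exactly two points of it. -/
def IsDiagram (R : Finset Pt) : Prop :=
  ∀ p ∈ R, (R.filter (fun q => q.1 = p.1)).card = 2 ∧
    (R.filter (fun q => q.2 = p.2)).card = 2

/-- The complexity of a rectangular diagram: the number of its vertical edges. -/
def complexity (R : Finset Pt) : ℕ := (R.image Prod.fst).card

/-- Moving the vertical line `x0` to position `x1` (all other points unchanged). -/
def vmap (x0 x1 : ℝ) : Pt → Pt := fun p => if p.1 = x0 then (x1, p.2) else p

/-- Moving the horizontal line `y0` to position `y1`. -/
def hmap (y0 y1 : ℝ) : Pt → Pt := fun p => if p.2 = y0 then (p.1, y1) else p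

/-- Exchanging the vertical lines `x1` and `x2`. -/
def swapv (x1 x2 : ℝ) : Pt → Pt := fun p =>
  if p.1 = x1 then (x2, p.2) else if p.1 = x2 then (x1, p.2) else p

/-- Exchanging the horizontal lines `y1` and `y2`. -/
def swaph (y1 y2 : ℝ) : Pt → Pt := fun p =>
  if p.2 = y1 then (p.1, y2) else if p.2 = y2 then (p.1, y1) else p

/-- `f` realizes a cyclic permutation on the finite set `R`:  an extreme (left/right/top/bottom)
edge is moved to the opposite side of the diagram. -/
def CyclicData (R : Finset Pt) (f : Pt → Pt) : Prop :=
  (∃ x0 x1 : ℝ, (∃ p ∈ R, p.1 = x0) ∧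
     (((∀ p ∈ R, x0 ≤ p.1) ∧ ∀ p ∈ R, p.1 ≠ x0 → p.1 < x1) ∨
      ((∀ p ∈ R, p.1 ≤ x0) ∧ ∀ p ∈ R, p.1 ≠ x0 → x1 < p.1)) ∧
     f = vmap x0 x1) ∨
  (∃ y0 y1 : ℝ, (∃ p ∈ R, p.2 = y0) ∧
     (((∀ p ∈ R, y0 ≤ p.2) ∧ ∀ p ∈ R, p.2 ≠ y0 → p.2 < y1) ∨
      ((∀ p ∈ R, p.2 ≤ y0) ∧ ∀ p ∈ R, p.2 ≠ y0 → y1 < p.2)) ∧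
     f = hmap y0 y1)

/-- The pairs of second coordinates of the points of `R` on the vertical lines `x1`, `x2`
do not interleave. -/
def NoInterleaveV (R : Finset Pt) (x1 x2 : ℝ) : Prop :=
  ∀ p ∈ R, ∀ p' ∈ R, ∀ q ∈ R, ∀ q' ∈ R,
    p.1 = x1 → p'.1 = x1 → q.1 = x2 → q'.1 = x2 →
    ¬ ((p.2 < q.2 ∧ q.2 < p'.2 ∧ p'.2 < q'.2) ∨
       (q.2 < p.2 ∧ p.2 < q'.2 ∧ q'.2 < p'.2))

/-- The pairs of first coordinates of the points of `R` on the horizontal lines `y1`, `y2`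
do not interleave. -/
def NoInterleaveH (R : Finset Pt) (y1 y2 : ℝ) : Prop :=
  ∀ p ∈ R, ∀ p' ∈ R, ∀ q ∈ R, ∀ q' ∈ R,
    p.2 = y1 → p'.2 = y1 → q.2 = y2 → q'.2 = y2 →
    ¬ ((p.1 < q.1 ∧ q.1 < p'.1 ∧ p'.1 < q'.1) ∨
       (q.1 < p.1 ∧ p.1 < q'.1 ∧ q'.1 < p'.1))

/-- `f` realizes a commutation on `R`: two neighboring parallel edges, whose pairs of endpoints
projected to the common axis are disjoint and do not interleave, are exchanged. -/
def CommData (R : Finset Pt) (f : Pt → Pt) : Prop :=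
  (∃ x1 x2 : ℝ, x1 ≠ x2 ∧ (∃ p ∈ R, p.1 = x1) ∧ (∃ p ∈ R, p.1 = x2) ∧
     (∀ p ∈ R, ¬ (min x1 x2 < p.1 ∧ p.1 < max x1 x2)) ∧
     (∀ p ∈ R, ∀ q ∈ R, p.1 = x1 → q.1 = x2 → p.2 ≠ q.2) ∧
     NoInterleaveV R x1 x2 ∧ f = swapv x1 x2) ∨
  (∃ y1 y2 : ℝ, y1 ≠ y2 ∧ (∃ p ∈ R, p.2 = y1) ∧ (∃ p ∈ R, p.2 = y2) ∧
     (∀ p ∈ R, ¬ (min y1 y2 < p.2 ∧ p.2 < max y1 y2)) ∧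
     (∀ p ∈ R, ∀ q ∈ R, p.2 = y1 → q.2 = y2 → p.1 ≠ q.1) ∧
     NoInterleaveH R y1 y2 ∧ f = swaph y1 y2)

/-- A cyclic permutation move of rectangular diagrams. -/
def CyclicMove (R R' : Finset Pt) : Prop :=
  IsDiagram R ∧ IsDiagram R' ∧ ∃ f, CyclicData R f ∧ R' = R.image f

/-- A commutation move of rectangular diagrams. -/
def CommMove (R R' : Finset Pt) : Prop :=
  IsDiagram R ∧ IsDiagram R' ∧ ∃ f, CommData R f ∧ R' = R.image f

/-- The type of a stabilization/destabilization. -/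
inductive StabType
  | I : StabType
  | II : StabType
deriving DecidableEq

/-- Result of replacing the vertex `(x, y)` by the three other vertices of the small square
with corners `(x, y)`, `(x', y)`, `(x, y')`, `(x', y')`. -/
def stabSet (x y x' y' : ℝ) (C : Finset Pt) : Finset Pt :=
  insert ((x', y) : Pt) (insert ((x, y') : Pt) (insert ((x', y') : Pt) (C.erase (x, y))))

/-- The data of a stabilization of `R` at the vertex `(x, y)`, yielding `R'`:  the vertex is
replaced by the three other corners of a small square (`x'`, `y'` are fresh coordinates,
and no coordinate of `R` lies strictly between `x, x'` nor between `y, y'`). -/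
def StabData (x y x' y' : ℝ) (R R' : Finset Pt) : Prop :=
  (x, y) ∈ R ∧ x ≠ x' ∧ y ≠ y' ∧
  (∀ p ∈ R, p.1 ≠ x') ∧ (∀ p ∈ R, p.2 ≠ y') ∧
  (∀ p ∈ R, ¬ (min x x' < p.1 ∧ p.1 < max x x')) ∧
  (∀ p ∈ R, ¬ (min y y' < p.2 ∧ p.2 < max y y')) ∧
  R' = stabSet x y x' y' R

/-- A stabilization of type `t` occurring at the vertex `v` of `R`.  The type is I when the two
new short edges point from their common vertex downward-and-leftward or upward-and-rightward. -/
def StabMoveAt (t : StabType) (v : Pt) (R R' : Finset Pt) : Prop :=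
  IsDiagram R ∧ IsDiagram R' ∧
  ∃ x' y' : ℝ, StabData v.1 v.2 x' y' R R' ∧
    (t = StabType.I ↔ 0 < (v.1 - x') * (v.2 - y'))

/-- A stabilization of type `t`. -/
def StabMove (t : StabType) (R R' : Finset Pt) : Prop :=
  ∃ v : Pt, StabMoveAt t v R R'

/-- A complexity-preserving elementary move: a cyclic permutation or a commutation. -/
def ExchangeMove (R R' : Finset Pt) : Prop := CyclicMove R R' ∨ CommMove R R'

/-- An elementary move of rectangular diagrams: a cyclic permutation, a commutation,
a stabilization or a destabilization. -/
def ElemMove (R R' : Finset Pt) : Prop :=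
  CyclicMove R R' ∨ CommMove R R' ∨ ∃ t, StabMove t R R' ∨ StabMove t R' R

/-- An elementary move involving no stabilization or destabilization of type other than `t`. -/
def LegMove (t : StabType) (R R' : Finset Pt) : Prop :=
  CyclicMove R R' ∨ CommMove R R' ∨ StabMove t R R' ∨ StabMove t R' R

/-- Legendrian equivalence: connected by a finite sequence of elementary moves containing
no type II stabilizations or destabilizations. -/
def LegEquiv : Finset Pt → Finset Pt → Prop :=
  Relation.ReflTransGen (LegMove StabType.I)

/-- Connected by a finite sequence of elementary moves containing
no type I stabilizations or destabilizations. -/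
def MirrorEquiv : Finset Pt → Finset Pt → Prop :=
  Relation.ReflTransGen (LegMove StabType.II)

/-- An elementary simplification of type `t` : a finite sequence of cyclic permutations and
commutations followed by one destabilization of type `t`. -/
def ElemSimp (t : StabType) (R R' : Finset Pt) : Prop :=
  ∃ S, Relation.ReflTransGen ExchangeMove R S ∧ StabMove t R' S
/-- A rectangular diagram of a knot: a nonempty rectangular diagram none of whose nonempty
proper subsets is a rectangular diagram (i.e. it consists of a single closed broken line). -/
def IsKnotDiagram (R : Finset Pt) : Prop :=
  IsDiagram R ∧ R.Nonempty ∧ ∀ S ⊆ R, IsDiagram S → S.Nonempty → S = R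

/-- A connected component of a rectangular diagram `R`: a subset of `R` that is itself a
rectangular diagram of a knot. -/
def IsComponent (R K : Finset Pt) : Prop := K ⊆ R ∧ IsKnotDiagram K

/-- A rectangular path: a finite planar point set that becomes a rectangular diagram of a knot
after adding exactly one point, or exactly two points lying on one vertical or horizontal line;
a single point is also a rectangular path. -/
def IsPath (P : Finset Pt) : Prop :=
  (∃ p : Pt, P = {p}) ∨
  (∃ q : Pt, q ∉ P ∧ IsKnotDiagram (insert q P)) ∨
  (∃ q r : Pt, q ≠ r ∧ q ∉ P ∧ r ∉ P ∧ (q.1 = r.1 ∨ q.2 = r.2) ∧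
     IsKnotDiagram (insert q (insert r P)))

/-- The ends of a rectangular path: the (vertical — `true`, or horizontal — `false`) straight
lines containing exactly one vertex of the path. -/
def Ends (P : Finset Pt) : Set (Bool × ℝ) :=
  {l | (l.1 = true ∧ (P.filter (fun p => p.1 = l.2)).card = 1) ∨
       (l.1 = false ∧ (P.filter (fun p => p.2 = l.2)).card = 1)}
/-- A rectangular Θ-diagram: three rectangular paths `a`, `b`, `c` with common pairs of ends
and a rectangular diagram `d`. -/
structure Theta where
  a : Finset Pt
  b : Finset Pt
  c : Finset Pt
  d : Finset Pt

/-- The set of all vertices of a Θ-diagram. -/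
def Theta.U (T : Theta) : Finset Pt := T.a ∪ T.b ∪ T.c ∪ T.d

/-- General position of two vertex sets: distinct vertices may share a (vertical or
horizontal) line only if the line belongs to `E` (the ends). -/
def CrossGP (A C : Finset Pt) (E : Set (Bool × ℝ)) : Prop :=
  ∀ p ∈ A, ∀ q ∈ C,
    (p.1 = q.1 → (true, p.1) ∈ E) ∧ (p.2 = q.2 → (false, p.2) ∈ E)

/-- Validity of a rectangular Θ-diagram: `a`, `b`, `c` are rectangular paths sharing both of
their ends, `d` is a rectangular diagram, and all are in general position (no two vertices on
a common line except as forced by the construction, i.e. on the two common end lines). -/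
def ThetaOK (T : Theta) : Prop :=
  IsPath T.a ∧ IsPath T.b ∧ IsPath T.c ∧ IsDiagram T.d ∧
  Ends T.a = Ends T.b ∧ Ends T.a = Ends T.c ∧
  Disjoint T.a T.b ∧ Disjoint T.a T.c ∧ Disjoint T.b T.c ∧
  Disjoint T.a T.d ∧ Disjoint T.b T.d ∧ Disjoint T.c T.d ∧
  CrossGP T.a T.b (Ends T.a) ∧ CrossGP T.a T.c (Ends T.a) ∧ CrossGP T.b T.c (Ends T.a) ∧
  CrossGP T.a T.d ∅ ∧ CrossGP T.b T.d ∅ ∧ CrossGP T.c T.d ∅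

/-- Applying a planar map to all constituents of a Θ-diagram. -/
def mapTheta (f : Pt → Pt) (T : Theta) : Theta :=
  ⟨T.a.image f, T.b.image f, T.c.image f, T.d.image f⟩

/-- A cyclic permutation of a rectangular Θ-diagram (an extreme edge, or an extreme common
end of the three paths, is moved to the opposite side). -/
def ThCyclic (T T' : Theta) : Prop :=
  ThetaOK T ∧ ThetaOK T' ∧ ∃ f, CyclicData T.U f ∧ T' = mapTheta f T

/-- A commutation of a rectangular Θ-diagram (two neighboring parallel edges, or an edge and
a common end, or the two common ends, are exchanged, provided no endpoint pairs interleave). -/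
def ThComm (T T' : Theta) : Prop :=
  ThetaOK T ∧ ThetaOK T' ∧ ∃ f, CommData T.U f ∧ T' = mapTheta f T

/-- A type I stabilization of a Θ-diagram at any vertex (including endpoints of the paths). -/
def ThStabI (T T' : Theta) : Prop :=
  ThetaOK T ∧ ThetaOK T' ∧
  ∃ x y x' y' : ℝ, (x, y) ∈ T.U ∧ x ≠ x' ∧ y ≠ y' ∧
    (∀ p ∈ T.U, p.1 ≠ x') ∧ (∀ p ∈ T.U, p.2 ≠ y') ∧
    (∀ p ∈ T.U, ¬ (min x x' < p.1 ∧ p.1 < max x x')) ∧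
    (∀ p ∈ T.U, ¬ (min y y' < p.2 ∧ p.2 < max y y')) ∧
    0 < (x - x') * (y - y') ∧
    (((x, y) ∈ T.a ∧ T' = ⟨stabSet x y x' y' T.a, T.b, T.c, T.d⟩) ∨
     ((x, y) ∈ T.b ∧ T' = ⟨T.a, stabSet x y x' y' T.b, T.c, T.d⟩) ∨
     ((x, y) ∈ T.c ∧ T' = ⟨T.a, T.b, stabSet x y x' y' T.c, T.d⟩) ∨
     ((x, y) ∈ T.d ∧ T' = ⟨T.a, T.b, T.c, stabSet x y x' y' T.d⟩))

/-- Shift of a point upward by `ε`. -/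
def ptUp (ε : ℝ) (P : Pt) : Pt := (P.1, P.2 + ε)

/-- Shift of a point downward by `ε`. -/
def ptDn (ε : ℝ) (P : Pt) : Pt := (P.1, P.2 - ε)

/-- The path of the Θ-diagram `T` containing the point `P`. -/
def pathOf (T : Theta) (P : Pt) : Finset Pt :=
  if P ∈ T.a then T.a else if P ∈ T.b then T.b else T.c

/-- Replacement of the endpoint `P1`, `P2` or `P3` of a path by the prescribed set. -/
def updPath (C : Finset Pt) (P1 P2 P3 : Pt) (r1 r2 r3 : Finset Pt) : Finset Pt :=
  if P1 ∈ C then (C.erase P1) ∪ r1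
  else if P2 ∈ C then (C.erase P2) ∪ r2
  else (C.erase P3) ∪ r3

/-- An end shift at a horizontal common end of the three paths of a Θ-diagram: one of the three
endpoints `P1`, `P2`, `P3` (listed from left to right) on the common horizontal end line is
deleted, and two new vertices close to the remaining ones are added instead, in one of the six
combinatorially allowed ways. -/
def ThEndShiftH (T T' : Theta) : Prop :=
  ThetaOK T ∧ ThetaOK T' ∧
  ∃ (y0 : ℝ) (P1 P2 P3 : Pt) (ε : ℝ), 0 < ε ∧
    (∀ p ∈ T.U, ∀ q ∈ T.U, p.2 ≠ q.2 → ε < |p.2 - q.2|) ∧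
    P1.2 = y0 ∧ P2.2 = y0 ∧ P3.2 = y0 ∧ P1.1 < P2.1 ∧ P2.1 < P3.1 ∧
    (T.a ∪ T.b ∪ T.c).filter (fun p => p.2 = y0) = {P1, P2, P3} ∧
    T'.d = T.d ∧
    ∃ r1 r2 r3 : Finset Pt,
      ((r1 = {ptUp ε P1, ptUp ε P2} ∧ r2 = ∅ ∧ r3 = {P2, P3} ∧ pathOf T P2 ≠ {P2}) ∨
       (r1 = {ptDn ε P1, ptDn ε P3} ∧ r2 = {P2, P3} ∧ r3 = ∅ ∧ pathOf T P3 ≠ {P3}) ∨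
       (r1 = {P1, P3} ∧ r2 = {ptUp ε P2, ptUp ε P3} ∧ r3 = ∅ ∧ pathOf T P3 ≠ {P3}) ∨
       (r1 = ∅ ∧ r2 = {ptDn ε P2, ptDn ε P1} ∧ r3 = {P1, P3} ∧ pathOf T P1 ≠ {P1}) ∨
       (r1 = ∅ ∧ r2 = {P1, P2} ∧ r3 = {ptUp ε P3, ptUp ε P1} ∧ pathOf T P1 ≠ {P1}) ∨
       (r1 = {P1, P2} ∧ r2 = ∅ ∧ r3 = {ptDn ε P3, ptDn ε P2} ∧ pathOf T P2 ≠ {P2})) ∧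
      T'.a = updPath T.a P1 P2 P3 r1 r2 r3 ∧
      T'.b = updPath T.b P1 P2 P3 r1 r2 r3 ∧
      T'.c = updPath T.c P1 P2 P3 r1 r2 r3

/-- Transposition (mirror image in a diagonal) of a Θ-diagram. -/
def Theta.tr (T : Theta) : Theta := mapTheta (fun p => (p.2, p.1)) T

/-- An end shift (at a horizontal or at a vertical common end). -/
def ThEndShift (T T' : Theta) : Prop :=
  ThEndShiftH T T' ∨ ThEndShiftH T.tr T'.tr

/-- A permitted move of rectangular Θ-diagrams: a cyclic permutation, a commutation,
a type I stabilization or destabilization, or an end shift. -/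
def ThMove (T T' : Theta) : Prop :=
  ThCyclic T T' ∨ ThComm T T' ∨ ThStabI T T' ∨ ThStabI T' T ∨ ThEndShift T T'

/-- Legendrian equivalence of rectangular Θ-diagrams: connected by a finite sequence of
permitted moves. -/
def ThetaEquiv : Theta → Theta → Prop := Relation.ReflTransGen ThMove

/-!
It suffices to lift each elementary move of `R = β ∪ γ ∪ δ` to a sequence of permitted moves of
the Θ-diagram, and the only obstruction is that `α` may be in the way of the move.

Two flexibility facts remove it. First, positions along an axis matter only up to order: any
order-preserving motion of the lines met by a Θ-diagram is composed of cyclic permutations. Hence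
a type I stabilization can be performed across any rectangle that meets the diagram in a single
vertex. Second, let a vertical strip be bounded by two consecutive edges of `R`, and let no end of
`α` be vertical. Type I stabilizations of `α` across such rectangles sweep it out of the part of
the strip facing one of the edges, after which its remaining vertical edges in the strip slide
over the other edge, so that `α` can be removed from the strip while `R` stays fixed.

A cyclic permutation lifts after the part of `α` lying beyond the moved edge is carried along with
it, and a stabilization after `α` is squeezed off the small rectangle by a motion of lines. A
commutation or a destabilization lifts once the strip between the two edges involved is cleared.
The ends of `α` that would prevent the clearing are first moved to other edges of `R` by end
shifts.
-/

open scoped symmDiff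

/-- The position, in direction `d`, of a point: `coord true` is the abscissa (the position of the
vertical line through the point) and `coord false` the ordinate.  As in `Ends`, a line is a pair
`(d, t)`, with `true` standing for vertical. -/
def coord (d : Bool) (p : Pt) : ℝ := if d = true then p.1 else p.2

@[simp] theorem coord_true (p : Pt) : coord true p = p.1 := rfl

@[simp] theorem coord_false (p : Pt) : coord false p = p.2 := rfl

theorem ext_coord {p q : Pt} (d : Bool) (h : coord d p = coord d q)
    (h' : coord (!d) p = coord (!d) q) : p = q := by
  cases d
  exacts [Prod.ext h' h, Prod.ext h h']

/-- The point at position `t` in direction `d` and at position `u` in the other direction. -/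
def ofCoord (d : Bool) (t u : ℝ) : Pt := if d = true then (t, u) else (u, t)

@[simp] theorem coord_ofCoord (d : Bool) (t u : ℝ) : coord d (ofCoord d t u) = t := by
  cases d <;> rfl

@[simp] theorem coord_not_ofCoord (d : Bool) (t u : ℝ) : coord (!d) (ofCoord d t u) = u := by
  cases d <;> rfl

/-- The vertical and the horizontal line through a point. -/
def linesThrough (p : Pt) : Set (Bool × ℝ) := {l | coord l.1 p = l.2}

@[simp] theorem mem_linesThrough {p : Pt} {d : Bool} {t : ℝ} :
    (d, t) ∈ linesThrough p ↔ coord d p = t := Iff.rfl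

theorem linesThrough_eq_pair (d : Bool) (p : Pt) :
    linesThrough p = {(d, coord d p), (!d, coord (!d) p)} := by
  ext ⟨d', t⟩
  cases d <;> cases d' <;> simp [eq_comm]

theorem linesThrough_symmDiff_of_coord_eq {p q : Pt} {d : Bool} (hpq : p ≠ q)
    (h : coord d p = coord d q) :
    linesThrough p ∆ linesThrough q = {(!d, coord (!d) p), (!d, coord (!d) q)} := by
  have hne : coord (!d) p ≠ coord (!d) q := fun h' => hpq (ext_coord d h h')
  ext ⟨d', t⟩
  rw [Set.mem_symmDiff]
  cases d <;> cases d' <;> simp_all <;> grind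

/-- The number of points of `P` on the line at position `t` in direction `d`. -/
def lineCard (P : Finset Pt) (d : Bool) (t : ℝ) : ℕ := (P.filter (coord d · = t)).card

@[simp] theorem lineCard_empty (d : Bool) (t : ℝ) : lineCard ∅ d t = 0 := rfl

theorem lineCard_pos {P : Finset Pt} {d : Bool} {t : ℝ} :
    0 < lineCard P d t ↔ ∃ p ∈ P, coord d p = t := by
  simp [lineCard, Finset.card_pos, Finset.Nonempty]

theorem lineCard_eq_zero {P : Finset Pt} {d : Bool} {t : ℝ} :
    lineCard P d t = 0 ↔ ∀ p ∈ P, coord d p ≠ t := by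
  simp [lineCard, Finset.filter_eq_empty_iff]

theorem lineCard_insert {P : Finset Pt} {q : Pt} (hq : q ∉ P) (d : Bool) (t : ℝ) :
    lineCard (insert q P) d t = lineCard P d t + if coord d q = t then 1 else 0 := by
  unfold lineCard
  rw [Finset.filter_insert]
  split_ifs with h
  · exact Finset.card_insert_of_notMem (by simp [hq])
  · rfl

theorem lineCard_sdiff {K S : Finset Pt} (h : S ⊆ K) (d : Bool) (t : ℝ) :
    lineCard K d t = lineCard (K \ S) d t + lineCard S d t := by
  unfold lineCard
  rw [← Finset.card_union_of_disjoint, ← Finset.filter_union, Finset.sdiff_union_of_subset h]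
  exact Finset.disjoint_filter_filter Finset.sdiff_disjoint

theorem lineCard_mono {K S : Finset Pt} (h : S ⊆ K) (d : Bool) (t : ℝ) :
    lineCard S d t ≤ lineCard K d t :=
  Finset.card_le_card (Finset.filter_subset_filter _ h)

theorem mem_ends_iff {P : Finset Pt} {d : Bool} {t : ℝ} : (d, t) ∈ Ends P ↔ lineCard P d t = 1 := by
  cases d <;> simp only [Ends, Set.mem_ofPred_eq, reduceCtorEq, false_and, true_and, false_or,
    or_false] <;> rfl

theorem isDiagram_iff_lineCard_coord {P : Finset Pt} :
    IsDiagram P ↔ ∀ p ∈ P, ∀ d, lineCard P d (coord d p) = 2 := by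
  refine forall₂_congr fun p _ => ?_
  rw [Bool.forall_bool, and_comm]
  rfl

theorem isDiagram_iff_lineCard {P : Finset Pt} :
    IsDiagram P ↔ ∀ d t, lineCard P d t = 0 ∨ lineCard P d t = 2 := by
  rw [isDiagram_iff_lineCard_coord]
  refine ⟨fun h d t => ?_, fun h p hp d => ?_⟩
  · refine (Nat.eq_zero_or_pos (lineCard P d t)).imp_right fun hpos => ?_
    obtain ⟨p, hp, rfl⟩ := lineCard_pos.1 hpos
    exact h p hp d
  · exact (h d (coord d p)).resolve_left (lineCard_pos.2 ⟨p, hp, rfl⟩).ne'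

theorem IsDiagram.sdiff {K S : Finset Pt} (hK : IsDiagram K) (hS : IsDiagram S) (h : S ⊆ K) :
    IsDiagram (K \ S) := by
  rw [isDiagram_iff_lineCard] at *
  intro d t
  have := hK d t
  have := hS d t
  have := lineCard_sdiff h d t
  omega

theorem IsDiagram.mem_of_forall_eq_or_eq {S : Finset Pt} (h : IsDiagram S) {p q : Pt} {d : Bool}
    (hp : p ∈ S) (hr : ∀ r ∈ S, coord d r = coord d p → r = p ∨ r = q) : q ∈ S := by
  have hsub : S.filter (coord d · = coord d p) ⊆ {p, q} := fun r hr' => by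
    simpa using hr r (Finset.mem_filter.1 hr').1 (Finset.mem_filter.1 hr').2
  have heq := Finset.eq_of_subset_of_card_le hsub
    (Finset.card_le_two.trans (isDiagram_iff_lineCard_coord.1 h p hp d).ge)
  exact (Finset.mem_filter.1 (heq ▸ Finset.mem_insert_of_mem (Finset.mem_singleton_self q))).1

/-- Every line contains at most two points of `P`, and the lines containing exactly one are those
of `E`. -/
def HasEnds (P : Finset Pt) (E : Set (Bool × ℝ)) : Prop :=
  ∀ d t, lineCard P d t ≤ 2 ∧ (lineCard P d t = 1 ↔ (d, t) ∈ E)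

theorem HasEnds.ends_eq {P : Finset Pt} {E : Set (Bool × ℝ)} (h : HasEnds P E) : Ends P = E := by
  ext ⟨d, t⟩
  rw [mem_ends_iff, (h d t).2]

theorem hasEnds_empty_iff {P : Finset Pt} : HasEnds P ∅ ↔ IsDiagram P := by
  rw [isDiagram_iff_lineCard]
  refine forall₂_congr fun d t => ?_
  rw [Set.mem_empty_iff_false, iff_false]
  omega

theorem hasEnds_insert_iff {P : Finset Pt} {E : Set (Bool × ℝ)} {q : Pt} (hq : q ∉ P) :
    HasEnds (insert q P) (E ∆ linesThrough q) ↔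
      HasEnds P E ∧ ∀ d, lineCard P d (coord d q) ≤ 1 := by
  simp only [HasEnds, lineCard_insert hq, Set.mem_symmDiff, mem_linesThrough]
  refine ⟨fun h => ⟨fun d t => ?_, fun d => ?_⟩, fun ⟨h, hle⟩ d t => ?_⟩
  · have := h d t
    split_ifs at this <;> grind
  · have := (h d (coord d q)).1
    rw [if_pos rfl] at this
    omega
  · have := h d t
    split_ifs with hqt
    · have := hqt ▸ hle d
      grind
    · grind

theorem HasEnds.of_insert {P : Finset Pt} {E : Set (Bool × ℝ)} {q : Pt}
    (h : HasEnds (insert q P) E) (hq : q ∉ P) : HasEnds P (E ∆ linesThrough q) :=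
  ((hasEnds_insert_iff hq).1 (by rwa [symmDiff_symmDiff_cancel_right])).1

theorem hasEnds_singleton (p : Pt) : HasEnds {p} (linesThrough p) := by
  have h := (hasEnds_insert_iff (P := ∅) (E := ∅) (Finset.notMem_empty p)).2
    ⟨hasEnds_empty_iff.2 (by simp [IsDiagram]), by simp⟩
  rwa [← Set.bot_eq_empty, bot_symmDiff, insert_empty_eq] at h

/-- `P` contains no rectangular diagram other than the empty one. -/
def CycleFree (P : Finset Pt) : Prop := ∀ S ⊆ P, IsDiagram S → S = ∅

theorem CycleFree.mono {P Q : Finset Pt} (h : CycleFree Q) (hPQ : P ⊆ Q) : CycleFree P :=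
  fun S hS => h S (hS.trans hPQ)

theorem cycleFree_singleton (p : Pt) : CycleFree {p} := fun S hS hdS => by
  by_contra hne
  obtain rfl := (Finset.subset_singleton_iff.1 hS).resolve_left hne
  have := ((hasEnds_singleton p) true p.1).2.2 rfl
  have := isDiagram_iff_lineCard_coord.1 hdS p (Finset.mem_singleton_self p) true
  rw [coord_true] at this
  omega

theorem IsKnotDiagram.cycleFree {K P : Finset Pt} (hK : IsKnotDiagram K) (hPK : P ⊂ K) :
    CycleFree P := fun S hS hdS => by
  by_contra hne
  have := hK.2.2 S (hS.trans hPK.subset) hdS (Finset.nonempty_iff_ne_empty.2 hne)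
  exact hPK.not_subset (this ▸ hS)

theorem CycleFree.isKnotDiagram {P K : Finset Pt} (hP : CycleFree P) (hK : IsDiagram K)
    (hne : K.Nonempty) (h : ∀ S ⊆ K, IsDiagram S → S ⊆ P ∨ K \ S ⊆ P) : IsKnotDiagram K := by
  refine ⟨hK, hne, fun S hS hdS hSne => ?_⟩
  rcases h S hS hdS with hSP | hSP
  · exact absurd (hP S hSP hdS) hSne.ne_empty
  · exact hS.antisymm (Finset.sdiff_eq_empty_iff_subset.1 (hP _ hSP (hK.sdiff hdS hS)))

theorem CycleFree.isPath_of_hasEnds_linesThrough {P : Finset Pt} {q : Pt} (hP : CycleFree P)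
    (hE : HasEnds P (linesThrough q)) : IsPath P := by
  by_cases hq : q ∈ P
  · have hdiag : IsDiagram (P.erase q) := by
      rw [← hasEnds_empty_iff, ← Set.bot_eq_empty, ← symmDiff_self (linesThrough q)]
      exact HasEnds.of_insert (by rwa [Finset.insert_erase hq]) (Finset.notMem_erase q P)
    refine .inl ⟨q, ?_⟩
    rw [← Finset.insert_erase hq, hP _ (Finset.erase_subset q P) hdiag, insert_empty_eq]
  · have hdiag : IsDiagram (insert q P) := by
      rw [← hasEnds_empty_iff, ← Set.bot_eq_empty, ← symmDiff_self (linesThrough q),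
        hasEnds_insert_iff hq]
      exact ⟨hE, fun d => ((hE d _).2.2 (mem_linesThrough.2 rfl)).le⟩
    refine .inr (.inl ⟨q, hq, hP.isKnotDiagram hdiag (Finset.insert_nonempty q P) fun S hS _ => ?_⟩)
    by_cases hqS : q ∈ S
    · right
      rw [Finset.insert_sdiff_of_mem _ hqS]
      exact Finset.sdiff_subset
    · exact .inl ((Finset.subset_insert_iff_of_notMem hqS).1 hS)

theorem CycleFree.isPath_of_hasEnds_pair {P : Finset Pt} {d : Bool} {t₁ t₂ : ℝ} (ht : t₁ ≠ t₂)
    (hP : CycleFree P) (hE : HasEnds P {(d, t₁), (d, t₂)}) : IsPath P := by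
  obtain ⟨u, hu⟩ := Infinite.exists_notMem_finset (P.image (coord !d))
  simp only [Finset.mem_image, not_exists, not_and] at hu
  obtain ⟨q, rfl, hqu⟩ : ∃ q, coord d q = t₁ ∧ coord (!d) q = u := ⟨ofCoord d t₁ u, by simp⟩
  obtain ⟨r, rfl, rfl⟩ : ∃ r, coord d r = t₂ ∧ coord (!d) r = u := ⟨ofCoord d t₂ u, by simp⟩
  have hqr : q ≠ r := ne_of_apply_ne (coord d) ht
  have hqP : q ∉ P := fun h => hu q h hqu
  have hrP : r ∉ P := fun h => hu r h rfl
  have hqrP : q ∉ insert r P := by simp [hqr, hqP]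
  have hlines : {(d, coord d q), (d, coord d r)} = linesThrough q ∆ linesThrough r := by
    simpa using (linesThrough_symmDiff_of_coord_eq hqr hqu).symm
  have hu0 : lineCard P (!d) (coord (!d) r) = 0 := lineCard_eq_zero.2 hu
  have hcard : ∀ s, coord (!d) s = coord (!d) r → (d, coord d s) ∈ linesThrough q ∆ linesThrough r →
      ∀ d', lineCard P d' (coord d' s) ≤ 1 := fun s hs hsE d' => by
    rcases Bool.eq_or_eq_not d' d with rfl | rfl
    · exact ((hE d' _).2.2 (hlines ▸ hsE)).le
    · rw [hs]
      omega
  have hEr : HasEnds (insert r P) (linesThrough q) := by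
    rw [← symmDiff_symmDiff_cancel_right (linesThrough r) (linesThrough q), ← hlines,
      hasEnds_insert_iff hrP]
    exact ⟨hE, hcard r rfl (by simp [← hlines])⟩
  have hdiag : IsDiagram (insert q (insert r P)) := by
    rw [← hasEnds_empty_iff, ← Set.bot_eq_empty, ← symmDiff_self (linesThrough q),
      hasEnds_insert_iff hqrP]
    exact ⟨hEr, fun d => ((hEr d _).2.2 (mem_linesThrough.2 rfl)).le⟩
  have honly : ∀ s ∈ insert q (insert r P), coord (!d) s = coord (!d) r → s = q ∨ s = r := by
    intro s hs hsu
    simp only [Finset.mem_insert] at hs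
    exact hs.imp_right fun h => h.resolve_right fun h => hu s h hsu
  refine .inr (.inr ⟨q, r, hqr, hqP, hrP, ?_, hP.isKnotDiagram hdiag (Finset.insert_nonempty ..)
    fun S hS hdS => ?_⟩)
  · cases d
    exacts [.inl hqu, .inr hqu]
  · by_cases hqS : q ∈ S
    · have hrS : r ∈ S := hdS.mem_of_forall_eq_or_eq (d := !d) hqS fun s hs hsq =>
        honly s (hS hs) (hsq.trans hqu)
      right
      rw [Finset.insert_sdiff_of_mem _ hqS, Finset.insert_sdiff_of_mem _ hrS]
      exact Finset.sdiff_subset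
    · have hrS : r ∉ S := fun hrS => hqS <| hdS.mem_of_forall_eq_or_eq (d := !d) hrS fun s hs hsr =>
        (honly s (hS hs) hsr).symm
      left
      rwa [Finset.subset_insert_iff_of_notMem hqS, Finset.subset_insert_iff_of_notMem hrS] at hS

theorem IsPath.exists_hasEnds_pair {P : Finset Pt} (h : IsPath P) :
    ∃ e₁ e₂, e₁ ≠ e₂ ∧ HasEnds P {e₁, e₂} ∧ CycleFree P := by
  rcases h with ⟨p, rfl⟩ | ⟨q, hq, hK⟩ | ⟨q, r, hqr, hq, hr, hl, hK⟩
  · exact ⟨_, _, by simp, linesThrough_eq_pair true p ▸ hasEnds_singleton p, cycleFree_singleton p⟩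
  · have hE := (hasEnds_empty_iff.2 hK.1).of_insert hq
    rw [← Set.bot_eq_empty, bot_symmDiff, linesThrough_eq_pair true] at hE
    exact ⟨_, _, by simp, hE, hK.cycleFree (Finset.ssubset_insert hq)⟩
  · have hqrP : q ∉ insert r P := by simp [hqr, hq]
    obtain ⟨d, hd⟩ : ∃ d, coord d q = coord d r := hl.elim (⟨true, ·⟩) (⟨false, ·⟩)
    have hE := ((hasEnds_empty_iff.2 hK.1).of_insert hqrP).of_insert hr
    rw [← Set.bot_eq_empty, bot_symmDiff, linesThrough_symmDiff_of_coord_eq hqr hd] at hE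
    refine ⟨_, _, fun h => hqr (ext_coord d hd (congrArg Prod.snd h)), hE, hK.cycleFree ?_⟩
    exact (Finset.ssubset_insert hr).trans (Finset.ssubset_insert hqrP)

theorem isPath_iff {P : Finset Pt} :
    IsPath P ↔ ∃ e₁ e₂, e₁ ≠ e₂ ∧ HasEnds P {e₁, e₂} ∧ CycleFree P := by
  refine ⟨IsPath.exists_hasEnds_pair, ?_⟩
  rintro ⟨⟨d₁, t₁⟩, ⟨d₂, t₂⟩, hne, hE, hP⟩
  rcases Bool.eq_or_eq_not d₂ d₁ with rfl | rfl
  · exact hP.isPath_of_hasEnds_pair (by simpa using hne) hE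
  · refine hP.isPath_of_hasEnds_linesThrough (q := ofCoord d₁ t₁ t₂) ?_
    simpa [linesThrough_eq_pair d₁] using hE

/-- The four constituents of a Θ-diagram, indexed so as to treat them uniformly: the three paths
have indices `0`, `1`, `2`, and the diagram `d` has index `3`. -/
def Theta.part (T : Theta) : Fin 4 → Finset Pt := ![T.a, T.b, T.c, T.d]

@[simp] theorem Theta.part_zero (T : Theta) : T.part 0 = T.a := rfl

@[simp] theorem Theta.part_one (T : Theta) : T.part 1 = T.b := rfl

@[simp] theorem Theta.part_two (T : Theta) : T.part 2 = T.c := rfl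

@[simp] theorem Theta.part_three (T : Theta) : T.part 3 = T.d := rfl

theorem Theta.ext_part {T T' : Theta} (h : ∀ i, T.part i = T'.part i) : T = T' := by
  cases T
  cases T'
  exact Theta.mk.injEq .. ▸ ⟨h 0, h 1, h 2, h 3⟩

theorem Theta.mem_U {T : Theta} {p : Pt} : p ∈ T.U ↔ ∃ i, p ∈ T.part i := by
  simp [Theta.U, Fin.exists_fin_succ, Theta.part]

theorem Theta.part_subset_U (T : Theta) (i : Fin 4) : T.part i ⊆ T.U :=
  fun _ hp => Theta.mem_U.2 ⟨i, hp⟩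

/-- The set of ends of the constituent of index `i` of a Θ-diagram whose paths have ends `E`. -/
def partEnds (E : Set (Bool × ℝ)) (i : Fin 4) : Set (Bool × ℝ) := if i = 3 then ∅ else E

@[simp] theorem partEnds_three (E : Set (Bool × ℝ)) : partEnds E 3 = ∅ := rfl

theorem partEnds_of_ne {i : Fin 4} (E : Set (Bool × ℝ)) (hi : i ≠ 3) : partEnds E i = E :=
  if_neg hi

/-- Validity of a Θ-diagram whose three paths have the two lines of `E` as their ends, in a form
uniform in the four constituents. -/
structure ThetaWithEnds (T : Theta) (E : Set (Bool × ℝ)) : Prop where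
  ends : ∃ e₁ e₂, e₁ ≠ e₂ ∧ E = {e₁, e₂}
  hasEnds : ∀ i, HasEnds (T.part i) (partEnds E i)
  cycleFree : ∀ i, i ≠ 3 → CycleFree (T.part i)
  eq_of_mem : ∀ {i j p}, p ∈ T.part i → p ∈ T.part j → i = j
  cross : ∀ {i j}, i ≠ j → ∀ p ∈ T.part i, ∀ q ∈ T.part j, ∀ d, coord d p = coord d q →
    (d, coord d p) ∈ E ∧ i ≠ 3 ∧ j ≠ 3

theorem crossGP_iff {A C : Finset Pt} {E : Set (Bool × ℝ)} : CrossGP A C E ↔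
    ∀ p ∈ A, ∀ q ∈ C, ∀ d, coord d p = coord d q → (d, coord d p) ∈ E := by
  refine forall₄_congr fun p _ q _ => ?_
  rw [Bool.forall_bool, and_comm]
  rfl

theorem ThetaOK.disjoint_part {T : Theta} (h : ThetaOK T) {i j : Fin 4} (hij : i < j) :
    Disjoint (T.part i) (T.part j) := by
  obtain ⟨-, -, -, -, -, -, hab, hac, hbc, had, hbd, hcd, -⟩ := h
  fin_cases i <;> fin_cases j <;> first | assumption | exact absurd hij (by decide)

theorem ThetaOK.crossGP_part {T : Theta} (h : ThetaOK T) {i j : Fin 4} (hij : i < j) :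
    CrossGP (T.part i) (T.part j) (partEnds (Ends T.a) j) := by
  obtain ⟨-, -, -, -, -, -, -, -, -, -, -, -, hab, hac, hbc, had, hbd, hcd⟩ := h
  fin_cases i <;> fin_cases j <;> first | assumption | exact absurd hij (by decide)

theorem ThetaOK.withEnds {T : Theta} (h : ThetaOK T) : ThetaWithEnds T (Ends T.a) := by
  have hcross : ∀ {i j : Fin 4}, i < j → ∀ p ∈ T.part i, ∀ q ∈ T.part j, ∀ d,
      coord d p = coord d q → (d, coord d p) ∈ Ends T.a ∧ i ≠ 3 ∧ j ≠ 3 := by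
    intro i j hij p hp q hq d hpq
    have hmem := crossGP_iff.1 (h.crossGP_part hij) p hp q hq d hpq
    have hj : j ≠ 3 := by
      rintro rfl
      exact hmem
    exact ⟨by rwa [partEnds_of_ne _ hj] at hmem, by omega, hj⟩
  obtain ⟨ha, hb, hc, hd, hab, hac, -⟩ := id h
  obtain ⟨e₁, e₂, hne, hEa, hfa⟩ := isPath_iff.1 ha
  obtain ⟨_, _, _, hEb, hfb⟩ := isPath_iff.1 hb
  obtain ⟨_, _, _, hEc, hfc⟩ := isPath_iff.1 hc
  refine ⟨⟨e₁, e₂, hne, hEa.ends_eq⟩, fun i => ?_, fun i hi => ?_, fun {i j p} hp hq => ?_,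
    fun {i j} hij p hp q hq d hpq => ?_⟩
  · rw [← hEa.ends_eq] at hEa
    rw [← hEb.ends_eq, ← hab] at hEb
    rw [← hEc.ends_eq, ← hac] at hEc
    fin_cases i
    exacts [hEa, hEb, hEc, hasEnds_empty_iff.2 hd]
  · fin_cases i
    exacts [hfa, hfb, hfc, absurd rfl hi]
  · rcases lt_trichotomy i j with hij | hij | hij
    exacts [absurd hq (Finset.disjoint_left.1 (h.disjoint_part hij) hp), hij,
      absurd hp (Finset.disjoint_left.1 (h.disjoint_part hij) hq)]
  · rcases hij.lt_or_gt with hij | hij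
    · exact hcross hij p hp q hq d hpq
    · rw [hpq]
      exact (hcross hij q hq p hp d hpq.symm).imp_right And.symm

theorem ThetaWithEnds.ends_part {T : Theta} {E : Set (Bool × ℝ)} (h : ThetaWithEnds T E)
    {i : Fin 4} (hi : i ≠ 3) : Ends (T.part i) = E := by
  rw [(h.hasEnds i).ends_eq, partEnds_of_ne E hi]

theorem ThetaWithEnds.isPath {T : Theta} {E : Set (Bool × ℝ)} (h : ThetaWithEnds T E)
    {i : Fin 4} (hi : i ≠ 3) : IsPath (T.part i) := by
  obtain ⟨e₁, e₂, hne, hE⟩ := h.ends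
  have hEi := h.hasEnds i
  rw [partEnds_of_ne E hi, hE] at hEi
  exact isPath_iff.2 ⟨e₁, e₂, hne, hEi, h.cycleFree i hi⟩

theorem ThetaWithEnds.thetaOK {T : Theta} {E : Set (Bool × ℝ)} (h : ThetaWithEnds T E) :
    ThetaOK T := by
  have hends : ∀ {i j : Fin 4}, i ≠ 3 → j ≠ 3 → Ends (T.part i) = Ends (T.part j) :=
    fun hi hj => (h.ends_part hi).trans (h.ends_part hj).symm
  have hdisj : ∀ {i j : Fin 4}, i ≠ j → Disjoint (T.part i) (T.part j) :=
    fun hij => Finset.disjoint_left.2 fun _ hi hj => hij (h.eq_of_mem hi hj)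
  have hcross : ∀ {i j : Fin 4}, i ≠ j → CrossGP (T.part i) (T.part j) (Ends T.a) := by
    intro i j hij
    rw [crossGP_iff, ← T.part_zero, h.ends_part (by decide)]
    exact fun p hp q hq d hpq => (h.cross hij p hp q hq d hpq).1
  have hcross₃ : ∀ {i : Fin 4}, i ≠ 3 → CrossGP (T.part i) (T.part 3) ∅ := fun hi =>
    crossGP_iff.2 fun p hp q hq d hpq => ((h.cross hi p hp q hq d hpq).2.2 rfl).elim
  exact ⟨h.isPath (i := 0) (by decide), h.isPath (i := 1) (by decide),
    h.isPath (i := 2) (by decide), hasEnds_empty_iff.1 (h.hasEnds 3),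
    hends (i := 0) (j := 1) (by decide) (by decide),
    hends (i := 0) (j := 2) (by decide) (by decide),
    hdisj (i := 0) (j := 1) (by decide), hdisj (i := 0) (j := 2) (by decide),
    hdisj (i := 1) (j := 2) (by decide), hdisj (i := 0) (j := 3) (by decide),
    hdisj (i := 1) (j := 3) (by decide), hdisj (i := 2) (j := 3) (by decide),
    hcross (i := 0) (j := 1) (by decide), hcross (i := 0) (j := 2) (by decide),
    hcross (i := 1) (j := 2) (by decide), hcross₃ (i := 0) (by decide),
    hcross₃ (i := 1) (by decide), hcross₃ (i := 2) (by decide)⟩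

@[simp] theorem part_mapTheta (f : Pt → Pt) (T : Theta) (i : Fin 4) :
    (mapTheta f T).part i = (T.part i).image f := by
  fin_cases i <;> rfl

@[simp] theorem U_mapTheta (f : Pt → Pt) (T : Theta) : (mapTheta f T).U = T.U.image f := by
  simp only [Theta.U, mapTheta, Finset.image_union]

theorem mapTheta_congr {f g : Pt → Pt} {T : Theta} (h : ∀ p ∈ T.U, f p = g p) :
    mapTheta f T = mapTheta g T :=
  Theta.ext_part fun i => by
    rw [part_mapTheta, part_mapTheta]
    exact Finset.image_congr fun p hp => h p (T.part_subset_U i hp)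

theorem mapTheta_mapTheta (f g : Pt → Pt) (T : Theta) :
    mapTheta f (mapTheta g T) = mapTheta (f ∘ g) T :=
  Theta.ext_part fun i => by simp only [part_mapTheta, Finset.image_image]

theorem mapTheta_eq_self {f : Pt → Pt} {T : Theta} (h : ∀ p ∈ T.U, f p = p) :
    mapTheta f T = T := by
  rw [mapTheta_congr (g := id) h]
  exact Theta.ext_part fun i => by rw [part_mapTheta, Finset.image_id]

/-- The map `f` sends every line of direction `d` and position `t` into the line of direction
`e d` and position `F d t`, and is injective on the lines meeting `U`. -/
structure PreservesLines (f : Pt → Pt) (e : Equiv.Perm Bool) (F : Bool → ℝ → ℝ)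
    (U : Finset Pt) : Prop where
  coord_eq : ∀ d p, coord (e d) (f p) = F d (coord d p)
  inj : ∀ p ∈ U, ∀ q ∈ U, ∀ d, F d (coord d p) = F d (coord d q) → coord d p = coord d q

/-- The map on lines, seen as pairs (direction, position), induced by a map of the plane as in
`PreservesLines`. -/
def lineMap (e : Equiv.Perm Bool) (F : Bool → ℝ → ℝ) (l : Bool × ℝ) : Bool × ℝ := (e l.1, F l.1 l.2)

namespace PreservesLines

variable {f : Pt → Pt} {e : Equiv.Perm Bool} {F : Bool → ℝ → ℝ} {U P : Finset Pt}
  {E : Set (Bool × ℝ)} {T : Theta}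

theorem mono (h : PreservesLines f e F U) (hP : P ⊆ U) : PreservesLines f e F P :=
  ⟨h.coord_eq, fun p hp q hq => h.inj p (hP hp) q (hP hq)⟩

theorem injOn (h : PreservesLines f e F U) : Set.InjOn f U := fun p hp q hq hpq => by
  have hcoord : ∀ d, coord d p = coord d q := fun d => h.inj p hp q hq d <| by
    rw [← h.coord_eq, ← h.coord_eq, hpq]
  exact ext_coord true (hcoord _) (hcoord _)

theorem lineCard_image (h : PreservesLines f e F P) {p : Pt} (hp : p ∈ P) (d : Bool) :
    lineCard (P.image f) (e d) (F d (coord d p)) = lineCard P d (coord d p) := by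
  unfold lineCard
  rw [Finset.filter_image,
    Finset.card_image_of_injOn (h.injOn.mono fun q hq => (Finset.mem_filter.1 hq).1)]
  congr 1
  refine Finset.filter_congr fun q hq => ?_
  rw [h.coord_eq]
  exact ⟨h.inj q hq p hp d, fun hqp => by rw [hqp]⟩

theorem hasEnds_image (h : PreservesLines f e F P) (hE : HasEnds P E) :
    HasEnds (P.image f) (lineMap e F '' E) := by
  have hmeet : ∀ {d t}, (d, t) ∈ E → ∃ p ∈ P, coord d p = t := fun hl =>
    lineCard_pos.1 (((hE _ _).2.2 hl).symm ▸ Nat.one_pos)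
  intro d' t
  obtain ⟨d, rfl⟩ := e.surjective d'
  by_cases hpos : ∃ p ∈ P, F d (coord d p) = t
  · obtain ⟨p, hp, rfl⟩ := hpos
    rw [h.lineCard_image hp, (hE d _).2]
    refine ⟨(hE d _).1, fun hl => ⟨_, hl, rfl⟩, ?_⟩
    rintro ⟨⟨d', t⟩, hl, heq⟩
    obtain ⟨q, hq, rfl⟩ := hmeet hl
    simp only [lineMap, Prod.mk.injEq, EmbeddingLike.apply_eq_iff_eq] at heq
    obtain ⟨rfl, heq⟩ := heq
    rwa [← h.inj q hq p hp d' heq]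
  · have hzero : lineCard (P.image f) (e d) t = 0 := by
      rw [lineCard_eq_zero, Finset.forall_mem_image]
      exact fun p hp => (h.coord_eq d p).trans_ne fun hp' => hpos ⟨p, hp, hp'⟩
    refine ⟨by omega, by omega, ?_⟩
    rintro ⟨⟨d', t'⟩, hl, heq⟩
    obtain ⟨q, hq, rfl⟩ := hmeet hl
    simp only [lineMap, Prod.mk.injEq, EmbeddingLike.apply_eq_iff_eq] at heq
    obtain ⟨rfl, heq⟩ := heq
    exact absurd ⟨q, hq, heq⟩ hpos

theorem cycleFree_image (h : PreservesLines f e F P) (hP : CycleFree P) :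
    CycleFree (P.image f) := by
  intro S hS hdS
  obtain ⟨Q, hQ, rfl⟩ := Finset.subset_image_iff.1 hS
  have hQP : Q ⊆ P := by exact_mod_cast hQ
  rw [hP Q hQP, Finset.image_empty]
  rw [isDiagram_iff_lineCard_coord]
  intro p hp d
  rw [← (h.mono hQP).lineCard_image hp, ← h.coord_eq]
  exact isDiagram_iff_lineCard_coord.1 hdS _ (Finset.mem_image_of_mem f hp) _

theorem lineMap_ne (h : PreservesLines f e F T.U) (hT : ThetaWithEnds T E) {l₁ l₂ : Bool × ℝ}
    (h₁ : l₁ ∈ E) (h₂ : l₂ ∈ E) (hne : l₁ ≠ l₂) : lineMap e F l₁ ≠ lineMap e F l₂ := by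
  have hmeet : ∀ {d t}, (d, t) ∈ E → ∃ p ∈ T.U, coord d p = t := fun hl => by
    obtain ⟨p, hp, hpt⟩ := lineCard_pos.1 (((hT.hasEnds 0 _ _).2.2 hl).symm ▸ Nat.one_pos)
    exact ⟨p, T.part_subset_U 0 hp, hpt⟩
  intro heq
  obtain ⟨d₁, t₁⟩ := l₁
  obtain ⟨d₂, t₂⟩ := l₂
  simp only [lineMap, Prod.mk.injEq, EmbeddingLike.apply_eq_iff_eq] at heq
  obtain ⟨rfl, heq⟩ := heq
  obtain ⟨p, hp, rfl⟩ := hmeet h₁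
  obtain ⟨q, hq, rfl⟩ := hmeet h₂
  exact hne (by rw [h.inj p hp q hq d₁ heq])

theorem thetaWithEnds (h : PreservesLines f e F T.U) (hT : ThetaWithEnds T E) :
    ThetaWithEnds (mapTheta f T) (lineMap e F '' E) := by
  have hpart := fun i => h.mono (T.part_subset_U i)
  refine ⟨?_, fun i => ?_, fun i hi => ?_, fun {i j p} hi hj => ?_,
    fun {i j} hij p hp q hq d' hpq => ?_⟩
  · obtain ⟨e₁, e₂, hne, hE⟩ := hT.ends
    exact ⟨_, _, h.lineMap_ne hT (by simp [hE]) (by simp [hE]) hne, hE ▸ Set.image_pair ..⟩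
  · rw [part_mapTheta]
    convert (hpart i).hasEnds_image (hT.hasEnds i) using 1
    unfold partEnds
    split_ifs
    exacts [(Set.image_empty _).symm, rfl]
  · rw [part_mapTheta]
    exact (hpart i).cycleFree_image (hT.cycleFree i hi)
  · rw [part_mapTheta, Finset.mem_image] at hi hj
    obtain ⟨q, hq, rfl⟩ := hi
    obtain ⟨r, hr, hrq⟩ := hj
    obtain rfl := h.injOn (T.part_subset_U _ hr) (T.part_subset_U _ hq) hrq
    exact hT.eq_of_mem hq hr
  · rw [part_mapTheta, Finset.mem_image] at hp hq
    obtain ⟨p, hp, rfl⟩ := hp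
    obtain ⟨q, hq, rfl⟩ := hq
    obtain ⟨d, rfl⟩ := e.surjective d'
    rw [h.coord_eq, h.coord_eq] at hpq
    have hcross := hT.cross hij p hp q hq d
      (h.inj p (T.part_subset_U _ hp) q (T.part_subset_U _ hq) d hpq)
    exact ⟨⟨_, hcross.1, by rw [h.coord_eq]; rfl⟩, hcross.2⟩

theorem thetaOK (h : PreservesLines f e F T.U) (hT : ThetaOK T) : ThetaOK (mapTheta f T) :=
  (h.thetaWithEnds hT.withEnds).thetaOK

end PreservesLines

/-- No point of `P` lies on the lines of abscissa `x'` or of ordinate `y'`. -/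
def Fresh (x' y' : ℝ) (P : Finset Pt) : Prop := (∀ p ∈ P, p.1 ≠ x') ∧ ∀ p ∈ P, p.2 ≠ y'

theorem Fresh.mono {x' y' : ℝ} {P Q : Finset Pt} (h : Fresh x' y' Q) (hPQ : P ⊆ Q) :
    Fresh x' y' P :=
  ⟨fun p hp => h.1 p (hPQ hp), fun p hp => h.2 p (hPQ hp)⟩

theorem fresh_iff {w : Pt} {P : Finset Pt} :
    Fresh w.1 w.2 P ↔ ∀ p ∈ P, ∀ d, coord d p ≠ coord d w := by
  simp only [Fresh, Bool.forall_bool, coord_true, coord_false, forall_and, and_comm]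

theorem mem_stabSet {x y x' y' : ℝ} {P : Finset Pt} {p : Pt} : p ∈ stabSet x y x' y' P ↔
    p = (x', y) ∨ p = (x, y') ∨ p = (x', y') ∨ p ≠ (x, y) ∧ p ∈ P := by
  simp only [stabSet, Finset.mem_insert, Finset.mem_erase]

theorem stabSet_mono {P Q : Finset Pt} (x y x' y' : ℝ) (h : P ⊆ Q) :
    stabSet x y x' y' P ⊆ stabSet x y x' y' Q :=
  Finset.insert_subset_insert _ <| Finset.insert_subset_insert _ <|
    Finset.insert_subset_insert _ <| Finset.erase_subset_erase _ h

section Stab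

variable {x y x' y' : ℝ} {P : Finset Pt}

theorem lineCard_stabSet (hp : (x, y) ∈ P) (hf : Fresh x' y' P) (d : Bool) (t : ℝ) :
    lineCard (stabSet x y x' y' P) d t =
      lineCard P d t + if coord d (x', y') = t then 2 else 0 := by
  have hx : x ≠ x' := hf.1 _ hp
  have hy : y ≠ y' := hf.2 _ hp
  have hP : ∀ u, (x', u) ∉ P ∧ (u, y') ∉ P := fun u =>
    ⟨fun h => hf.1 _ h rfl, fun h => hf.2 _ h rfl⟩
  nth_rw 2 [← Finset.insert_erase hp]
  rw [stabSet, lineCard_insert (by simp [hP, hx.symm, hy]), lineCard_insert (by simp [hP, hx]),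
    lineCard_insert (by simp [hP]), lineCard_insert (Finset.notMem_erase _ _)]
  cases d <;> simp only [coord_true, coord_false] <;> grind

theorem hasEnds_stabSet_iff {E : Set (Bool × ℝ)} (hp : (x, y) ∈ P) (hf : Fresh x' y' P) :
    HasEnds (stabSet x y x' y' P) E ↔ HasEnds P E := by
  have hzero : ∀ d, lineCard P d (coord d (x', y')) = 0 := fun d => lineCard_eq_zero.2 <| by
    cases d
    exacts [hf.2, hf.1]
  refine forall₂_congr fun d t => ?_
  rw [lineCard_stabSet hp hf]
  split_ifs with ht
  · rw [← ht, hzero]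
    simp
  · rfl

theorem isDiagram_stabSet_iff (hp : (x, y) ∈ P) (hf : Fresh x' y' P) :
    IsDiagram (stabSet x y x' y' P) ↔ IsDiagram P := by
  rw [← hasEnds_empty_iff, ← hasEnds_empty_iff, hasEnds_stabSet_iff hp hf]

theorem IsDiagram.eq_stabSet_or_subset {S : Finset Pt} (hdS : IsDiagram S)
    (hf : Fresh x' y' P) (hx : x ≠ x') (hy : y ≠ y') (hS : S ⊆ stabSet x y x' y' P) :
    S ⊆ P ∨ S = stabSet x y x' y' (insert (x, y) (S ∩ P)) := by
  have hxS : ∀ r ∈ S, r.1 = x' → r = (x', y) ∨ r = (x', y') := fun r hr hrx => by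
    have := hf.1 r
    grind [mem_stabSet.1 (hS hr)]
  have hyS : ∀ r ∈ S, r.2 = y' → r = (x, y') ∨ r = (x', y') := fun r hr hry => by
    have := hf.2 r
    grind [mem_stabSet.1 (hS hr)]
  by_cases hq : (x', y') ∈ S
  · right
    have h₁ : (x', y) ∈ S := hdS.mem_of_forall_eq_or_eq (d := true) hq fun r hr hrx =>
      (hxS r hr hrx).symm
    have h₂ : (x, y') ∈ S := hdS.mem_of_forall_eq_or_eq (d := false) hq fun r hr hry =>
      (hyS r hr hry).symm
    ext p
    have := @hS p
    simp only [mem_stabSet, Finset.mem_insert, Finset.mem_inter] at this ⊢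
    grind
  · left
    intro p hp
    rcases mem_stabSet.1 (hS hp) with rfl | rfl | rfl | ⟨-, hp'⟩
    · exact absurd (hdS.mem_of_forall_eq_or_eq (d := true) hp hxS) hq
    · exact absurd (hdS.mem_of_forall_eq_or_eq (d := false) hp hyS) hq
    · exact absurd hp hq
    · exact hp'

theorem cycleFree_stabSet_iff (hp : (x, y) ∈ P) (hf : Fresh x' y' P) :
    CycleFree (stabSet x y x' y' P) ↔ CycleFree P := by
  refine ⟨fun h S hS hdS => ?_, fun h S hS hdS => ?_⟩
  · by_cases hm : (x, y) ∈ S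
    · have hempty := h _ (stabSet_mono x y x' y' hS) ((isDiagram_stabSet_iff hm (hf.mono hS)).2 hdS)
      exact absurd hempty (Finset.insert_ne_empty _ _)
    · exact h S (fun p hpS => mem_stabSet.2 (.inr (.inr (.inr
        ⟨ne_of_mem_of_not_mem hpS hm, hS hpS⟩)))) hdS
  · rcases hdS.eq_stabSet_or_subset hf (hf.1 _ hp) (hf.2 _ hp) hS with hSP | hSeq
    · exact h S hSP hdS
    · have hsub : insert (x, y) (S ∩ P) ⊆ P :=
        Finset.insert_subset hp Finset.inter_subset_right
      rw [hSeq, isDiagram_stabSet_iff (Finset.mem_insert_self _ _) (hf.mono hsub)] at hdS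
      exact absurd (h _ hsub hdS) (Finset.insert_ne_empty _ _)

end Stab

theorem ThetaWithEnds.of_part_eq {T T' : Theta} {E : Set (Bool × ℝ)} {i : Fin 4}
    (h : ThetaWithEnds T E) (hpart : ∀ j, j ≠ i → T'.part j = T.part j)
    (hE : HasEnds (T'.part i) (partEnds E i)) (hfree : i ≠ 3 → CycleFree (T'.part i))
    (hcross : ∀ j, j ≠ i → ∀ p ∈ T'.part i, ∀ q ∈ T.part j, p ≠ q ∧ ∀ d, coord d p = coord d q →
      (d, coord d p) ∈ E ∧ i ≠ 3 ∧ j ≠ 3) : ThetaWithEnds T' E := by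
  refine ⟨h.ends, fun j => ?_, fun j hj => ?_, fun {j k p} hp hq => ?_,
    fun {j k} hjk p hp q hq d hpq => ?_⟩
  · rcases eq_or_ne j i with rfl | hji
    exacts [hE, hpart j hji ▸ h.hasEnds j]
  · rcases eq_or_ne j i with rfl | hji
    exacts [hfree hj, hpart j hji ▸ h.cycleFree j hj]
  · rcases eq_or_ne j i with rfl | hji <;> rcases eq_or_ne k j with rfl | hkj
    · rfl
    · exact absurd rfl (hcross k hkj p hp p (hpart k hkj ▸ hq)).1
    · rfl
    · rcases eq_or_ne k i with rfl | hki
      · exact absurd rfl (hcross j hji p hq p (hpart j hji ▸ hp)).1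
      · exact h.eq_of_mem (hpart j hji ▸ hp) (hpart k hki ▸ hq)
  · rcases eq_or_ne j i with rfl | hji
    · exact (hcross k hjk.symm p hp q (hpart k hjk.symm ▸ hq)).2 d hpq
    · rw [hpart j hji] at hp
      rcases eq_or_ne k i with rfl | hki
      · rw [hpq]
        exact ((hcross j hji q hq p hp).2 d hpq.symm).imp_right And.symm
      · exact h.cross hjk p hp q (hpart k hki ▸ hq) d hpq

/-- `T'` is obtained from `T` by replacing the vertex `(x, y)` of the constituent of index `i` by
the three other corners of the rectangle with opposite corners `(x, y)` and `(x', y')`. -/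
structure StabilizesPart (T T' : Theta) (i : Fin 4) (x y x' y' : ℝ) : Prop where
  mem : (x, y) ∈ T.part i
  part_eq : T'.part i = stabSet x y x' y' (T.part i)
  part_of_ne : ∀ j, j ≠ i → T'.part j = T.part j

section StabilizesPart

variable {T T' : Theta} {E : Set (Bool × ℝ)} {i : Fin 4} {x y x' y' : ℝ}

theorem ThetaWithEnds.stabilize (h : ThetaWithEnds T E) (hT' : StabilizesPart T T' i x y x' y')
    (hf : Fresh x' y' T.U) : ThetaWithEnds T' E := by
  have hfi := fun i => hf.mono (T.part_subset_U i)
  refine h.of_part_eq hT'.part_of_ne (hT'.part_eq ▸ ?_) (fun hi => hT'.part_eq ▸ ?_) ?_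
  · exact (hasEnds_stabSet_iff hT'.mem (hfi i)).2 (h.hasEnds i)
  · exact (cycleFree_stabSet_iff hT'.mem (hfi i)).2 (h.cycleFree i hi)
  · intro j hji p hp q hq
    have hcross := h.cross hji.symm _ hT'.mem q hq
    have hqx := (hfi j).1 q hq
    have hqy := (hfi j).2 q hq
    rw [hT'.part_eq, mem_stabSet] at hp
    rcases hp with rfl | rfl | rfl | ⟨-, hp⟩
    · exact ⟨fun hpq => hqx (hpq ▸ rfl), Bool.forall_bool.2 ⟨hcross false, (absurd ·.symm hqx)⟩⟩
    · exact ⟨fun hpq => hqy (hpq ▸ rfl), Bool.forall_bool.2 ⟨(absurd ·.symm hqy), hcross true⟩⟩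
    · exact ⟨fun hpq => hqy (hpq ▸ rfl),
        Bool.forall_bool.2 ⟨(absurd ·.symm hqy), (absurd ·.symm hqx)⟩⟩
    · exact ⟨fun hpq => hji (h.eq_of_mem hq (hpq ▸ hp)), h.cross hji.symm p hp q hq⟩

theorem ThetaWithEnds.destabilize (h : ThetaWithEnds T' E) (hT' : StabilizesPart T T' i x y x' y')
    (hf : Fresh x' y' T.U) (hxy : ∀ j, j ≠ i → (x, y) ∉ T.part j) : ThetaWithEnds T E := by
  have hfi := hf.mono (T.part_subset_U i)
  have hmem : ∀ {p}, p = (x', y) ∨ p = (x, y') ∨ p = (x', y') ∨ p ≠ (x, y) ∧ p ∈ T.part i →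
      p ∈ T'.part i := fun hp => hT'.part_eq ▸ mem_stabSet.2 hp
  refine h.of_part_eq (fun j hj => (hT'.part_of_ne j hj).symm) ?_ (fun hi => ?_) ?_
  · exact (hasEnds_stabSet_iff hT'.mem hfi).1 (hT'.part_eq ▸ h.hasEnds i)
  · exact (cycleFree_stabSet_iff hT'.mem hfi).1 (hT'.part_eq ▸ h.cycleFree i hi)
  · intro j hji p hp q hq
    by_cases hpxy : p = (x, y)
    · subst hpxy
      refine ⟨fun hpq => hxy j hji ?_, Bool.forall_bool.2
        ⟨h.cross hji.symm (x', y) (hmem (by simp)) q hq false,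
          h.cross hji.symm (x, y') (hmem (by simp)) q hq true⟩⟩
      rwa [hpq, ← hT'.part_of_ne j hji]
    · have hp' := hmem (.inr (.inr (.inr ⟨hpxy, hp⟩)))
      exact ⟨fun hpq => hji (h.eq_of_mem hq (hpq ▸ hp')), h.cross hji.symm p hp' q hq⟩

end StabilizesPart

theorem coord_not_eq_of_ne {d d' : Bool} (h : d' ≠ d) : d' = !d := by
  cases d <;> cases d' <;> simp_all

/-- The map of the plane applying `φ` to the coordinate of direction `d`. -/
def mapCoord (d : Bool) (φ : ℝ → ℝ) (p : Pt) : Pt := ofCoord d (φ (coord d p)) (coord (!d) p)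

section MapCoord

variable {d : Bool} {φ ψ : ℝ → ℝ} {p : Pt} {U : Finset Pt} {T : Theta}

@[simp] theorem coord_mapCoord (d : Bool) (φ : ℝ → ℝ) (p : Pt) :
    coord d (mapCoord d φ p) = φ (coord d p) := coord_ofCoord ..

@[simp] theorem coord_not_mapCoord (d : Bool) (φ : ℝ → ℝ) (p : Pt) :
    coord (!d) (mapCoord d φ p) = coord (!d) p := coord_not_ofCoord ..

theorem mapCoord_congr (h : φ (coord d p) = ψ (coord d p)) : mapCoord d φ p = mapCoord d ψ p := by
  rw [mapCoord, mapCoord, h]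

theorem mapCoord_comp (d : Bool) (φ ψ : ℝ → ℝ) :
    mapCoord d φ ∘ mapCoord d ψ = mapCoord d (φ ∘ ψ) :=
  funext fun p => ext_coord d (by simp) (by simp)

theorem mapCoord_eq_self (h : φ (coord d p) = coord d p) : mapCoord d φ p = p :=
  ext_coord d (by simp [h]) (by simp)

theorem preservesLines_mapCoord (h : Set.InjOn φ (coord d '' U)) :
    PreservesLines (mapCoord d φ) (Equiv.refl _) (Function.update (fun _ => id) d φ) U := by
  refine ⟨fun d' p => ?_, fun p hp q hq d' hpq => ?_⟩ <;> rcases eq_or_ne d' d with rfl | hd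
  · simp
  · simp [coord_not_eq_of_ne hd]
  · rw [Function.update_self] at hpq
    exact h ⟨p, hp, rfl⟩ ⟨q, hq, rfl⟩ hpq
  · rwa [Function.update_of_ne hd] at hpq

theorem ThetaOK.mapCoord (hT : ThetaOK T) (h : Set.InjOn φ (coord d '' T.U)) :
    ThetaOK (mapTheta (mapCoord d φ) T) :=
  (preservesLines_mapCoord h).thetaOK hT

end MapCoord

/-- The line of direction `d` and position `t` is extreme among those meeting `U`, and `t'` is a
position beyond all the others at the opposite side of `U`. -/
def IsCyclicShift (U : Finset Pt) (d : Bool) (t t' : ℝ) : Prop :=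
  (∃ p ∈ U, coord d p = t) ∧
    ((∀ p ∈ U, t ≤ coord d p) ∧ (∀ p ∈ U, coord d p ≠ t → coord d p < t') ∨
      (∀ p ∈ U, coord d p ≤ t) ∧ ∀ p ∈ U, coord d p ≠ t → t' < coord d p)

theorem vmap_eq_mapCoord (s t : ℝ) : vmap s t = mapCoord true (Function.update id s t) := by
  funext p
  by_cases h : p.1 = s <;> simp [vmap, mapCoord, ofCoord, Function.update_apply, h]

theorem hmap_eq_mapCoord (s t : ℝ) : hmap s t = mapCoord false (Function.update id s t) := by
  funext p
  by_cases h : p.2 = s <;> simp [hmap, mapCoord, ofCoord, Function.update_apply, h]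

theorem cyclicData_iff {U : Finset Pt} {f : Pt → Pt} : CyclicData U f ↔
    ∃ d t t', IsCyclicShift U d t t' ∧ f = mapCoord d (Function.update id t t') := by
  simp only [CyclicData, IsCyclicShift, vmap_eq_mapCoord, hmap_eq_mapCoord, Bool.exists_bool,
    coord_true, coord_false, and_assoc]
  exact or_comm

/-- No point of `U` on the line of direction `d` and position `s` is at the same height as one on
the line of position `t`, and pairs of points on these two lines do not interleave. -/
def Unlinked (U : Finset Pt) (d : Bool) (s t : ℝ) : Prop :=
  ∀ p ∈ U, ∀ p' ∈ U, ∀ q ∈ U, ∀ q' ∈ U,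
    coord d p = s → coord d p' = s → coord d q = t → coord d q' = t →
    coord (!d) p ≠ coord (!d) q ∧
    ¬ (coord (!d) p < coord (!d) q ∧ coord (!d) q < coord (!d) p' ∧ coord (!d) p' < coord (!d) q' ∨
      coord (!d) q < coord (!d) p ∧ coord (!d) p < coord (!d) q' ∧ coord (!d) q' < coord (!d) p')

/-- The lines of direction `d` and positions `s` and `t` are neighbours among the lines meeting
`U`, and may be exchanged. -/
structure IsCommutation (U : Finset Pt) (d : Bool) (s t : ℝ) : Prop where
  ne : s ≠ t
  left_mem : ∃ p ∈ U, coord d p = s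
  right_mem : ∃ p ∈ U, coord d p = t
  notMem_uIoo : ∀ p ∈ U, coord d p ∉ Set.uIoo s t
  unlinked : Unlinked U d s t

theorem swapv_eq_mapCoord (s t : ℝ) : swapv s t = mapCoord true (Equiv.swap s t) := by
  funext p
  by_cases h : p.1 = s <;> by_cases h' : p.1 = t <;>
    simp [swapv, mapCoord, ofCoord, Equiv.swap_apply_def, h, h']

theorem swaph_eq_mapCoord (s t : ℝ) : swaph s t = mapCoord false (Equiv.swap s t) := by
  funext p
  by_cases h : p.2 = s <;> by_cases h' : p.2 = t <;>
    simp [swaph, mapCoord, ofCoord, Equiv.swap_apply_def, h, h']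

theorem unlinked_iff {U : Finset Pt} {d : Bool} {s t : ℝ} : Unlinked U d s t ↔
    (∀ p ∈ U, ∀ q ∈ U, coord d p = s → coord d q = t → coord (!d) p ≠ coord (!d) q) ∧
    if d = true then NoInterleaveV U s t else NoInterleaveH U s t := by
  refine ⟨fun h => ⟨fun p hp q hq hps hqt => (h p hp p hp q hq q hq hps hps hqt hqt).1, ?_⟩,
    fun ⟨h, h'⟩ p hp p' hp' q hq q' hq' hps hps' hqt hqt' => ⟨h p hp q hq hps hqt, ?_⟩⟩
  · cases d <;> exact fun p hp p' hp' q hq q' hq' hps hps' hqt hqt' =>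
      (h p hp p' hp' q hq q' hq' hps hps' hqt hqt').2
  · cases d <;> exact h' p hp p' hp' q hq q' hq' hps hps' hqt hqt'

theorem commData_iff {U : Finset Pt} {f : Pt → Pt} : CommData U f ↔
    ∃ d s t, IsCommutation U d s t ∧ f = mapCoord d (Equiv.swap s t) := by
  have hiff : ∀ {d s t}, IsCommutation U d s t ↔ s ≠ t ∧ (∃ p ∈ U, coord d p = s) ∧
      (∃ p ∈ U, coord d p = t) ∧ (∀ p ∈ U, coord d p ∉ Set.uIoo s t) ∧ Unlinked U d s t :=
    ⟨fun ⟨h₁, h₂, h₃, h₄, h₅⟩ => ⟨h₁, h₂, h₃, h₄, h₅⟩,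
      fun ⟨h₁, h₂, h₃, h₄, h₅⟩ => ⟨h₁, h₂, h₃, h₄, h₅⟩⟩
  simp only [CommData, hiff, unlinked_iff, swapv_eq_mapCoord, swaph_eq_mapCoord, Bool.exists_bool,
    coord_true, coord_false, and_assoc]
  exact or_comm

theorem exists_stabilizesPart_iff {T T' : Theta} {x y x' y' : ℝ} :
    (∃ i, StabilizesPart T T' i x y x' y') ↔
    ((x, y) ∈ T.a ∧ T' = ⟨stabSet x y x' y' T.a, T.b, T.c, T.d⟩) ∨
     ((x, y) ∈ T.b ∧ T' = ⟨T.a, stabSet x y x' y' T.b, T.c, T.d⟩) ∨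
     ((x, y) ∈ T.c ∧ T' = ⟨T.a, T.b, stabSet x y x' y' T.c, T.d⟩) ∨
     ((x, y) ∈ T.d ∧ T' = ⟨T.a, T.b, T.c, stabSet x y x' y' T.d⟩) := by
  have hiff : ∀ i, StabilizesPart T T' i x y x' y' ↔ (x, y) ∈ T.part i ∧
      ∀ j, T'.part j = if j = i then stabSet x y x' y' (T.part i) else T.part j := fun i =>
    ⟨fun ⟨hmem, heq, hne⟩ => ⟨hmem, fun j => by split_ifs with hj; exacts [hj ▸ heq, hne j hj]⟩,
      fun ⟨hmem, h⟩ => ⟨hmem, by simpa using h i, fun j hj => by simpa [hj] using h j⟩⟩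
  obtain ⟨a, b, c, d⟩ := T'
  simp [hiff, Fin.exists_fin_succ, Fin.forall_fin_succ, Theta.part, Theta.mk.injEq]

/-- The vertex `v` of `U` may be replaced by the three other corners of the rectangle with
opposite corners `v` and `w`, in a stabilization of type I. -/
structure IsStabilizationSite (U : Finset Pt) (v w : Pt) : Prop where
  fresh : Fresh w.1 w.2 U
  notMem_uIoo : ∀ p ∈ U, ∀ d, coord d p ∉ Set.uIoo (coord d v) (coord d w)
  typeI : 0 < (v.1 - w.1) * (v.2 - w.2)

theorem thStabI_iff {T T' : Theta} : ThStabI T T' ↔ ThetaOK T ∧ ThetaOK T' ∧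
    ∃ v w i, StabilizesPart T T' i v.1 v.2 w.1 w.2 ∧ IsStabilizationSite T.U v w := by
  refine and_congr_right fun _ => and_congr_right fun _ => ⟨?_, ?_⟩
  · rintro ⟨x, y, x', y', -, -, -, hx', hy', hxx', hyy', hI, hpart⟩
    obtain ⟨i, hi⟩ := exists_stabilizesPart_iff.2 hpart
    exact ⟨(x, y), (x', y'), i, hi, ⟨hx', hy'⟩,
      fun p hp => Bool.forall_bool.2 ⟨hyy' p hp, hxx' p hp⟩, hI⟩
  · rintro ⟨⟨x, y⟩, ⟨x', y'⟩, i, hi, ⟨hx', hy'⟩, hbtw, hI⟩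
    have hmem : (x, y) ∈ T.U := T.part_subset_U i hi.mem
    exact ⟨x, y, x', y', hmem, hx' _ hmem, hy' _ hmem, hx', hy', fun p hp => hbtw p hp true,
      fun p hp => hbtw p hp false, hI, exists_stabilizesPart_iff.1 ⟨i, hi⟩⟩

/-- A permitted move of Θ-diagrams other than an end shift. -/
def BasicMove (T T' : Theta) : Prop :=
  ThCyclic T T' ∨ ThComm T T' ∨ ThStabI T T' ∨ ThStabI T' T

/-- Legendrian equivalence of Θ-diagrams without end shifts. -/
def BasicEquiv : Theta → Theta → Prop := Relation.ReflTransGen BasicMove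

theorem mem_uIoo {α : Type*} [LinearOrder α] {s t u : α} :
    u ∈ Set.uIoo s t ↔ s < u ∧ u < t ∨ t < u ∧ u < s := by
  grind [Set.uIoo]

section BasicEquiv

variable {T T' : Theta} {d : Bool} {s t t' : ℝ}

theorem BasicMove.thetaOK (h : BasicMove T T') : ThetaOK T' := by
  rcases h with ⟨-, h, -⟩ | ⟨-, h, -⟩ | ⟨-, h, -⟩ | ⟨h, -⟩ <;> exact h

theorem BasicEquiv.thetaOK (h : BasicEquiv T T') (hT : ThetaOK T) : ThetaOK T' := by
  cases h with
  | refl => exact hT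
  | tail _ h => exact BasicMove.thetaOK h

theorem BasicEquiv.thetaEquiv (h : BasicEquiv T T') : ThetaEquiv T T' :=
  Relation.ReflTransGen.mono
    (fun _ _ => Or.imp_right (Or.imp_right (Or.imp_right Or.inl))) _ _ h

theorem IsCyclicShift.injOn {U : Finset Pt} (h : IsCyclicShift U d t t') :
    Set.InjOn (Function.update id t t') (coord d '' U) := by
  rintro _ ⟨p, hp, rfl⟩ _ ⟨q, hq, rfl⟩ hpq
  simp only [Function.update_apply, id_eq] at hpq
  rcases h with ⟨-, ⟨-, h⟩ | ⟨-, h⟩⟩ <;>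
  · have := h p hp
    have := h q hq
    grind

theorem IsCyclicShift.basicEquiv (h : IsCyclicShift T.U d t t') (hT : ThetaOK T) :
    BasicEquiv T (mapTheta (mapCoord d (Function.update id t t')) T) :=
  .single (.inl ⟨hT, hT.mapCoord h.injOn, _, cyclicData_iff.2 ⟨_, _, _, h, rfl⟩, rfl⟩)

theorem IsCommutation.basicEquiv (h : IsCommutation T.U d s t) (hT : ThetaOK T) :
    BasicEquiv T (mapTheta (mapCoord d (Equiv.swap s t)) T) :=
  .single (.inr (.inl ⟨hT, hT.mapCoord (Equiv.swap s t).injective.injOn, _,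
    commData_iff.2 ⟨_, _, _, h, rfl⟩, rfl⟩))

theorem mapTheta_mapCoord_mapCoord (d : Bool) (φ χ : ℝ → ℝ) (T : Theta) :
    mapTheta (mapCoord d φ) (mapTheta (mapCoord d χ) T) = mapTheta (mapCoord d (φ ∘ χ)) T := by
  rw [mapTheta_mapTheta, mapCoord_comp]

theorem IsCyclicShift.symm {U : Finset Pt} (h : IsCyclicShift U d t t') :
    IsCyclicShift (U.image (mapCoord d (Function.update id t t'))) d t' t := by
  simp only [IsCyclicShift, Finset.exists_mem_image, Finset.forall_mem_image, coord_mapCoord,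
    Function.update_apply, id_eq]
  obtain ⟨⟨p, hp, hpt⟩, h⟩ := h
  exact ⟨⟨p, hp, if_pos hpt⟩, h.symm.imp (by grind) (by grind)⟩

theorem IsCommutation.symm {U : Finset Pt} (h : IsCommutation U d s t) :
    IsCommutation (U.image (mapCoord d (Equiv.swap s t))) d s t := by
  obtain ⟨hne, hs, ht, hbtw, hlink⟩ := h
  have hst : ∀ u, Equiv.swap s t u = s ↔ u = t := fun u => by grind
  have hts : ∀ u, Equiv.swap s t u = t ↔ u = s := fun u => by grind
  refine ⟨hne, ?_, ?_, ?_, ?_⟩ <;> simp only [Unlinked, Finset.exists_mem_image,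
    Finset.forall_mem_image, coord_mapCoord, coord_not_mapCoord, hst, hts]
  · exact ht
  · exact hs
  · intro p hp
    have := hbtw p hp
    simp only [mem_uIoo] at this ⊢
    grind
  · intro p hp p' hp' q hq q' hq' hpt hpt' hqs hqs'
    obtain ⟨h₁, h₂⟩ := hlink q hq q' hq' p hp p' hp' hqs hqs' hpt hpt'
    exact ⟨h₁.symm, fun h => h₂ h.symm⟩

theorem BasicMove.symm (h : BasicMove T T') : BasicMove T' T := by
  rcases h with ⟨hT, hT', f, hf, rfl⟩ | ⟨hT, hT', f, hf, rfl⟩ | h | h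
  · obtain ⟨d, t, t', h, rfl⟩ := cyclicData_iff.1 hf
    refine .inl ⟨hT', hT, _, cyclicData_iff.2 ⟨d, t', t, U_mapTheta _ T ▸ h.symm, rfl⟩, ?_⟩
    rw [mapTheta_mapCoord_mapCoord]
    refine (mapTheta_eq_self fun p hp => mapCoord_eq_self ?_).symm
    simp only [Function.comp_apply, Function.update_apply, id_eq]
    rcases h with ⟨-, ⟨-, h⟩ | ⟨-, h⟩⟩ <;>
    · have := h p hp
      grind
  · obtain ⟨d, s, t, h, rfl⟩ := commData_iff.1 hf
    refine .inr (.inl ⟨hT', hT, _, commData_iff.2 ⟨d, s, t, U_mapTheta _ T ▸ h.symm, rfl⟩, ?_⟩)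
    rw [mapTheta_mapCoord_mapCoord]
    exact (mapTheta_eq_self fun p _ => mapCoord_eq_self (Equiv.swap_apply_self ..)).symm
  · exact .inr (.inr (.inr h))
  · exact .inr (.inr (.inl h))

theorem BasicEquiv.symm (h : BasicEquiv T T') : BasicEquiv T' T :=
  have : Std.Symm BasicMove := ⟨fun _ _ => .symm⟩
  Relation.ReflTransGen.stdSymm.symm _ _ h

end BasicEquiv

/-- The map `σ` permutes the two directions of lines by `e` and acts on positions by the strictly
monotone map `G`.  Conjugation by such maps preserves the basic moves. -/
structure IsMoveSymmetry (σ : Pt → Pt) (e : Equiv.Perm Bool) (G : ℝ → ℝ) : Prop where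
  coord_eq : ∀ d p, coord (e d) (σ p) = G (coord d p)
  strictMono_or_strictAnti : StrictMono G ∨ StrictAnti G

theorem isMoveSymmetry_swap : IsMoveSymmetry Prod.swap Equiv.boolNot id :=
  ⟨by rintro (_ | _) p <;> rfl, .inl strictMono_id⟩

theorem isMoveSymmetry_neg : IsMoveSymmetry Neg.neg (Equiv.refl _) Neg.neg :=
  ⟨by rintro (_ | _) p <;> rfl, .inr fun _ _ => neg_lt_neg⟩

namespace IsMoveSymmetry

variable {σ : Pt → Pt} {e : Equiv.Perm Bool} {G : ℝ → ℝ} {U : Finset Pt} {T T' : Theta}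
  {d : Bool} {s t u t' : ℝ}

theorem injective (h : IsMoveSymmetry σ e G) : Function.Injective G :=
  h.strictMono_or_strictAnti.elim StrictMono.injective StrictAnti.injective

theorem coord_not_eq (h : IsMoveSymmetry σ e G) (d : Bool) (p : Pt) :
    coord (!e d) (σ p) = G (coord (!d) p) := by
  rw [← h.coord_eq, coord_not_eq_of_ne (e.injective.ne (Bool.not_ne_self d))]

theorem lt_iff_lt_or_lt_iff_gt (h : IsMoveSymmetry σ e G) :
    (∀ {s t}, G s < G t ↔ s < t) ∨ ∀ {s t}, G s < G t ↔ t < s :=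
  h.strictMono_or_strictAnti.imp StrictMono.lt_iff_lt StrictAnti.lt_iff_gt

theorem mem_uIoo_iff (h : IsMoveSymmetry σ e G) :
    G u ∈ Set.uIoo (G s) (G t) ↔ u ∈ Set.uIoo s t := by
  rcases h.lt_iff_lt_or_lt_iff_gt with hG | hG <;> simp only [Set.uIoo, Set.mem_Ioo, inf_lt_iff,
    lt_sup_iff, hG]
  exact and_comm

theorem mul_sub_pos_iff (h : IsMoveSymmetry σ e G) {x x' y y' : ℝ} :
    0 < (G x - G x') * (G y - G y') ↔ 0 < (x - x') * (y - y') := by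
  rcases h.lt_iff_lt_or_lt_iff_gt with hG | hG <;> simp only [mul_pos_iff, sub_pos, sub_neg, hG]
  exact or_comm

theorem preservesLines (h : IsMoveSymmetry σ e G) : PreservesLines σ e (fun _ => G) U :=
  ⟨h.coord_eq, fun _ _ _ _ _ hpq => h.injective hpq⟩

theorem thetaOK (h : IsMoveSymmetry σ e G) (hT : ThetaOK T) : ThetaOK (mapTheta σ T) :=
  h.preservesLines.thetaOK hT

theorem mapTheta_mapCoord (h : IsMoveSymmetry σ e G) {φ ψ : ℝ → ℝ}
    (hφ : ∀ u, G (φ u) = ψ (G u)) (d : Bool) (T : Theta) :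
    mapTheta σ (mapTheta (mapCoord d φ) T) = mapTheta (mapCoord (e d) ψ) (mapTheta σ T) := by
  rw [mapTheta_mapTheta, mapTheta_mapTheta]
  exact mapTheta_congr fun p _ => ext_coord (e d) (by simp [h.coord_eq, hφ])
    (by simp [h.coord_not_eq])

theorem isCyclicShift (h : IsMoveSymmetry σ e G) (hU : IsCyclicShift U d t t') :
    IsCyclicShift (U.image σ) (e d) (G t) (G t') := by
  simp only [IsCyclicShift, Finset.exists_mem_image, Finset.forall_mem_image, h.coord_eq,
    h.injective.eq_iff, h.injective.ne_iff]
  rcases h.lt_iff_lt_or_lt_iff_gt with hG | hG <;> simp only [← not_lt, hG] <;>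
    simp only [not_lt]
  exacts [hU, hU.imp_right Or.symm]

theorem thCyclic (h : IsMoveSymmetry σ e G) (hT : ThCyclic T T') :
    ThCyclic (mapTheta σ T) (mapTheta σ T') := by
  obtain ⟨hT, hT', f, hf, rfl⟩ := hT
  obtain ⟨d, t, t', hU, rfl⟩ := cyclicData_iff.1 hf
  refine ⟨h.thetaOK hT, h.thetaOK hT', _, cyclicData_iff.2 ⟨e d, G t, G t', ?_, rfl⟩, ?_⟩
  · exact U_mapTheta σ T ▸ h.isCyclicShift hU
  · exact h.mapTheta_mapCoord (fun u => by simp [Function.update_apply, apply_ite G,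
      h.injective.eq_iff]) d T

theorem isCommutation (h : IsMoveSymmetry σ e G) (hU : IsCommutation U d s t) :
    IsCommutation (U.image σ) (e d) (G s) (G t) := by
  obtain ⟨hne, hs, ht, hbtw, hlink⟩ := hU
  constructor <;> simp only [Unlinked, Finset.exists_mem_image, Finset.forall_mem_image,
    h.coord_eq, h.coord_not_eq, h.injective.eq_iff, h.injective.ne_iff, h.mem_uIoo_iff] <;>
    try assumption
  intro p hp p' hp' q hq q' hq' hps hps' hqt hqt'
  refine (hlink p hp p' hp' q hq q' hq' hps hps' hqt hqt').imp_right fun hnot => ?_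
  rcases h.lt_iff_lt_or_lt_iff_gt with hG | hG <;> simp only [hG]
  · exact hnot
  · have := (hlink p' hp' p hp q' hq' q hq hps' hps hqt' hqt).2
    tauto

theorem thComm (h : IsMoveSymmetry σ e G) (hT : ThComm T T') :
    ThComm (mapTheta σ T) (mapTheta σ T') := by
  obtain ⟨hT, hT', f, hf, rfl⟩ := hT
  obtain ⟨d, s, t, hU, rfl⟩ := commData_iff.1 hf
  refine ⟨h.thetaOK hT, h.thetaOK hT', _, commData_iff.2 ⟨e d, G s, G t, ?_, rfl⟩, ?_⟩
  · exact U_mapTheta σ T ▸ h.isCommutation hU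
  · exact h.mapTheta_mapCoord (fun u => by simp [Equiv.swap_apply_def, apply_ite G,
      h.injective.eq_iff]) d T

theorem eq_or_eq (h : IsMoveSymmetry σ e G) :
    (∀ p, σ p = (G p.1, G p.2)) ∨ ∀ p, σ p = (G p.2, G p.1) := by
  have htrue := h.coord_eq true
  have hfalse := h.coord_not_eq true
  cases he : e true <;> simp only [he] at htrue hfalse
  exacts [.inr fun p => Prod.ext (hfalse p) (htrue p), .inl fun p => Prod.ext (htrue p) (hfalse p)]

theorem image_stabSet (h : IsMoveSymmetry σ e G) (v w : Pt) (P : Finset Pt) :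
    (stabSet v.1 v.2 w.1 w.2 P).image σ =
      stabSet (σ v).1 (σ v).2 (σ w).1 (σ w).2 (P.image σ) := by
  have hσ : Function.Injective σ := fun p q hpq =>
    h.preservesLines.injOn (U := {p, q}) (by simp) (by simp) hpq
  rcases h.eq_or_eq with hσ' | hσ' <;>
    simp only [stabSet, Finset.image_insert, Finset.image_erase hσ, hσ']
  exact Finset.insert_comm _ _ _

theorem isStabilizationSite (h : IsMoveSymmetry σ e G) {v w : Pt}
    (hU : IsStabilizationSite U v w) : IsStabilizationSite (U.image σ) (σ v) (σ w) := by
  refine ⟨fresh_iff.2 (Finset.forall_mem_image.2 fun p hp d' => ?_),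
    Finset.forall_mem_image.2 fun p hp d' => ?_, ?_⟩
  · obtain ⟨d, rfl⟩ := e.surjective d'
    simpa only [h.coord_eq, h.injective.ne_iff] using fresh_iff.1 hU.fresh p hp d
  · obtain ⟨d, rfl⟩ := e.surjective d'
    simpa only [h.coord_eq, h.mem_uIoo_iff] using hU.notMem_uIoo p hp d
  · rcases h.eq_or_eq with hσ | hσ <;> simp only [hσ, h.mul_sub_pos_iff]
    exacts [hU.typeI, mul_comm (v.1 - w.1) _ ▸ hU.typeI]

theorem thStabI (h : IsMoveSymmetry σ e G) (hT : ThStabI T T') :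
    ThStabI (mapTheta σ T) (mapTheta σ T') := by
  obtain ⟨hT, hT', v, w, i, hi, hsite⟩ := thStabI_iff.1 hT
  refine thStabI_iff.2 ⟨h.thetaOK hT, h.thetaOK hT', σ v, σ w, i, ⟨?_, ?_, fun j hj => ?_⟩, ?_⟩
  · rw [part_mapTheta]
    exact Finset.mem_image_of_mem σ hi.mem
  · rw [part_mapTheta, part_mapTheta, hi.part_eq, h.image_stabSet]
  · rw [part_mapTheta, part_mapTheta, hi.part_of_ne j hj]
  · exact U_mapTheta σ T ▸ h.isStabilizationSite hsite

theorem basicMove (h : IsMoveSymmetry σ e G) (hT : BasicMove T T') :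
    BasicMove (mapTheta σ T) (mapTheta σ T') :=
  hT.imp h.thCyclic (.imp h.thComm (.imp h.thStabI h.thStabI))

theorem basicEquiv (h : IsMoveSymmetry σ e G) (hT : BasicEquiv T T') :
    BasicEquiv (mapTheta σ T) (mapTheta σ T') :=
  Relation.ReflTransGen.lift (mapTheta σ) (fun _ _ => h.basicMove) _ _ hT

end IsMoveSymmetry

theorem Theta.tr_tr (T : Theta) : T.tr.tr = T :=
  (mapTheta_mapTheta _ _ T).trans (mapTheta_eq_self fun _ _ => rfl)

theorem ThMove.tr {T T' : Theta} (h : ThMove T T') : ThMove T.tr T'.tr := by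
  rcases h with h | h | h | h | h
  · exact .inl (isMoveSymmetry_swap.thCyclic h)
  · exact .inr (.inl (isMoveSymmetry_swap.thComm h))
  · exact .inr (.inr (.inl (isMoveSymmetry_swap.thStabI h)))
  · exact .inr (.inr (.inr (.inl (isMoveSymmetry_swap.thStabI h))))
  · rw [ThEndShift, ← T.tr_tr, ← T'.tr_tr, Theta.tr_tr T.tr, Theta.tr_tr T'.tr] at h
    exact .inr (.inr (.inr (.inr h.symm)))

theorem ThetaEquiv.tr {T T' : Theta} (h : ThetaEquiv T T') : ThetaEquiv T.tr T'.tr :=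
  Relation.ReflTransGen.lift Theta.tr (fun _ _ => ThMove.tr) _ _ h

section Reparametrization

variable {T : Theta} {d : Bool} {χ φ : ℝ → ℝ}

theorem mapTheta_mapCoord_congr (h : Set.EqOn φ χ (coord d '' T.U)) :
    mapTheta (mapCoord d φ) T = mapTheta (mapCoord d χ) T :=
  mapTheta_congr fun _ hp => mapCoord_congr (h ⟨_, hp, rfl⟩)

theorem basicEquiv_mapCoord_piecewise (hT : ThetaOK T) (hχ : StrictMonoOn χ (coord d '' T.U))
    (hlt : ∀ s ∈ coord d '' T.U, ∀ t ∈ coord d '' T.U, s < χ t) (A : Finset ℝ)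
    (hA : ∀ a ∈ A, a ∈ coord d '' T.U) (hlow : ∀ a ∈ A, ∀ s ∈ coord d '' T.U, s ≤ a → s ∈ A) :
    BasicEquiv T (mapTheta (mapCoord d (A.piecewise χ id)) T) := by
  induction A using Finset.induction_on_max with
  | empty =>
    rw [Finset.piecewise_empty, mapTheta_eq_self fun p _ => mapCoord_eq_self rfl]
    exact .refl
  | insert a A hmax ih =>
    have ha := hA a (Finset.mem_insert_self a A)
    have hequiv := ih (fun b hb => hA b (Finset.mem_insert_of_mem hb)) fun b hb s hs hsb =>
      (Finset.mem_insert.1 (hlow b (Finset.mem_insert_of_mem hb) s hs hsb)).resolve_left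
        (hsb.trans_lt (hmax b hb)).ne
    have hshift : IsCyclicShift (mapTheta (mapCoord d (A.piecewise χ id)) T).U d a (χ a) := by
      simp only [IsCyclicShift, U_mapTheta, Finset.exists_mem_image, Finset.forall_mem_image,
        coord_mapCoord, Finset.piecewise, id_eq]
      obtain ⟨p, hp, hpa⟩ := ha
      refine ⟨⟨p, hp, ?_⟩, .inl ⟨fun q hq => ?_, fun q hq _ => ?_⟩⟩
      · rw [if_neg fun h => (hmax _ h).ne hpa, hpa]
      all_goals split_ifs with hqA
      · exact (hlt a ⟨p, hp, hpa⟩ _ ⟨q, hq, rfl⟩).le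
      · exact le_of_not_gt fun hqa => (Finset.mem_insert.1 (hlow a (Finset.mem_insert_self a A) _
          ⟨q, hq, rfl⟩ hqa.le)).elim hqa.ne hqA
      · exact hχ ⟨q, hq, rfl⟩ ⟨p, hp, hpa⟩ (hmax _ hqA)
      · exact hlt _ ⟨q, hq, rfl⟩ _ ⟨p, hp, hpa⟩
    have hcomp : mapTheta (mapCoord d ((insert a A).piecewise χ id)) T =
        mapTheta (mapCoord d (Function.update id a (χ a)))
          (mapTheta (mapCoord d (A.piecewise χ id)) T) := by
      rw [mapTheta_mapCoord_mapCoord]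
      refine mapTheta_mapCoord_congr fun s hs => ?_
      have hχs := hlt a ha s hs
      grind [Finset.piecewise, Function.update_apply]
    rw [hcomp]
    exact hequiv.trans (hshift.basicEquiv (hequiv.thetaOK hT))

theorem basicEquiv_mapCoord_of_lt (hT : ThetaOK T) (hχ : StrictMonoOn χ (coord d '' T.U))
    (hlt : ∀ s ∈ coord d '' T.U, ∀ t ∈ coord d '' T.U, s < χ t) :
    BasicEquiv T (mapTheta (mapCoord d χ) T) := by
  have hmem : ∀ s, s ∈ T.U.image (coord d) ↔ s ∈ coord d '' T.U := by simp
  rw [← mapTheta_mapCoord_congr (φ := (T.U.image (coord d)).piecewise χ id) fun s hs =>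
    Finset.piecewise_eq_of_mem _ _ _ ((hmem s).2 hs)]
  exact basicEquiv_mapCoord_piecewise hT hχ hlt _ (fun s => (hmem s).1) fun _ _ s hs _ =>
    (hmem s).2 hs

theorem basicEquiv_mapCoord_of_gt (hT : ThetaOK T) (hχ : StrictMonoOn χ (coord d '' T.U))
    (hlt : ∀ s ∈ coord d '' T.U, ∀ t ∈ coord d '' T.U, χ t < s) :
    BasicEquiv T (mapTheta (mapCoord d χ) T) := by
  have hneg : coord d '' (mapTheta Neg.neg T).U = Neg.neg '' (coord d '' T.U) := by
    rw [U_mapTheta, Finset.coe_image, Set.image_image, Set.image_image]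
    exact Set.image_congr fun p _ => isMoveSymmetry_neg.coord_eq d p
  have hequiv := isMoveSymmetry_neg.basicEquiv <|
    basicEquiv_mapCoord_of_lt (χ := fun s => -χ (-s)) (d := d) (isMoveSymmetry_neg.thetaOK hT)
    (by
      rw [hneg]
      rintro _ ⟨s, hs, rfl⟩ _ ⟨t, ht, rfl⟩ hst
      simpa using hχ ht hs (neg_lt_neg_iff.1 hst))
    (by
      rw [hneg]
      rintro _ ⟨s, hs, rfl⟩ _ ⟨t, ht, rfl⟩
      simpa using hlt s hs t ht)
  have hneg_neg : mapTheta Neg.neg (mapTheta Neg.neg T) = T :=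
    (mapTheta_mapTheta ..).trans (mapTheta_eq_self fun p _ => neg_neg p)
  rwa [isMoveSymmetry_neg.mapTheta_mapCoord (ψ := χ) (fun u => neg_neg _), hneg_neg] at hequiv

-- All lines are first translated far away, one at a time, and then brought back to the prescribed
-- positions from the other side.
theorem basicEquiv_mapCoord_of_strictMonoOn (hT : ThetaOK T)
    (hφ : StrictMonoOn φ (coord d '' T.U)) : BasicEquiv T (mapTheta (mapCoord d φ) T) := by
  obtain ⟨L, hL⟩ : ∃ L, ∀ s ∈ coord d '' T.U, ∀ t ∈ coord d '' T.U, s < t + L ∧ φ s < t + L := by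
    obtain ⟨M, hM⟩ := ((T.U ×ˢ T.U).image fun p =>
      max (coord d p.1) (φ (coord d p.1)) - coord d p.2).exists_le
    refine ⟨M + 1, ?_⟩
    rintro _ ⟨p, hp, rfl⟩ _ ⟨q, hq, rfl⟩
    have := hM _ (Finset.mem_image_of_mem _ (Finset.mk_mem_product hp hq))
    exact max_lt_iff.1 (by linarith)
  have hright : BasicEquiv T (mapTheta (mapCoord d (· + L)) T) :=
    basicEquiv_mapCoord_of_lt hT (fun s _ t _ hst => by simpa using hst) fun s hs t ht =>
      (hL s hs t ht).1
  have himage : coord d '' (mapTheta (mapCoord d (· + L)) T).U = (· + L) '' (coord d '' T.U) := by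
    rw [U_mapTheta, Finset.coe_image, Set.image_image, Set.image_image]
    simp only [coord_mapCoord]
  have hleft := basicEquiv_mapCoord_of_gt (χ := fun s => φ (s - L)) (d := d) (hright.thetaOK hT)
    (by
      rw [himage]
      rintro _ ⟨s, hs, rfl⟩ _ ⟨t, ht, rfl⟩ hst
      simpa using hφ hs ht (lt_of_add_lt_add_right hst))
    (by
      rw [himage]
      rintro _ ⟨s, hs, rfl⟩ _ ⟨t, ht, rfl⟩
      simpa using (hL t ht s hs).2)
  have hcomp : (fun s => φ (s - L)) ∘ (· + L) = φ := funext fun s => by simp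
  rw [mapTheta_mapCoord_mapCoord, hcomp] at hleft
  exact hright.trans hleft

theorem exists_strictMonoOn_union_eqOn {α β : Type*} [LinearOrder α] [LinearOrder β]
    [DenselyOrdered β] [NoMinOrder β] [NoMaxOrder β] [Nonempty β] (S F : Finset α) {φ : α → β}
    (h : StrictMonoOn φ S) : ∃ ψ : α → β, StrictMonoOn ψ (S ∪ F : Finset α) ∧ Set.EqOn ψ φ S := by
  induction F using Finset.induction_on with
  | empty => exact ⟨φ, by rwa [Finset.union_empty], fun _ _ => rfl⟩
  | insert x F _ ih =>
    obtain ⟨ψ, hψ, hψφ⟩ := ih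
    rw [Finset.union_insert]
    by_cases hxS : x ∈ S ∪ F
    · exact ⟨ψ, by rwa [Finset.insert_eq_of_mem hxS], hψφ⟩
    obtain ⟨m, hm, hm'⟩ := Order.exists_between_finsets (((S ∪ F).filter (· < x)).image ψ)
      (((S ∪ F).filter (x < ·)).image ψ) <| by
        simp only [Finset.forall_mem_image, Finset.mem_filter]
        exact fun a ha b hb => hψ ha.1 hb.1 (ha.2.trans hb.2)
    have hupd : Set.EqOn (Function.update ψ x m) ψ (S ∪ F : Finset α) := fun s hs =>
      Function.update_of_ne (ne_of_mem_of_not_mem hs hxS) _ _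
    refine ⟨Function.update ψ x m, ?_, fun s hs => ?_⟩
    · rw [Finset.coe_insert, strictMonoOn_insert_iff]
      refine ⟨fun s hs hsx => ?_, fun s hs hxs => ?_, hψ.congr hupd.symm⟩ <;>
        rw [hupd hs, Function.update_self]
      · exact hm _ (Finset.mem_image_of_mem ψ (Finset.mem_filter.2 ⟨hs, hsx⟩))
      · exact hm' _ (Finset.mem_image_of_mem ψ (Finset.mem_filter.2 ⟨hs, hxs⟩))
    · exact (hupd (Finset.mem_union_left F hs)).trans (hψφ hs)

theorem exists_basicEquiv_mapCoord_eqOn (hT : ThetaOK T) {P : Finset Pt}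
    (hφ : StrictMonoOn φ (coord d '' P)) :
    ∃ ψ, BasicEquiv T (mapTheta (mapCoord d ψ) T) ∧ Set.EqOn ψ φ (coord d '' P) := by
  rw [← Finset.coe_image] at hφ
  obtain ⟨ψ, hψ, hψφ⟩ := exists_strictMonoOn_union_eqOn _ (T.U.image (coord d)) hφ
  rw [Finset.coe_union, Finset.coe_image, Finset.coe_image] at hψ
  rw [Finset.coe_image] at hψφ
  exact ⟨ψ, basicEquiv_mapCoord_of_strictMonoOn hT (hψ.mono Set.subset_union_right), hψφ⟩

end Reparametrization

theorem exists_mem_uIoo_forall_notMem_uIcc {s u : ℝ} (F : Finset ℝ) (h : s ≠ u) :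
    ∃ t ∈ Set.uIoo s u, ∀ f ∈ F, f ≠ u → f ∉ Set.uIcc t u := by
  rcases lt_or_gt_of_ne h with h | h
  · obtain ⟨t, hFt, htu⟩ := Order.exists_between_finsets (insert s (F.filter (· < u))) {u}
      (by simpa using h)
    simp only [Finset.forall_mem_insert, Finset.mem_filter, Finset.mem_singleton] at hFt htu
    refine ⟨t, by rw [Set.uIoo_of_lt h]; exact ⟨hFt.1, htu u rfl⟩, fun f hf hfu hft => ?_⟩
    rw [Set.uIcc_of_le (htu u rfl).le] at hft
    exact (hFt.2 f ⟨hf, lt_of_le_of_ne hft.2 hfu⟩).not_ge hft.1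
  · obtain ⟨t, hut, hFt⟩ := Order.exists_between_finsets {u} (insert s (F.filter (u < ·)))
      (by simpa using h)
    simp only [Finset.forall_mem_insert, Finset.mem_filter, Finset.mem_singleton] at hFt hut
    refine ⟨t, by rw [Set.uIoo_of_gt h]; exact ⟨hut u rfl, hFt.1⟩, fun f hf hfu hft => ?_⟩
    rw [Set.uIcc_of_ge (hut u rfl).le] at hft
    exact (hFt.2 f ⟨hf, lt_of_le_of_ne hft.1 hfu.symm⟩).not_ge hft.2

section MoveLine

variable {T : Theta} {d : Bool} {s t u : ℝ}

theorem basicEquiv_mapCoord_update_of_notMem_uIoo (hT : ThetaOK T)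
    (ht : ∀ p ∈ T.U, coord d p ≠ t) (hst : ∀ p ∈ T.U, coord d p ∉ Set.uIoo s t) :
    BasicEquiv T (mapTheta (mapCoord d (Function.update id s t)) T) := by
  refine basicEquiv_mapCoord_of_strictMonoOn hT ?_
  rintro _ ⟨p, hp, rfl⟩ _ ⟨q, hq, rfl⟩ hpq
  have := ht p hp
  have := ht q hq
  have := hst p hp
  have := hst q hq
  grind [mem_uIoo, Function.update_apply]

-- The lines `s` and `u` are exchanged first; what remains to be done does not change the order of
-- the lines.
theorem IsCommutation.basicEquiv_mapCoord_update (h : IsCommutation T.U d s u) (hT : ThetaOK T)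
    (hu : u ∈ Set.uIoo s t) (ht : ∀ p ∈ T.U, coord d p ≠ t)
    (hst : ∀ p ∈ T.U, coord d p ∈ Set.uIoo s t → coord d p = u) :
    BasicEquiv T (mapTheta (mapCoord d (Function.update id s t)) T) := by
  have hlines : ∀ v ∈ coord d '' (mapTheta (mapCoord d (Equiv.swap s u)) T).U,
      v = s ∨ v = u ∨ v ∉ Set.uIcc s t := by
    rw [U_mapTheta, Finset.coe_image, Set.image_image]
    rintro _ ⟨p, hp, rfl⟩
    have hpt := ht p hp
    have hpu := hst p hp
    simp only [coord_mapCoord, Set.mem_uIcc, mem_uIoo, Equiv.swap_apply_def] at hpu ⊢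
    grind
  have hmono : StrictMonoOn (Function.update (Function.update id u t) s u)
      (coord d '' (mapTheta (mapCoord d (Equiv.swap s u)) T).U) := by
    intro v hv w hw hvw
    have hv' := hlines v hv
    have hw' := hlines w hw
    simp only [Set.mem_uIcc, mem_uIoo, Function.update_apply, id_eq] at hu hv' hw' ⊢
    split_ifs <;> grind
  have hcomp : mapTheta (mapCoord d (Function.update (Function.update id u t) s u ∘
      Equiv.swap s u)) T = mapTheta (mapCoord d (Function.update id s t)) T :=
    mapTheta_mapCoord_congr fun v _ => by
      have := h.ne
      grind [Function.update_apply]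
  have hswap := h.basicEquiv hT
  have hmove := basicEquiv_mapCoord_of_strictMonoOn (hswap.thetaOK hT) hmono
  rw [mapTheta_mapCoord_mapCoord, hcomp] at hmove
  exact hswap.trans hmove

theorem BasicEquiv.mapCoord_update_of_forall_eq {t' : ℝ} (hT : ThetaOK T)
    (hequiv : BasicEquiv T (mapTheta (mapCoord d (Function.update id s t')) T))
    (ht' : ∀ p ∈ T.U, coord d p ≠ t')
    (ht : ∀ p ∈ T.U, coord d p ≠ t) (hs : ∃ p ∈ T.U, coord d p = s)
    (hu : ∃ p ∈ T.U, coord d p = u) (hsu : s ≠ u) (hut : u ∈ Set.uIoo t' t)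
    (hbtw : ∀ p ∈ T.U, coord d p ∈ Set.uIoo t' t → coord d p = u) (hlink : Unlinked T.U d s u) :
    BasicEquiv T (mapTheta (mapCoord d (Function.update id s t)) T) := by
  obtain ⟨p₀, hp₀, hp₀s⟩ := hs
  obtain ⟨q, hq, rfl⟩ := hu
  simp only [mem_uIoo] at hut hbtw
  have hcomm : IsCommutation (mapTheta (mapCoord d (Function.update id s t')) T).U d t'
      (coord d q) := by
    refine ⟨(ht' q hq).symm, ?_, ?_, ?_, ?_⟩ <;> simp only [Unlinked, U_mapTheta,
      Finset.exists_mem_image, Finset.forall_mem_image, coord_mapCoord, coord_not_mapCoord,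
      mem_uIoo, Function.update_apply, id_eq]
    · exact ⟨p₀, hp₀, if_pos hp₀s⟩
    · exact ⟨q, hq, if_neg hsu.symm⟩
    · grind
    · have hs : ∀ p ∈ T.U, (if coord d p = s then t' else coord d p) = t' → coord d p = s := by
        grind
      have hu : ∀ p ∈ T.U, (if coord d p = s then t' else coord d p) = coord d q →
        coord d p = coord d q := by grind
      exact fun p hp p' hp' r hr r' hr' hps hps' hru hru' => hlink p hp p' hp' r hr r' hr'
        (hs p hp hps) (hs p' hp' hps') (hu r hr hru) (hu r' hr' hru')
  have hcomp : mapTheta (mapCoord d (Function.update id t' t ∘ Function.update id s t')) T =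
      mapTheta (mapCoord d (Function.update id s t)) T := by
    refine mapTheta_mapCoord_congr ?_
    rintro _ ⟨p, hp, rfl⟩
    have := ht' p hp
    grind [Function.update_apply]
  have hmove := hcomm.basicEquiv_mapCoord_update (t := t) (hequiv.thetaOK hT) (mem_uIoo.2 hut)
    (by
      simp only [U_mapTheta, Finset.forall_mem_image, coord_mapCoord, Function.update_apply, id_eq]
      grind)
    (by
      simp only [U_mapTheta, Finset.forall_mem_image, coord_mapCoord, Function.update_apply, id_eq,
        mem_uIoo]
      grind)
  rw [mapTheta_mapCoord_mapCoord, hcomp] at hmove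
  exact hequiv.trans hmove

theorem basicEquiv_mapCoord_update (hT : ThetaOK T) (ht : ∀ p ∈ T.U, coord d p ≠ t)
    (hlink : ∀ p ∈ T.U, coord d p ∈ Set.uIoo s t → Unlinked T.U d s (coord d p)) :
    BasicEquiv T (mapTheta (mapCoord d (Function.update id s t)) T) := by
  by_cases hs : ∃ p ∈ T.U, coord d p = s
  swap
  · rw [mapTheta_eq_self fun p hp => mapCoord_eq_self <|
      Function.update_of_ne (fun hps => hs ⟨p, hp, hps⟩) _ _]
    exact .refl
  obtain ⟨p₀, hp₀, hp₀s⟩ := hs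
  induction h : {p ∈ T.U | coord d p ∈ Set.uIoo s t}.card using Nat.strong_induction_on
    generalizing t with
  | _ n ih =>
  subst h
  rcases Finset.eq_empty_or_nonempty {p ∈ T.U | coord d p ∈ Set.uIoo s t} with hempty | hne
  · exact basicEquiv_mapCoord_update_of_notMem_uIoo hT ht (Finset.filter_eq_empty_iff.1 hempty)
  obtain ⟨q, hq, hmin⟩ := Finset.exists_min_image _ (fun p => |coord d p - t|) hne
  simp only [Finset.mem_filter] at hq hmin
  set u := coord d q
  have hnear : ∀ p ∈ T.U, coord d p ∉ Set.uIoo u t := fun p hp hput => by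
    have := hmin p ⟨hp, by grind [mem_uIoo]⟩
    grind [mem_uIoo]
  obtain ⟨t', ht'su, ht'u⟩ := exists_mem_uIoo_forall_notMem_uIcc (T.U.image (coord d))
    (s := s) (u := u) (fun hsu => Set.left_notMem_uIoo (hsu ▸ hq.2))
  rw [Finset.forall_mem_image] at ht'u
  have hut := hq.2
  simp only [mem_uIoo, Set.mem_uIcc] at ht'su ht'u hnear hut
  have ht' : ∀ p ∈ T.U, coord d p ≠ t' := fun p hp => by grind
  have hfar : BasicEquiv T (mapTheta (mapCoord d (Function.update id s t')) T) := by
    refine ih _ (Finset.card_lt_card ?_) ht' (fun p hp hpst' => hlink p hp ?_) rfl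
    · rw [Finset.ssubset_iff_of_subset
        (Finset.monotone_filter_right _ fun p _ => by simp only [mem_uIoo]; grind)]
      exact ⟨q, Finset.mem_filter.2 hq, by simp only [Finset.mem_filter, mem_uIoo]; grind⟩
    · rw [mem_uIoo] at hpst' ⊢
      grind
  exact hfar.mapCoord_update_of_forall_eq hT ht' ht ⟨p₀, hp₀, hp₀s⟩ ⟨q, hq.1, rfl⟩ (by grind)
    (by rw [mem_uIoo]; grind) (fun p hp hpt => by rw [mem_uIoo] at hpt; grind) (hlink q hq.1 hq.2)

end MoveLine

theorem Theta.exists_part_eq_and_part_of_ne (T : Theta) (i : Fin 4) (P : Finset Pt) :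
    ∃ T' : Theta, T'.part i = P ∧ ∀ j, j ≠ i → T'.part j = T.part j :=
  ⟨⟨if i = 0 then P else T.a, if i = 1 then P else T.b, if i = 2 then P else T.c,
    if i = 3 then P else T.d⟩, by fin_cases i <;> rfl, fun j hj => by
      fin_cases j <;> exact if_neg hj.symm⟩

theorem exists_stabilizesPart {T : Theta} {i : Fin 4} {v : Pt} (h : v ∈ T.part i) (w : Pt) :
    ∃ T', StabilizesPart T T' i v.1 v.2 w.1 w.2 := by
  obtain ⟨T', hi, hj⟩ := T.exists_part_eq_and_part_of_ne i (stabSet v.1 v.2 w.1 w.2 (T.part i))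
  exact ⟨T', h, hi, hj⟩

namespace StabilizesPart

variable {T T₁ T₂ : Theta} {i : Fin 4} {v w : Pt} {d : Bool} {t : ℝ}

theorem unique (h₁ : StabilizesPart T T₁ i v.1 v.2 w.1 w.2)
    (h₂ : StabilizesPart T T₂ i v.1 v.2 w.1 w.2) : T₁ = T₂ :=
  Theta.ext_part fun j => by
    rcases eq_or_ne j i with rfl | hj
    exacts [h₁.part_eq.trans h₂.part_eq.symm, (h₁.part_of_ne j hj).trans (h₂.part_of_ne j hj).symm]

theorem mem_or_of_mem_U (h : StabilizesPart T T₁ i v.1 v.2 w.1 w.2) {p : Pt} (hp : p ∈ T₁.U) :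
    p = (w.1, v.2) ∨ p = (v.1, w.2) ∨ p = w ∨ p ∈ T.U := by
  obtain ⟨j, hj⟩ := Theta.mem_U.1 hp
  rcases eq_or_ne j i with rfl | hji
  · rw [h.part_eq, mem_stabSet] at hj
    exact hj.imp_right <| .imp_right <| .imp_right fun h => T.part_subset_U j h.2
  · exact .inr (.inr (.inr (T.part_subset_U j (h.part_of_ne j hji ▸ hj))))

theorem mapTheta_mapCoord (h : StabilizesPart T T₁ i v.1 v.2 w.1 w.2)
    (hw : ∀ p ∈ T.U, coord d p ≠ coord d w) :
    StabilizesPart T (mapTheta (mapCoord d (Function.update id (coord d w) t)) T₁) i v.1 v.2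
      (mapCoord d (fun _ => t) w).1 (mapCoord d (fun _ => t) w).2 := by
  have himage : ∀ P ⊆ T.U, P.image (mapCoord d (Function.update id (coord d w) t)) = P :=
    fun P hP => by
      rw [Finset.image_congr (g := id), Finset.image_id]
      exact fun p hp => mapCoord_eq_self (Function.update_of_ne (hw p (hP hp)) _ _)
  refine ⟨h.mem, ?_, fun j hj => ?_⟩
  · have hv := hw v (T.part_subset_U i h.mem)
    rw [part_mapTheta, h.part_eq, stabSet, stabSet, Finset.image_insert, Finset.image_insert,
      Finset.image_insert, himage _ ((Finset.erase_subset _ _).trans (T.part_subset_U i))]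
    cases d <;> simp_all [mapCoord, ofCoord]
  · rw [part_mapTheta, h.part_of_ne j hj, himage _ (T.part_subset_U j)]

theorem basicEquiv_mapCoord (h : StabilizesPart T T₁ i v.1 v.2 w.1 w.2) (hT₁ : ThetaOK T₁)
    (hfresh : ∀ p ∈ T.U, coord d p ≠ coord d w) (ht : ∀ p ∈ T.U, coord d p ≠ t)
    (htw : t ≠ coord d w) (hvw : coord d v ∉ Set.uIoo (coord d w) t)
    (hbtw : ∀ p ∈ T.U, coord d p ∈ Set.uIoo (coord d w) t →
      coord (!d) p ∉ Set.uIcc (coord (!d) v) (coord (!d) w)) :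
    BasicEquiv T₁ (mapTheta (mapCoord d (Function.update id (coord d w) t)) T₁) := by
  have hline : ∀ p ∈ T₁.U, coord d p = coord d w →
      coord (!d) p = coord (!d) v ∨ coord (!d) p = coord (!d) w := fun p hp hpw => by
    have hv := hfresh v (T.part_subset_U i h.mem)
    rcases h.mem_or_of_mem_U hp with rfl | rfl | rfl | hp
    · cases d <;> simp_all
    · cases d <;> simp_all
    · exact .inr rfl
    · exact absurd hpw (hfresh p hp)
  have hother : ∀ p ∈ T₁.U, coord d p = coord d v ∨ coord d p = coord d w ∨ p ∈ T.U :=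
    fun p hp => by
      rcases h.mem_or_of_mem_U hp with rfl | rfl | rfl | hp
      · cases d <;> simp
      · cases d <;> simp
      · exact .inr (.inl rfl)
      · exact .inr (.inr hp)
  refine basicEquiv_mapCoord_update hT₁ (fun p hp => ?_) fun p₀ _ hp₀t => ?_
  · rcases hother p hp with hpv | hpw | hp
    exacts [hpv ▸ ht v (T.part_subset_U i h.mem), hpw ▸ htw.symm, ht p hp]
  have hout : ∀ q ∈ T₁.U, coord d q = coord d p₀ →
      coord (!d) q ∉ Set.uIcc (coord (!d) v) (coord (!d) w) := fun q hq hqp => by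
    rw [← hqp] at hp₀t
    rcases hother q hq with hqv | hqw | hq
    exacts [absurd hp₀t (hqv ▸ hvw), absurd hp₀t (hqw ▸ Set.left_notMem_uIoo), hbtw q hq hp₀t]
  intro p hp p' hp' q hq q' hq' hpw hpw' hqp hqp'
  have hp := hline p hp hpw
  have hp' := hline p' hp' hpw'
  have hq := hout q hq hqp
  have hq' := hout q' hq' hqp'
  rw [Set.mem_uIcc] at hq hq'
  grind

-- A small stabilization at `v` suffices: its new lines are then moved, across the empty rectangle,
-- to the prescribed positions.
theorem basicEquiv (h : StabilizesPart T T₁ i v.1 v.2 w.1 w.2) (hT : ThetaOK T)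
    (hfresh : Fresh w.1 w.2 T.U) (htypeI : 0 < (v.1 - w.1) * (v.2 - w.2))
    (hempty : ∀ p ∈ T.U, p.1 ∈ Set.uIcc v.1 w.1 → p.2 ∈ Set.uIcc v.2 w.2 → p = v) :
    BasicEquiv T T₁ := by
  obtain ⟨x, hx, hfx⟩ := exists_mem_uIoo_forall_notMem_uIcc (T.U.image Prod.fst)
    (s := w.1) (u := v.1) (by rintro hwv; simp [hwv] at htypeI)
  obtain ⟨y, hy, hfy⟩ := exists_mem_uIoo_forall_notMem_uIcc (T.U.image Prod.snd)
    (s := w.2) (u := v.2) (by rintro hwv; simp [hwv] at htypeI)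
  simp only [Finset.forall_mem_image, mem_uIoo, Set.mem_uIcc] at hx hy hfx hfy hempty
  obtain ⟨T₂, h₂⟩ := exists_stabilizesPart h.mem (x, y)
  have hfresh₂ : Fresh x y T.U := ⟨fun p hp => by grind, fun p hp => by grind⟩
  have hsite : IsStabilizationSite T.U v (x, y) := by
    refine ⟨hfresh₂, fun p hp => Bool.forall_bool.2 ⟨?_, ?_⟩, ?_⟩
    · simp only [coord_false, mem_uIoo]
      grind
    · simp only [coord_true, mem_uIoo]
      grind
    · simp only [mul_pos_iff, sub_pos, sub_neg] at htypeI ⊢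
      grind
  have hT₂ : ThetaOK T₂ := (hT.withEnds.stabilize h₂ hfresh₂).thetaOK
  have hstab : BasicEquiv T T₂ :=
    .single (.inr (.inr (.inl (thStabI_iff.2 ⟨hT, hT₂, v, (x, y), i, h₂, hsite⟩))))
  have hmove := h₂.basicEquiv_mapCoord (d := true) (t := w.1) hT₂ hfresh₂.1 hfresh.1
    (by grind [coord_true]) (by simp only [coord_true, mem_uIoo]; grind)
    fun p hp => by
      simp only [coord_true, Bool.not_true, coord_false, mem_uIoo, Set.mem_uIcc]
      grind
  have h₃ : StabilizesPart T _ i v.1 v.2 (w.1, y).1 (w.1, y).2 :=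
    h₂.mapTheta_mapCoord (d := true) (t := w.1) hfresh₂.1
  have hmove' := h₃.basicEquiv_mapCoord (d := false) (t := w.2) (hmove.thetaOK hT₂) hfresh₂.2
    hfresh.2 (by grind [coord_false]) (by simp only [coord_false, mem_uIoo]; grind)
    fun p hp => by
      simp only [coord_true, Bool.not_false, coord_false, mem_uIoo, Set.mem_uIcc]
      grind
  have h₄ := h₃.mapTheta_mapCoord (d := false) (t := w.2) hfresh₂.2
  rw [h.unique h₄]
  exact (hstab.trans hmove).trans hmove'

end StabilizesPart

/-- The rectangular diagram `R` to which the path `α` of a Θ-diagram is attached. -/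
def Theta.diagram (T : Theta) : Finset Pt := T.b ∪ T.c ∪ T.d

theorem Theta.mem_diagram {T : Theta} {p : Pt} : p ∈ T.diagram ↔ ∃ i, i ≠ 0 ∧ p ∈ T.part i := by
  simp [Theta.diagram, Fin.exists_fin_succ, Theta.part]

theorem Theta.mem_U_iff {T : Theta} {p : Pt} : p ∈ T.U ↔ p ∈ T.a ∨ p ∈ T.diagram := by
  simp only [Theta.U, Theta.diagram, Finset.mem_union, or_assoc]

theorem Theta.diagram_mapTheta (f : Pt → Pt) (T : Theta) :
    (mapTheta f T).diagram = T.diagram.image f := by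
  simp only [Theta.diagram, mapTheta, Finset.image_union]

/-- The Θ-diagrams `T` and `T'` differ at most in the path `α`. -/
def SameDiagramParts (T T' : Theta) : Prop := ∀ i, i ≠ 0 → T'.part i = T.part i

namespace SameDiagramParts

variable {T T' T'' : Theta} {E : Set (Bool × ℝ)}

theorem trans (h : SameDiagramParts T T') (h' : SameDiagramParts T' T'') :
    SameDiagramParts T T'' :=
  fun i hi => (h' i hi).trans (h i hi)

theorem diagram_eq (h : SameDiagramParts T T') : T'.diagram = T.diagram := by
  ext p
  simp only [Theta.mem_diagram]
  exact exists_congr fun i => and_congr_right fun hi => by rw [h i hi]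

theorem thetaWithEnds (hs : SameDiagramParts T T') (h : ThetaWithEnds T E) (hT' : ThetaOK T') :
    ThetaWithEnds T' E := by
  have hE : Ends T'.a = E :=
    calc Ends T'.a = Ends (T'.part 1) := (hT'.withEnds.ends_part (by decide)).symm
      _ = Ends (T.part 1) := by rw [hs 1 (by decide)]
      _ = E := h.ends_part (by decide)
  exact hE ▸ hT'.withEnds

end SameDiagramParts

theorem Theta.exists_forall_mem_a_not {I : Theta → Prop} {P : Pt → Prop} {T : Theta} (hT : I T)
    (hstep : ∀ T', I T' → (T'.a.filter P).Nonempty → ∃ T'', I T'' ∧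
      ∃ v ∈ T'.a, P v ∧ ∀ p ∈ T''.a, P p → p ∈ T'.a ∧ p ≠ v) :
    ∃ T', I T' ∧ ∀ p ∈ T'.a, ¬ P p := by
  obtain ⟨T', hT', hmin⟩ :=
    (measure fun T' : Theta => (T'.a.filter P).card).wf.has_min {T' | I T'} ⟨T, hT⟩
  refine ⟨T', hT', fun p hp hPp => ?_⟩
  obtain ⟨T'', hT'', v, hv, hPv, hsub⟩ := hstep T' hT' ⟨p, Finset.mem_filter.2 ⟨hp, hPp⟩⟩
  refine hmin T'' hT'' (Finset.card_lt_card ((Finset.ssubset_iff_of_subset fun q hq => ?_).2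
    ⟨v, Finset.mem_filter.2 ⟨hv, hPv⟩, fun hv' => ?_⟩))
  · obtain ⟨hq, hPq⟩ := Finset.mem_filter.1 hq
    exact Finset.mem_filter.2 ⟨(hsub q hq hPq).1, hPq⟩
  · obtain ⟨hv', hPv⟩ := Finset.mem_filter.1 hv'
    exact (hsub v hv' hPv).2 rfl

theorem ThetaWithEnds.mem_ends_of_coord_eq {T : Theta} {E : Set (Bool × ℝ)} {p q : Pt} {d : Bool}
    (h : ThetaWithEnds T E) (hp : p ∈ T.a) (hq : q ∈ T.diagram) (hpq : coord d p = coord d q) :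
    (d, coord d p) ∈ E := by
  obtain ⟨j, hj, hq⟩ := Theta.mem_diagram.1 hq
  exact (h.cross hj.symm p hp q hq d hpq).1

/-- A vertical strip bounded by two lines `x` and `y` which meet the diagram `R` and are not ends of
`α`, with no vertex of `R` inside. On the line `y` the diagram has only the vertices with ordinates
`c` and `d`, and on the line `x` it has no vertex facing the edge between these two, except possibly
at `d`. The sign condition makes room for pushing vertices of `α` out of the strip past `(x, c)`
by type I stabilizations. -/
structure IsClearableStrip (R : Finset Pt) (E : Set (Bool × ℝ)) (x y c d : ℝ) : Prop where
  left_notMem : (true, x) ∉ E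
  right_notMem : (true, y) ∉ E
  left_mem : ∃ p ∈ R, p.1 = x
  right_mem : ∃ p ∈ R, p.1 = y
  notMem_uIoo : ∀ p ∈ R, p.1 ∉ Set.uIoo x y
  sign : 0 < (x - y) * (c - d)
  right_eq : ∀ p ∈ R, p.1 = y → p.2 = c ∨ p.2 = d
  left_eq : ∀ p ∈ R, p.1 = x → p.2 ∈ Set.uIcc c d → p.2 = d
  corner_notMem : (x, d) ∈ R → (false, d) ∉ E

namespace IsClearableStrip

variable {T : Theta} {E : Set (Bool × ℝ)} {x y c d : ℝ}

theorem ne_left (h : IsClearableStrip T.diagram E x y c d) (hT : ThetaWithEnds T E) {p : Pt}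
    (hp : p ∈ T.a) : p.1 ≠ x := by
  obtain ⟨q, hq, rfl⟩ := h.left_mem
  exact fun hpq => h.left_notMem (hpq ▸ hT.mem_ends_of_coord_eq (d := true) hp hq hpq)

theorem ne_right (h : IsClearableStrip T.diagram E x y c d) (hT : ThetaWithEnds T E) {p : Pt}
    (hp : p ∈ T.a) : p.1 ≠ y := by
  obtain ⟨q, hq, rfl⟩ := h.right_mem
  exact fun hpq => h.right_notMem (hpq ▸ hT.mem_ends_of_coord_eq (d := true) hp hq hpq)

theorem lt_and_lt_or (h : IsClearableStrip T.diagram E x y c d) :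
    x < y ∧ c < d ∨ y < x ∧ d < c := by
  rcases mul_pos_iff.1 h.sign with ⟨hxy, hcd⟩ | ⟨hxy, hcd⟩
  · exact Or.inr ⟨sub_pos.1 hxy, sub_pos.1 hcd⟩
  · exact Or.inl ⟨sub_neg.1 hxy, sub_neg.1 hcd⟩

theorem eq_of_mem_uIcc (h : IsClearableStrip T.diagram E x y c d) (hT : ThetaWithEnds T E)
    {v : Pt} (hv : v ∈ T.a) (hvx : v.1 ∈ Set.uIoo x y) (hvc : v.2 ∈ Set.uIcc c d)
    (hmin : ∀ q ∈ T.a, q.1 ∈ Set.uIoo x y → q.2 ∈ Set.uIcc c d →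
      |v.1 - x| + |v.2 - c| ≤ |q.1 - x| + |q.2 - c|) {q : Pt} (hq : q ∈ T.U)
    (hqx : q.1 ∈ Set.uIcc v.1 x) (hqc : q.2 ∈ Set.uIcc v.2 c) : q = v := by
  rw [mem_uIoo] at hvx
  rw [Set.mem_uIcc] at hqx
  have hqd : q.2 ∈ Set.uIcc c d := Set.uIcc_subset_uIcc hvc Set.left_mem_uIcc hqc
  rcases Theta.mem_U_iff.1 hq with hqa | hqR
  · have := h.ne_left hT hqa
    have hle := hmin q hqa (by rw [mem_uIoo]; grind) hqd
    rw [Set.mem_uIcc] at hqc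
    exact Prod.ext (by grind) (by grind)
  · have := h.notMem_uIoo q hqR
    rw [mem_uIoo] at this
    have hqx : q.1 = x := by grind
    have hqd : q.2 = d := h.left_eq q hqR hqx hqd
    have hvd : v.2 = d := by
      rw [Set.mem_uIcc] at hvc hqc
      grind
    have hvE := hT.mem_ends_of_coord_eq (d := false) hv hqR (hvd.trans hqd.symm)
    exact absurd (hvd ▸ hvE) (h.corner_notMem (by rwa [← hqx, ← hqd]))

-- The vertex of `α` in the rectangle closest to the corner `(x, c)` is stabilized to a point just
-- outside of this corner.
theorem exists_basicEquiv_erase (h : IsClearableStrip T.diagram E x y c d)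
    (hT : ThetaWithEnds T E) {v : Pt} (hv : v ∈ T.a) (hvx : v.1 ∈ Set.uIoo x y)
    (hvc : v.2 ∈ Set.uIcc c d)
    (hmin : ∀ q ∈ T.a, q.1 ∈ Set.uIoo x y → q.2 ∈ Set.uIcc c d →
      |v.1 - x| + |v.2 - c| ≤ |q.1 - x| + |q.2 - c|) :
    ∃ T', BasicEquiv T T' ∧ SameDiagramParts T T' ∧
      ∀ p ∈ T'.a, p.1 ∈ Set.uIoo x y → p.2 ∈ Set.uIcc c d → p ∈ T.a ∧ p ≠ v := by
  have hlt := h.lt_and_lt_or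
  obtain ⟨t, htx, ht⟩ := exists_mem_uIoo_forall_notMem_uIcc (s := 2 * x - y) (u := x)
    (T.U.image Prod.fst) (by grind)
  obtain ⟨m, hmc, hm⟩ := exists_mem_uIoo_forall_notMem_uIcc (s := 2 * c - d) (u := c)
    (T.U.image Prod.snd) (by grind)
  simp only [Finset.forall_mem_image] at ht hm
  have hempty : ∀ p ∈ T.U, p.1 ∈ Set.uIcc v.1 t → p.2 ∈ Set.uIcc v.2 m → p = v := by
    intro p hp hpt hpm
    have := ht hp
    have := hm hp
    apply h.eq_of_mem_uIcc hT hv hvx hvc hmin hp <;> simp only [mem_uIoo, Set.mem_uIcc] at * <;>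
      grind
  simp only [mem_uIoo, Set.mem_uIcc] at hvx hvc htx hmc ht hm ⊢
  obtain ⟨T', hT'⟩ := exists_stabilizesPart (T := T) (i := 0) hv (t, m)
  refine ⟨T', hT'.basicEquiv hT.thetaOK ⟨?_, ?_⟩ ?_ hempty, hT'.part_of_ne, fun p hp hpx hpc => ?_⟩
  · intro p hp hpt
    have := ht hp
    grind
  · intro p hp hpm
    have := hm hp
    grind
  · rcases hlt with hlt | hlt
    · exact mul_pos (by grind) (by grind)
    · exact mul_pos_of_neg_of_neg (by grind) (by grind)
  · have hp' : p ∈ T'.part 0 := hp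
    rw [hT'.part_eq, mem_stabSet] at hp'
    grind [Theta.part_zero]

theorem exists_basicEquiv_forall_notMem_rectangle (h : IsClearableStrip T.diagram E x y c d)
    (hT : ThetaWithEnds T E) : ∃ T', BasicEquiv T T' ∧ SameDiagramParts T T' ∧
      ∀ p ∈ T'.a, p.1 ∈ Set.uIoo x y → p.2 ∉ Set.uIcc c d := by
  obtain ⟨T', ⟨hTT', hs⟩, hT'⟩ := Theta.exists_forall_mem_a_not
    (I := fun T' => BasicEquiv T T' ∧ SameDiagramParts T T')
    (P := fun p => p.1 ∈ Set.uIoo x y ∧ p.2 ∈ Set.uIcc c d) (T := T)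
    ⟨.refl, fun _ _ => rfl⟩ fun T' ⟨hTT', hs⟩ hne => by
      obtain ⟨v, hv, hmin⟩ :=
        Finset.exists_min_image _ (fun p : Pt => |p.1 - x| + |p.2 - c|) hne
      simp only [Finset.mem_filter, and_imp] at hv hmin
      obtain ⟨hv, hvx, hvc⟩ := hv
      obtain ⟨T'', hTT'', hs', hsub⟩ := exists_basicEquiv_erase (hs.diagram_eq ▸ h)
        (hs.thetaWithEnds hT (hTT'.thetaOK hT.thetaOK)) hv hvx hvc hmin
      exact ⟨T'', ⟨hTT'.trans hTT'', hs.trans hs'⟩, v, hv, ⟨hvx, hvc⟩,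
        fun p hp hP => hsub p hp hP.1 hP.2⟩
  exact ⟨T', hTT', hs, fun p hp hpx hpc => hT' p hp ⟨hpx, hpc⟩⟩

theorem unlinked (h : IsClearableStrip T.diagram E x y c d) (hT : ThetaWithEnds T E) {s : ℝ}
    (hs : s ∈ Set.uIoo x y) (hclear : ∀ p ∈ T.a, p.1 ∈ Set.uIoo x y → p.2 ∉ Set.uIcc c d) :
    Unlinked T.U true s y := by
  have hsU : ∀ p ∈ T.U, p.1 = s → p.2 ∉ Set.uIcc c d := fun p hp hps =>
    (Theta.mem_U_iff.1 hp).elim (fun hp => hclear p hp (hps ▸ hs))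
      fun hp => absurd (hps ▸ hs) (h.notMem_uIoo p hp)
  have hyU : ∀ q ∈ T.U, q.1 = y → q.2 = c ∨ q.2 = d := fun q hq hqy =>
    (Theta.mem_U_iff.1 hq).elim (fun hq => absurd hqy (h.ne_right hT hq))
      fun hq => h.right_eq q hq hqy
  intro p hp p' hp' q hq q' hq' hps hps' hqy hqy'
  have := hsU p hp hps
  have := hsU p' hp' hps'
  have := hyU q hq hqy
  have := hyU q' hq' hqy'
  have := h.lt_and_lt_or
  simp only [Set.mem_uIcc, Bool.not_true, coord_false] at *
  grind

-- The line of `α` in the strip closest to `y` is moved across `y`.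
theorem exists_basicEquiv_erase_line (h : IsClearableStrip T.diagram E x y c d)
    (hT : ThetaWithEnds T E) {v : Pt} (hv : v.1 ∈ Set.uIoo x y)
    (hclear : ∀ p ∈ T.a, p.1 ∈ Set.uIoo x y → p.2 ∉ Set.uIcc c d)
    (hmin : ∀ q ∈ T.a, q.1 ∈ Set.uIoo x y → |v.1 - y| ≤ |q.1 - y|) :
    ∃ T', BasicEquiv T T' ∧ SameDiagramParts T T' ∧
      ∀ p ∈ T'.a, p.1 ∈ Set.uIoo x y → p ∈ T.a ∧ p ≠ v := by
  obtain ⟨t, hty, ht⟩ := exists_mem_uIoo_forall_notMem_uIcc (s := 2 * y - x) (u := y)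
    (T.U.image Prod.fst) (by have := h.lt_and_lt_or; grind)
  simp only [Finset.forall_mem_image] at ht
  refine ⟨mapTheta (mapCoord true (Function.update id v.1 t)) T,
    basicEquiv_mapCoord_update hT.thetaOK (fun p hp hpt => ?_) fun p hp hpvt => ?_,
    fun i hi => ?_, fun p hp hpxy => ?_⟩
  · have := ht hp
    simp only [mem_uIoo, Set.mem_uIcc, coord_true] at *
    grind
  · have hpy : p.1 = y := by
      have := ht hp
      have := hmin p
      have := h.notMem_uIoo p
      have := (Theta.mem_U_iff (T := T)).1 hp
      simp only [mem_uIoo, Set.mem_uIcc, coord_true] at *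
      grind
    rw [coord_true, hpy]
    exact h.unlinked hT hv hclear
  · rw [part_mapTheta, Finset.image_congr (g := id) fun p hp => ?_, Finset.image_id]
    have hpR : p ∈ T.diagram := Theta.mem_diagram.2 ⟨i, hi, hp⟩
    refine mapCoord_eq_self (Function.update_of_ne (fun hpv => ?_) _ _)
    exact h.notMem_uIoo p hpR ((show p.1 = v.1 from hpv) ▸ hv)
  · obtain ⟨q, hq, rfl⟩ := Finset.mem_image.1 (show p ∈ T.a.image _ from hp)
    by_cases hqv : q.1 = v.1
    · change Function.update id v.1 t q.1 ∈ _ at hpxy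
      rw [hqv, Function.update_self] at hpxy
      rw [mem_uIoo] at hty hpxy
      grind
    · rw [mapCoord_eq_self (Function.update_of_ne (show coord true q ≠ v.1 from hqv) _ _)]
      exact ⟨hq, fun h => hqv (h ▸ rfl)⟩

theorem exists_basicEquiv_forall_notMem_uIoo (h : IsClearableStrip T.diagram E x y c d)
    (hT : ThetaWithEnds T E) : ∃ T', BasicEquiv T T' ∧ SameDiagramParts T T' ∧
      ThetaWithEnds T' E ∧ ∀ p ∈ T'.U, p.1 ∉ Set.uIoo x y := by
  obtain ⟨T', ⟨hTT', hs, -⟩, hT'⟩ := Theta.exists_forall_mem_a_not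
    (I := fun T' => BasicEquiv T T' ∧ SameDiagramParts T T' ∧
      ∀ p ∈ T'.a, p.1 ∈ Set.uIoo x y → p.2 ∉ Set.uIcc c d)
    (P := fun p => p.1 ∈ Set.uIoo x y)
    (h.exists_basicEquiv_forall_notMem_rectangle hT).choose_spec fun T' ⟨hTT', hs, hclear⟩ hne => by
      obtain ⟨v, hv, hmin⟩ := Finset.exists_min_image _ (fun p : Pt => |p.1 - y|) hne
      simp only [Finset.mem_filter, and_imp] at hv hmin
      obtain ⟨T'', hTT'', hs', hsub⟩ := exists_basicEquiv_erase_line (hs.diagram_eq ▸ h)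
        (hs.thetaWithEnds hT (hTT'.thetaOK hT.thetaOK)) hv.2 hclear hmin
      exact ⟨T'', ⟨hTT'.trans hTT'', hs.trans hs', fun p hp hpx =>
        hclear p (hsub p hp hpx).1 hpx⟩, v, hv.1, hv.2, hsub⟩
  refine ⟨T', hTT', hs, hs.thetaWithEnds hT (hTT'.thetaOK hT.thetaOK), fun p hp => ?_⟩
  exact (Theta.mem_U_iff.1 hp).elim (hT' p) fun hp => h.notMem_uIoo p (hs.diagram_eq ▸ hp)

end IsClearableStrip

namespace ThetaWithEnds

variable {T : Theta} {E : Set (Bool × ℝ)} {i j : Fin 4} {d : Bool} {t : ℝ} {p q : Pt}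

theorem hasEnds_part (hT : ThetaWithEnds T E) (hi : i ≠ 3) : HasEnds (T.part i) E :=
  partEnds_of_ne E hi ▸ hT.hasEnds i

theorem existsUnique_coord_eq (hT : ThetaWithEnds T E) (hi : i ≠ 3) (ht : (d, t) ∈ E) :
    ∃! p, p ∈ T.part i ∧ coord d p = t := by
  obtain ⟨p, hp⟩ := Finset.card_eq_one.1 ((hT.hasEnds_part hi d t).2.2 ht)
  simp only [Finset.ext_iff, Finset.mem_filter, Finset.mem_singleton] at hp
  exact ⟨p, (hp p).2 rfl, fun q => (hp q).1⟩

theorem ne_of_mem (hT : ThetaWithEnds T E) (hij : i ≠ j) (hp : p ∈ T.part i)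
    (hq : q ∈ T.part j) : p ≠ q := by
  rintro rfl
  exact hij (hT.eq_of_mem hp hq)

end ThetaWithEnds

theorem CycleFree.insert {P : Finset Pt} {q : Pt} (hP : CycleFree P) (d : Bool)
    (hq : ∀ p ∈ P, coord d p ≠ coord d q) : CycleFree (insert q P) := fun S hS hdS => by
  have hqS : q ∉ S := fun hqS => by
    have h2 := isDiagram_iff_lineCard_coord.1 hdS q hqS d
    have hqP : q ∉ P := fun h => hq q h rfl
    have h1 := lineCard_mono hS d (coord d q)
    rw [lineCard_insert hqP, lineCard_eq_zero.2 hq, if_pos rfl] at h1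
    omega
  exact hP S ((Finset.subset_insert_iff_of_notMem hqS).1 hS) hdS

theorem pair_symmDiff_linesThrough {q : Pt} {d : Bool} {e : Bool × ℝ} (h : (d, coord d q) ≠ e)
    (h' : (!d, coord (!d) q) ≠ e) :
    {(d, coord d q), e} ∆ linesThrough q = {(!d, coord (!d) q), e} := by
  have hne : (d, coord d q) ≠ (!d, coord (!d) q) := by simp
  rw [linesThrough_eq_pair d]
  ext l
  simp only [Set.mem_symmDiff, Set.mem_insert_iff, Set.mem_singleton_iff]
  grind

/-- The Θ-diagram `T'` is obtained from `T` by an end shift which deletes the endpoint `Q` of the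
`i`-th part from the line through it and the endpoint `P` of `α`, where `y'` is the ordinate of
the new horizontal edge of `α`. Here `i` and `j` are the indices of `β` and `γ` in some order. -/
structure ShiftsEnd (T T' : Theta) (i j : Fin 4) (P Q : Pt) (y' : ℝ) : Prop where
  index : i = 1 ∧ j = 2 ∨ i = 2 ∧ j = 1
  fst_mem : P ∈ T.a
  snd_mem : Q ∈ T.part i
  snd_eq : P.2 = Q.2
  part_zero : T'.part 0 = insert (Q.1, y') (insert (P.1, y') (T.a.erase P))
  part_left : T'.part i = (T.part i).erase Q
  part_right : T'.part j = insert Q (T.part j)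
  part_three : T'.part 3 = T.part 3

theorem exists_shiftsEnd {T : Theta} {i j : Fin 4} {P Q : Pt}
    (hij : i = 1 ∧ j = 2 ∨ i = 2 ∧ j = 1) (hP : P ∈ T.a) (hQ : Q ∈ T.part i) (hPQ : P.2 = Q.2)
    (y' : ℝ) : ∃ T', ShiftsEnd T T' i j P Q y' := by
  rcases hij with ⟨rfl, rfl⟩ | ⟨rfl, rfl⟩
  · exact ⟨⟨_, _, _, _⟩, by simp, hP, hQ, hPQ, rfl, rfl, rfl, rfl⟩
  · exact ⟨⟨_, _, _, _⟩, by simp, hP, hQ, hPQ, rfl, rfl, rfl, rfl⟩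

namespace ShiftsEnd

variable {T T' : Theta} {E : Set (Bool × ℝ)} {i j : Fin 4} {P Q : Pt} {y' : ℝ}

theorem index_ne (h : ShiftsEnd T T' i j P Q y') : i ≠ 0 ∧ j ≠ 0 ∧ i ≠ 3 ∧ j ≠ 3 ∧ i ≠ j := by
  rcases h.index with ⟨rfl, rfl⟩ | ⟨rfl, rfl⟩ <;> decide

theorem index_cases (h : ShiftsEnd T T' i j P Q y') (k : Fin 4) :
    k = 0 ∨ k = i ∨ k = j ∨ k = 3 := by
  rcases h.index with ⟨rfl, rfl⟩ | ⟨rfl, rfl⟩ <;> revert k <;> decide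

theorem diagram_eq (h : ShiftsEnd T T' i j P Q y') : T'.diagram = T.diagram := by
  have hQ := h.snd_mem
  have hl := h.part_left
  have hr := h.part_right
  have hd : T'.d = T.d := h.part_three
  rw [Theta.diagram, Theta.diagram, hd]
  rcases h.index with ⟨rfl, rfl⟩ | ⟨rfl, rfl⟩ <;>
    simp only [Theta.part_one, Theta.part_two] at hQ hl hr <;> rw [hl, hr] <;> ext p <;>
      simp only [Finset.mem_union, Finset.mem_erase, Finset.mem_insert] <;> grind

theorem coord_ne (h : ShiftsEnd T T' i j P Q y') (hT : ThetaWithEnds T E)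
    (hx : (true, Q.1) ∉ E) {k : Fin 4} (hk : k ≠ i) : ∀ p ∈ T.part k, coord true p ≠ Q.1 :=
  fun p hp hpQ => hx (hT.cross hk.symm Q h.snd_mem p hp true hpQ.symm).1

theorem hasEnds_part_right (h : ShiftsEnd T T' i j P Q y') (hT : ThetaWithEnds T E)
    (hy : (false, Q.2) ∈ E) (hx : (true, Q.1) ∉ E) :
    HasEnds (T'.part j) (E ∆ linesThrough Q) := by
  obtain ⟨-, -, -, hj, hij⟩ := h.index_ne
  have hQj : Q ∉ T.part j := fun hQ => hT.ne_of_mem hij h.snd_mem hQ rfl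
  rw [h.part_right, hasEnds_insert_iff hQj]
  refine ⟨hT.hasEnds_part hj, fun d => ?_⟩
  cases d
  · exact ((hT.hasEnds_part hj false Q.2).2.2 hy).le
  · exact (lineCard_eq_zero.2 (h.coord_ne hT hx hij.symm)).le.trans zero_le_one

theorem hasEnds_part_left (h : ShiftsEnd T T' i j P Q y') (hT : ThetaWithEnds T E) :
    HasEnds (T'.part i) (E ∆ linesThrough Q) := by
  rw [h.part_left]
  refine HasEnds.of_insert ?_ (Finset.notMem_erase Q _)
  rw [Finset.insert_erase h.snd_mem]
  exact hT.hasEnds_part h.index_ne.2.2.1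

theorem symmDiff_linesThrough (h : ShiftsEnd T T' i j P Q y') (hy' : ∀ p ∈ T.U, p.2 ≠ y') :
    E ∆ linesThrough Q = E ∆ linesThrough P ∆ linesThrough (P.1, y') ∆ linesThrough (Q.1, y') := by
  have hP := linesThrough_symmDiff_of_coord_eq (p := P) (q := (P.1, y')) (d := true)
    (fun hP => hy' P (T.part_subset_U 0 h.fst_mem) (congrArg Prod.snd hP)) rfl
  have hQ := linesThrough_symmDiff_of_coord_eq (p := Q) (q := (Q.1, y')) (d := true)
    (fun hQ => hy' Q (T.part_subset_U i h.snd_mem) (congrArg Prod.snd hQ)) rfl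
  simp only [Bool.not_true, coord_false, h.snd_eq] at hP hQ
  rw [symmDiff_assoc E, hP, ← hQ, symmDiff_assoc, symmDiff_symmDiff_cancel_right]

theorem hasEnds_part_zero (h : ShiftsEnd T T' i j P Q y') (hT : ThetaWithEnds T E)
    (hx : (true, Q.1) ∉ E) (hy' : ∀ p ∈ T.U, p.2 ≠ y') :
    HasEnds (T'.part 0) (E ∆ linesThrough Q) := by
  have hPa := h.fst_mem
  have hQx := h.coord_ne hT hx h.index_ne.1.symm
  have hay' : ∀ p ∈ T.a, p.2 ≠ y' := fun p hp => hy' p (T.part_subset_U 0 hp)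
  have hPQ : P.1 ≠ Q.1 := hQx P hPa
  have ha : HasEnds T.a E := hT.hasEnds_part (i := 0) (by decide)
  have hcard : ∀ d t, (∀ p ∈ T.a, coord d p ≠ t) → lineCard (T.a.erase P) d t = 0 :=
    fun d t ht => lineCard_eq_zero.2 fun p hp => ht p (Finset.mem_of_mem_erase hp)
  have hcardP : lineCard (T.a.erase P) true P.1 ≤ 1 := by
    have h2 := (ha true P.1).1
    rw [← Finset.insert_erase hPa, lineCard_insert (Finset.notMem_erase P _), coord_true,
      if_pos rfl] at h2
    omega
  have hP' : (P.1, y') ∉ T.a.erase P := fun hP => hay' _ (Finset.mem_of_mem_erase hP) rfl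
  have hQ' : (Q.1, y') ∉ insert (P.1, y') (T.a.erase P) := fun hQ => by
    rcases Finset.mem_insert.1 hQ with hQ | hQ
    · exact hPQ (Prod.mk.inj hQ).1.symm
    · exact hay' _ (Finset.mem_of_mem_erase hQ) rfl
  rw [h.symmDiff_linesThrough hy', h.part_zero, hasEnds_insert_iff hQ', hasEnds_insert_iff hP']
  refine ⟨⟨HasEnds.of_insert ?_ (Finset.notMem_erase P _), fun d => ?_⟩, fun d => ?_⟩
  · rwa [Finset.insert_erase hPa]
  · cases d
    · exact (hcard false y' hay').le.trans zero_le_one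
    · exact hcardP
  · rw [lineCard_insert hP']
    cases d
    · simp [hcard false y' hay']
    · simp [hcard true Q.1 hQx, hPQ]

theorem cycleFree_part (h : ShiftsEnd T T' i j P Q y') (hT : ThetaWithEnds T E)
    (hx : (true, Q.1) ∉ E) (hy' : ∀ p ∈ T.U, p.2 ≠ y') (k : Fin 4) (hk : k ≠ 3) :
    CycleFree (T'.part k) := by
  obtain ⟨hi0, -, hi, hj, hij⟩ := h.index_ne
  have hQx := h.coord_ne hT hx hi0.symm
  have herase : ∀ p ∈ T.a.erase P, p ∈ T.a := fun p => Finset.mem_of_mem_erase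
  rcases h.index_cases k with rfl | rfl | rfl | rfl
  · rw [h.part_zero]
    refine CycleFree.insert (CycleFree.insert ?_ false fun p hp => ?_) true fun p hp => ?_
    · exact (hT.cycleFree 0 (by decide)).mono (Finset.erase_subset P T.a)
    · exact hy' p (T.part_subset_U 0 (herase p hp))
    · rcases Finset.mem_insert.1 hp with rfl | hp
      exacts [hQx P h.fst_mem, hQx p (herase p hp)]
  · rw [h.part_left]
    exact (hT.cycleFree k hi).mono (Finset.erase_subset Q _)
  · rw [h.part_right]
    exact (hT.cycleFree k hj).insert true (h.coord_ne hT hx hij.symm)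
  · exact absurd rfl hk

theorem mem_part_cases (h : ShiftsEnd T T' i j P Q y') (hT : ThetaWithEnds T E)
    (hy : (false, Q.2) ∈ E) {k : Fin 4} {p : Pt} (hp : p ∈ T'.part k) :
    k = 0 ∧ (p = (P.1, y') ∨ p = (Q.1, y')) ∨ k = j ∧ p = Q ∨
      p ∈ T.part k ∧ p ≠ Q ∧ (p.2 = Q.2 → k = j) := by
  obtain ⟨hi0, -, hi, -, hij⟩ := h.index_ne
  rcases h.index_cases k with rfl | rfl | rfl | rfl
  · simp only [h.part_zero, Finset.mem_insert, Finset.mem_erase] at hp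
    obtain hp | hp | ⟨hpP, hp⟩ := hp
    · exact .inl ⟨rfl, .inr hp⟩
    · exact .inl ⟨rfl, .inl hp⟩
    · refine .inr (.inr ⟨hp, hT.ne_of_mem hi0.symm hp h.snd_mem, fun hpQ => absurd ?_ hpP⟩)
      exact (hT.existsUnique_coord_eq (i := 0) (by decide) hy).unique ⟨hp, hpQ⟩
        ⟨h.fst_mem, h.snd_eq⟩
  · rw [h.part_left, Finset.mem_erase] at hp
    refine .inr (.inr ⟨hp.2, hp.1, fun hpQ => absurd ?_ hp.1⟩)
    exact (hT.existsUnique_coord_eq hi hy).unique ⟨hp.2, hpQ⟩ ⟨h.snd_mem, rfl⟩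
  · rw [h.part_right, Finset.mem_insert] at hp
    exact .inr (hp.imp (⟨rfl, ·⟩) fun hp => ⟨hp, hT.ne_of_mem hij.symm hp h.snd_mem, fun _ => rfl⟩)
  · rw [h.part_three] at hp
    refine .inr (.inr ⟨hp, hT.ne_of_mem hi.symm hp h.snd_mem, fun hpQ => ?_⟩)
    exact absurd rfl (hT.cross hi.symm p hp Q h.snd_mem false hpQ).2.1

theorem eq_of_mem (h : ShiftsEnd T T' i j P Q y') (hT : ThetaWithEnds T E)
    (hy : (false, Q.2) ∈ E) (hy' : ∀ p ∈ T.U, p.2 ≠ y') {k l : Fin 4} {p : Pt}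
    (hk : p ∈ T'.part k) (hl : p ∈ T'.part l) : k = l := by
  have hQ := hy' Q (T.part_subset_U i h.snd_mem)
  have hold : ∀ m, p ∈ T.part m → p.2 ≠ y' := fun m hm => hy' p (T.part_subset_U m hm)
  rcases h.mem_part_cases hT hy hk with ⟨rfl, hk⟩ | ⟨rfl, hk⟩ | ⟨hk, hkQ, -⟩ <;>
    rcases h.mem_part_cases hT hy hl with ⟨rfl, hl⟩ | ⟨rfl, hl⟩ | ⟨hl, hlQ, -⟩
  case inr.inr.inr.inr => exact hT.eq_of_mem hk hl
  all_goals grind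

theorem mem_symmDiff (hx : (true, Q.1) ∉ E) {d : Bool} {t : ℝ} (h : (d, t) ∈ E)
    (hne : (d, t) ≠ (false, Q.2)) : (d, t) ∈ E ∆ linesThrough Q := by
  refine .inl ⟨h, fun hQ => ?_⟩
  cases d
  · exact hne (congrArg (Prod.mk false) hQ.symm)
  · exact hx ((show Q.1 = t from hQ) ▸ h)

theorem mem_symmDiff_right (hx : (true, Q.1) ∉ E) : (true, Q.1) ∈ E ∆ linesThrough Q :=
  .inr ⟨rfl, hx⟩

theorem cross_new (h : ShiftsEnd T T' i j P Q y') (hT : ThetaWithEnds T E)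
    (hy : (false, Q.2) ∈ E) (hx : (true, Q.1) ∉ E) (hy' : ∀ p ∈ T.U, p.2 ≠ y') {l : Fin 4}
    (hl : l ≠ 0) {p q : Pt} (hp : p = (P.1, y') ∨ p = (Q.1, y')) (hq : q ∈ T'.part l) {d : Bool}
    (hpq : coord d p = coord d q) : (d, coord d p) ∈ E ∆ linesThrough Q ∧ l ≠ 3 := by
  have hQx := h.coord_ne hT hx h.index_ne.1.symm P h.fst_mem
  obtain ⟨-, -, hi, hj, -⟩ := h.index_ne
  have hp2 : p.2 = y' := by rcases hp with rfl | rfl <;> rfl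
  rcases h.mem_part_cases hT hy hq with ⟨rfl, -⟩ | ⟨rfl, rfl⟩ | ⟨hq, -, -⟩
  · exact absurd rfl hl
  · have hqy := hy' q (T.part_subset_U i h.snd_mem)
    cases d
    · exact absurd (hpq.symm.trans hp2) hqy
    · rcases hp with rfl | rfl
      exacts [absurd hpq hQx, ⟨mem_symmDiff_right hx, hj⟩]
  · cases d
    · exact absurd (hpq.symm.trans hp2) (hy' q (T.part_subset_U l hq))
    · rcases hp with rfl | rfl
      · have hPq := hT.cross hl.symm P h.fst_mem q hq true hpq
        exact ⟨mem_symmDiff hx hPq.1 (by simp), hPq.2.2⟩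
      · have hli : l = i := by_contra fun hli => h.coord_ne hT hx hli q hq hpq.symm
        exact ⟨mem_symmDiff_right hx, hli ▸ hi⟩

theorem cross_snd (h : ShiftsEnd T T' i j P Q y') (hT : ThetaWithEnds T E)
    (hx : (true, Q.1) ∉ E) {l : Fin 4} (hl : l ≠ j) {q : Pt} (hq : q ∈ T.part l)
    (hqQ : q.2 = Q.2 → l = j) {d : Bool} (hpq : coord d Q = coord d q) :
    (d, coord d Q) ∈ E ∆ linesThrough Q ∧ l ≠ 3 := by
  cases d
  · exact absurd (hqQ hpq.symm) hl
  · have hli : l = i := by_contra fun hli => h.coord_ne hT hx hli q hq hpq.symm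
    exact ⟨mem_symmDiff_right hx, hli ▸ h.index_ne.2.2.1⟩

theorem cross (h : ShiftsEnd T T' i j P Q y') (hT : ThetaWithEnds T E)
    (hy : (false, Q.2) ∈ E) (hx : (true, Q.1) ∉ E) (hy' : ∀ p ∈ T.U, p.2 ≠ y') {k l : Fin 4}
    (hkl : k ≠ l) (p : Pt) (hp : p ∈ T'.part k) (q : Pt) (hq : q ∈ T'.part l) (d : Bool)
    (hpq : coord d p = coord d q) :
    (d, coord d p) ∈ E ∆ linesThrough Q ∧ k ≠ 3 ∧ l ≠ 3 := by
  have hj := h.index_ne.2.2.2.1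
  rcases h.mem_part_cases hT hy hp with ⟨rfl, hp'⟩ | hp'
  · have hpq' := h.cross_new hT hy hx hy' hkl.symm hp' hq hpq
    exact ⟨hpq'.1, by decide, hpq'.2⟩
  rcases h.mem_part_cases hT hy hq with ⟨rfl, hq'⟩ | hq'
  · have hqp := h.cross_new hT hy hx hy' hkl hq' hp hpq.symm
    exact ⟨hpq ▸ hqp.1, hqp.2, by decide⟩
  rcases hp' with ⟨rfl, rfl⟩ | ⟨hp', -, hpQ⟩ <;> rcases hq' with ⟨rfl, rfl⟩ | ⟨hq', -, hqQ⟩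
  · exact absurd rfl hkl
  · have hpq' := h.cross_snd hT hx hkl.symm hq' hqQ hpq
    exact ⟨hpq'.1, hj, hpq'.2⟩
  · have hqp := h.cross_snd hT hx hkl hp' hpQ hpq.symm
    exact ⟨hpq ▸ hqp.1, hqp.2, hj⟩
  · obtain ⟨hE, hk, hl⟩ := hT.cross hkl p hp' q hq' d hpq
    refine ⟨mem_symmDiff hx hE fun hline => hkl ?_, hk, hl⟩
    obtain ⟨rfl, hpQ'⟩ := Prod.mk.inj hline
    exact (hpQ hpQ').trans (hqQ (hpq.symm.trans hpQ')).symm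

theorem thetaWithEnds (h : ShiftsEnd T T' i j P Q y') (hT : ThetaWithEnds T E)
    (hy : (false, Q.2) ∈ E) (hx : (true, Q.1) ∉ E) (hy' : ∀ p ∈ T.U, p.2 ≠ y') :
    ThetaWithEnds T' (E ∆ linesThrough Q) where
  ends := by
    obtain ⟨e, he, rfl⟩ : ∃ e, (false, Q.2) ≠ e ∧ E = {(false, Q.2), e} := by
      obtain ⟨e₁, e₂, hne, rfl⟩ := hT.ends
      rcases hy with rfl | rfl
      exacts [⟨_, hne, rfl⟩, ⟨_, hne.symm, Set.pair_comm _ _⟩]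
    have hQe : (true, Q.1) ≠ e := fun hQe => hx (.inr hQe)
    exact ⟨_, e, hQe, pair_symmDiff_linesThrough he hQe⟩
  hasEnds k := by
    obtain ⟨-, -, hi, hj, -⟩ := h.index_ne
    rcases h.index_cases k with rfl | rfl | rfl | rfl
    · rw [partEnds_of_ne _ (by decide)]
      exact h.hasEnds_part_zero hT hx hy'
    · rw [partEnds_of_ne _ hi]
      exact h.hasEnds_part_left hT
    · rw [partEnds_of_ne _ hj]
      exact h.hasEnds_part_right hT hy hx
    · rw [h.part_three, partEnds_three]
      exact hT.hasEnds 3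
  cycleFree := h.cycleFree_part hT hx hy'
  eq_of_mem := h.eq_of_mem hT hy hy'
  cross := h.cross hT hy hx hy'

end ShiftsEnd

theorem exists_pos_forall_lt_abs_sub (F : Finset ℝ) :
    ∃ ε : ℝ, 0 < ε ∧ ∀ s ∈ F, ∀ t ∈ F, s ≠ t → ε < |s - t| := by
  obtain ⟨ε, h0, hε⟩ := Order.exists_between_finsets {0} (F.offDiag.image fun r => |r.1 - r.2|) <|
    by
    simpa using fun a s t _ _ hst ha => ha ▸ abs_pos.2 (sub_ne_zero.2 hst)
  refine ⟨ε, h0 0 (Finset.mem_singleton_self 0), fun s hs t ht hst => hε _ ?_⟩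
  exact Finset.mem_image.2 ⟨(s, t), Finset.mem_offDiag.2 ⟨hs, ht, hst⟩, rfl⟩

theorem ThetaWithEnds.pathOf_eq {T : Theta} {E : Set (Bool × ℝ)} {i : Fin 4} {p : Pt}
    (hT : ThetaWithEnds T E) (hi : i ≠ 3) (hp : p ∈ T.part i) : pathOf T p = T.part i := by
  have hmem : ∀ k, p ∈ T.part k ↔ k = i := fun k => ⟨(hT.eq_of_mem · hp), (· ▸ hp)⟩
  have h0 : p ∈ T.a ↔ 0 = i := hmem 0
  have h1 : p ∈ T.b ↔ 1 = i := hmem 1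
  simp only [pathOf, h0, h1]
  fin_cases i
  · rfl
  · rfl
  · rfl
  · exact absurd rfl hi

theorem updPath_eq {C : Finset Pt} {P₁ P₂ P₃ W : Pt} {r : Pt → Finset Pt}
    (h : ∀ V, V = P₁ ∨ V = P₂ ∨ V = P₃ → (V ∈ C ↔ V = W)) (hW : W = P₁ ∨ W = P₂ ∨ W = P₃) :
    updPath C P₁ P₂ P₃ (r P₁) (r P₂) (r P₃) = C.erase W ∪ r W := by
  rw [updPath]
  split_ifs <;> grind

/-- The six ways to choose the sets `r₁`, `r₂`, `r₃` replacing the endpoints `P₁`, `P₂`, `P₃` of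
the three paths in `ThEndShiftH`. -/
def IsEndShiftPattern (T : Theta) (ε : ℝ) (P₁ P₂ P₃ : Pt) (r₁ r₂ r₃ : Finset Pt) : Prop :=
  (r₁ = {ptUp ε P₁, ptUp ε P₂} ∧ r₂ = ∅ ∧ r₃ = {P₂, P₃} ∧ pathOf T P₂ ≠ {P₂}) ∨
  (r₁ = {ptDn ε P₁, ptDn ε P₃} ∧ r₂ = {P₂, P₃} ∧ r₃ = ∅ ∧ pathOf T P₃ ≠ {P₃}) ∨
  (r₁ = {P₁, P₃} ∧ r₂ = {ptUp ε P₂, ptUp ε P₃} ∧ r₃ = ∅ ∧ pathOf T P₃ ≠ {P₃}) ∨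
  (r₁ = ∅ ∧ r₂ = {ptDn ε P₂, ptDn ε P₁} ∧ r₃ = {P₁, P₃} ∧ pathOf T P₁ ≠ {P₁}) ∨
  (r₁ = ∅ ∧ r₂ = {P₁, P₂} ∧ r₃ = {ptUp ε P₃, ptUp ε P₁} ∧ pathOf T P₁ ≠ {P₁}) ∨
  (r₁ = {P₁, P₂} ∧ r₂ = ∅ ∧ r₃ = {ptDn ε P₃, ptDn ε P₂} ∧ pathOf T P₂ ≠ {P₂})

/-- The set of vertices which replaces the endpoint `W` of one of the three paths in the end shift
of `ShiftsEnd`, where `S` is the common endpoint left fixed by the shift. -/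
def endReplacement (P Q S : Pt) (y' : ℝ) (W : Pt) : Finset Pt :=
  if W = P then {(P.1, y'), (Q.1, y')} else if W = Q then ∅ else {Q, S}

theorem exists_isEndShiftPattern {T : Theta} {P Q S : Pt} (ε : ℝ) (hPQ : P.1 ≠ Q.1)
    (hPS : P.1 ≠ S.1) (hQS : Q.1 ≠ S.1) (hPQ₂ : P.2 = Q.2) (hpath : pathOf T Q ≠ {Q}) :
    ∃ P₁ P₂ P₃ y', (y' = Q.2 + ε ∨ y' = Q.2 - ε) ∧ P₁.1 < P₂.1 ∧ P₂.1 < P₃.1 ∧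
      (∀ V, (V = P₁ ∨ V = P₂ ∨ V = P₃) ↔ (V = P ∨ V = Q ∨ V = S)) ∧
      IsEndShiftPattern T ε P₁ P₂ P₃ (endReplacement P Q S y' P₁) (endReplacement P Q S y' P₂)
        (endReplacement P Q S y' P₃) := by
  have hQP' : Q ≠ P := fun h => hPQ (congrArg Prod.fst h).symm
  have hSP' : S ≠ P := fun h => hPS (congrArg Prod.fst h).symm
  have hSQ' : S ≠ Q := fun h => hQS (congrArg Prod.fst h).symm
  have hrP : ∀ y', endReplacement P Q S y' P = {(P.1, y'), (Q.1, y')} := fun _ => if_pos rfl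
  have hrQ : ∀ y', endReplacement P Q S y' Q = ∅ := fun _ => by simp [endReplacement, hQP']
  have hrS : ∀ y', endReplacement P Q S y' S = {Q, S} := fun _ => by
    simp [endReplacement, hSP', hSQ']
  have hrS' : ∀ y', endReplacement P Q S y' S = {S, Q} := fun y' =>
    (hrS y').trans (Finset.pair_comm Q S)
  have hup : endReplacement P Q S (Q.2 + ε) P = {ptUp ε P, ptUp ε Q} := by
    rw [hrP, ptUp, ptUp, hPQ₂]
  have hdn : endReplacement P Q S (Q.2 - ε) P = {ptDn ε P, ptDn ε Q} := by
    rw [hrP, ptDn, ptDn, hPQ₂]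
  unfold IsEndShiftPattern
  rcases lt_or_gt_of_ne hPQ with hPQ | hQP <;> rcases lt_or_gt_of_ne hPS with hPS | hSP <;>
    rcases lt_or_gt_of_ne hQS with hQS | hSQ
  · exact ⟨P, Q, S, _, .inl rfl, hPQ, hQS, by grind, .inl ⟨hup, hrQ _, hrS _, hpath⟩⟩
  · exact ⟨P, S, Q, _, .inr rfl, hPS, hSQ, by grind, .inr (.inl ⟨hdn, hrS' _, hrQ _, hpath⟩)⟩
  · exact absurd (hPQ.trans hQS) hSP.not_gt
  · exact ⟨S, P, Q, _, .inl rfl, hSP, hPQ, by grind,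
      .inr (.inr (.inl ⟨hrS' _, hup, hrQ _, hpath⟩))⟩
  · exact ⟨Q, P, S, _, .inr rfl, hQP, hPS, by grind,
      .inr (.inr (.inr (.inl ⟨hrQ _, hdn, hrS _, hpath⟩)))⟩
  · exact absurd (hQP.trans hPS) hSQ.not_gt
  · exact ⟨Q, S, P, _, .inl rfl, hQS, hSP, by grind,
      .inr (.inr (.inr (.inr (.inl ⟨hrQ _, hrS _, hup, hpath⟩))))⟩
  · exact ⟨S, Q, P, _, .inr rfl, hSQ, hQP, by grind,
      .inr (.inr (.inr (.inr (.inr ⟨hrS' _, hrQ _, hdn, hpath⟩))))⟩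

namespace ShiftsEnd

variable {T T' : Theta} {E E' : Set (Bool × ℝ)} {i j : Fin 4} {P Q S : Pt} {y' : ℝ}

theorem mem_part_iff (h : ShiftsEnd T T' i j P Q y') (hT : ThetaWithEnds T E)
    (hS : S ∈ T.part j) {V : Pt} (hV : V = P ∨ V = Q ∨ V = S) :
    (V ∈ T.part 0 ↔ V = P) ∧ (V ∈ T.part i ↔ V = Q) ∧ (V ∈ T.part j ↔ V = S) := by
  obtain ⟨hi0, hj0, -, -, hij⟩ := h.index_ne
  have hP : P ∈ T.part 0 := h.fst_mem
  have hPQ := hT.ne_of_mem hi0.symm hP h.snd_mem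
  have hPS := hT.ne_of_mem hj0.symm hP hS
  have hQS := hT.ne_of_mem hij h.snd_mem hS
  have hmem : ∀ {k l}, V ∈ T.part k → (V ∈ T.part l ↔ l = k) := fun hk =>
    ⟨(hT.eq_of_mem · hk), (· ▸ hk)⟩
  rcases hV with rfl | rfl | rfl
  · simp only [hmem hP, hi0, hj0, hPQ, hPS, and_self]
  · simp only [hmem h.snd_mem, hi0.symm, hij.symm, hPQ.symm, hQS, and_self]
  · simp only [hmem hS, hj0.symm, hij, hPS.symm, hQS.symm, and_self]

theorem filter_eq (h : ShiftsEnd T T' i j P Q y') (hT : ThetaWithEnds T E)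
    (hy : (false, Q.2) ∈ E) (hS : S ∈ T.part j) (hS₂ : S.2 = Q.2) :
    (T.a ∪ T.b ∪ T.c).filter (fun p => p.2 = Q.2) = {P, Q, S} := by
  have hline : ∀ k ≠ 3, ∀ p ∈ T.part k, ∀ q ∈ T.part k, q.2 = Q.2 → p.2 = Q.2 → p = q :=
    fun k hk p hp q hq hq₂ hp₂ => (hT.existsUnique_coord_eq hk hy).unique ⟨hp, hp₂⟩ ⟨hq, hq₂⟩
  have hP : ∀ p ∈ T.a, p.2 = Q.2 → p = P := fun p hp =>
    hline 0 (by decide) p hp P h.fst_mem h.snd_eq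
  have hbc : ∀ p, p ∈ T.b ∨ p ∈ T.c ↔ p ∈ T.part i ∨ p ∈ T.part j := fun p => by
    rcases h.index with ⟨rfl, rfl⟩ | ⟨rfl, rfl⟩
    exacts [Iff.rfl, or_comm]
  obtain ⟨-, -, hi, hj, -⟩ := h.index_ne
  ext p
  simp only [Finset.mem_filter, Finset.mem_union, Finset.mem_insert, Finset.mem_singleton,
    or_assoc, hbc]
  constructor
  · rintro ⟨hp | hp | hp, hp₂⟩
    · exact .inl (hP p hp hp₂)
    · exact .inr (.inl (hline i hi p hp Q h.snd_mem rfl hp₂))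
    · exact .inr (.inr (hline j hj p hp S hS hS₂ hp₂))
  · rintro (rfl | rfl | rfl)
    exacts [⟨.inl h.fst_mem, h.snd_eq⟩, ⟨.inr (.inl h.snd_mem), rfl⟩, ⟨.inr (.inr hS), hS₂⟩]

theorem part_eq_updPath (h : ShiftsEnd T T' i j P Q y') (hT : ThetaWithEnds T E)
    (hS : S ∈ T.part j) {P₁ P₂ P₃ : Pt}
    (hperm : ∀ V, (V = P₁ ∨ V = P₂ ∨ V = P₃) ↔ (V = P ∨ V = Q ∨ V = S)) {k : Fin 4}
    (hk : k ≠ 3) :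
    T'.part k = updPath (T.part k) P₁ P₂ P₃ (endReplacement P Q S y' P₁)
      (endReplacement P Q S y' P₂) (endReplacement P Q S y' P₃) := by
  have hmem := fun V hV => h.mem_part_iff hT hS ((hperm V).1 hV)
  obtain ⟨hi0, hj0, -, -, hij⟩ := h.index_ne
  have hQP := hT.ne_of_mem hi0 h.snd_mem h.fst_mem
  have hSP := hT.ne_of_mem hj0 hS h.fst_mem
  have hSQ := hT.ne_of_mem hij.symm hS h.snd_mem
  rcases h.index_cases k with rfl | rfl | rfl | rfl
  · rw [updPath_eq (fun V hV => (hmem V hV).1) ((hperm P).2 (by simp)), h.part_zero,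
      endReplacement, if_pos rfl]
    grind [Theta.part_zero]
  · rw [updPath_eq (fun V hV => (hmem V hV).2.1) ((hperm Q).2 (by simp)), h.part_left,
      endReplacement, if_neg hQP, if_pos rfl, Finset.union_empty]
  · rw [updPath_eq (fun V hV => (hmem V hV).2.2) ((hperm S).2 (by simp)), h.part_right,
      endReplacement, if_neg hSP, if_neg hSQ]
    grind
  · exact absurd rfl hk

theorem thMove (h : ShiftsEnd T T' i j P Q y') (hT : ThetaWithEnds T E)
    (hT' : ThetaWithEnds T' E') (hy : (false, Q.2) ∈ E) (hS : S ∈ T.part j) (hS₂ : S.2 = Q.2)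
    {ε : ℝ} (hε : 0 < ε) (hsep : ∀ p ∈ T.U, ∀ q ∈ T.U, p.2 ≠ q.2 → ε < |p.2 - q.2|)
    {P₁ P₂ P₃ : Pt} (h₁₂ : P₁.1 < P₂.1) (h₂₃ : P₂.1 < P₃.1)
    (hperm : ∀ V, (V = P₁ ∨ V = P₂ ∨ V = P₃) ↔ (V = P ∨ V = Q ∨ V = S))
    (hpat : IsEndShiftPattern T ε P₁ P₂ P₃ (endReplacement P Q S y' P₁)
      (endReplacement P Q S y' P₂) (endReplacement P Q S y' P₃)) : ThMove T T' := by
  have hsnd : ∀ V, V = P₁ ∨ V = P₂ ∨ V = P₃ → V.2 = Q.2 := fun V hV => by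
    rcases (hperm V).1 hV with rfl | rfl | rfl
    exacts [h.snd_eq, rfl, hS₂]
  have hfilter : (T.a ∪ T.b ∪ T.c).filter (fun p => p.2 = Q.2) = {P₁, P₂, P₃} := by
    rw [h.filter_eq hT hy hS hS₂]
    ext V
    simpa only [Finset.mem_insert, Finset.mem_singleton] using (hperm V).symm
  exact .inr <| .inr <| .inr <| .inr <| .inl ⟨hT.thetaOK, hT'.thetaOK, Q.2, P₁, P₂, P₃, ε, hε,
    hsep, hsnd _ (by simp), hsnd _ (by simp), hsnd _ (by simp), h₁₂, h₂₃, hfilter, h.part_three,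
    _, _, _, hpat, h.part_eq_updPath hT hS hperm (k := 0) (by decide),
    h.part_eq_updPath hT hS hperm (k := 1) (by decide),
    h.part_eq_updPath hT hS hperm (k := 2) (by decide)⟩

end ShiftsEnd

theorem ThetaWithEnds.exists_thMove_symmDiff {T : Theta} {E : Set (Bool × ℝ)} {i j : Fin 4}
    {Q : Pt} (hT : ThetaWithEnds T E) (hij : i = 1 ∧ j = 2 ∨ i = 2 ∧ j = 1) (hQ : Q ∈ T.part i)
    (hy : (false, Q.2) ∈ E) (hx : (true, Q.1) ∉ E) :
    ∃ T', ThMove T T' ∧ ThetaWithEnds T' (E ∆ linesThrough Q) ∧ T'.diagram = T.diagram := by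
  have hne : i ≠ 0 ∧ j ≠ 0 ∧ i ≠ 3 ∧ j ≠ 3 ∧ i ≠ j := by
    rcases hij with ⟨rfl, rfl⟩ | ⟨rfl, rfl⟩ <;> decide
  obtain ⟨hi0, hj0, hi3, hj3, hij'⟩ := hne
  obtain ⟨P, ⟨hP, hPQ⟩, -⟩ := hT.existsUnique_coord_eq (i := 0) (by decide) hy
  obtain ⟨S, ⟨hS, hSQ⟩, -⟩ := hT.existsUnique_coord_eq hj3 hy
  obtain ⟨ε, hε, hsep⟩ := exists_pos_forall_lt_abs_sub (T.U.image Prod.snd)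
  replace hsep : ∀ p ∈ T.U, ∀ q ∈ T.U, p.2 ≠ q.2 → ε < |p.2 - q.2| := fun p hp q hq =>
    hsep _ (Finset.mem_image_of_mem _ hp) _ (Finset.mem_image_of_mem _ hq)
  have hne : ∀ {k l p q}, k ≠ l → p ∈ T.part k → q ∈ T.part l → p.2 = q.2 → p.1 ≠ q.1 :=
    fun hkl hp hq h₂ h₁ => hT.ne_of_mem hkl hp hq (Prod.ext h₁ h₂)
  have hpath : pathOf T Q ≠ {Q} := fun hsing => by
    have hE := (hT.hasEnds_part hi3).ends_eq
    rw [← hT.pathOf_eq hi3 hQ, hsing, (hasEnds_singleton Q).ends_eq] at hE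
    exact hx (hE ▸ mem_linesThrough.2 rfl)
  obtain ⟨P₁, P₂, P₃, y', hy', h₁₂, h₂₃, hperm, hpat⟩ := exists_isEndShiftPattern ε
    (hne hi0.symm hP hQ hPQ) (hne hj0.symm hP hS (hPQ.trans hSQ.symm)) (hne hij' hQ hS hSQ.symm)
    hPQ hpath
  have hfresh : ∀ p ∈ T.U, p.2 ≠ y' := fun p hp hpy => by
    have hdist := hsep p hp Q (T.part_subset_U i hQ)
    rcases hy' with rfl | rfl <;> simp [hpy, abs_of_pos hε, hε.ne'] at hdist
  obtain ⟨T', h⟩ := exists_shiftsEnd hij hP hQ hPQ y'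
  have hT' := h.thetaWithEnds hT hy hx hfresh
  exact ⟨T', h.thMove hT hT' hy hS hSQ hε hsep h₁₂ h₂₃ hperm hpat, hT', h.diagram_eq⟩

theorem ThetaWithEnds.exists_thetaEquiv_pair_of_horizontal {T : Theta} {e : Bool × ℝ} {Q : Pt}
    (hT : ThetaWithEnds T {(false, Q.2), e}) (he : (false, Q.2) ≠ e) (hQ : Q ∈ T.diagram)
    (hQe : (true, Q.1) ≠ e) :
    ∃ T', ThetaEquiv T T' ∧ ThetaWithEnds T' {(true, Q.1), e} ∧ T'.diagram = T.diagram := by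
  obtain ⟨P, ⟨hP, hPQ⟩, -⟩ :=
    hT.existsUnique_coord_eq (i := 0) (d := false) (t := Q.2) (by decide) (by simp)
  have hmove : ∀ i j : Fin 4, (i = 1 ∧ j = 2 ∨ i = 2 ∧ j = 1) → Q ∈ T.part i →
      ∃ T', ThetaEquiv T T' ∧ ThetaWithEnds T' {(true, Q.1), e} ∧ T'.diagram = T.diagram := by
    intro i j hij hQi
    obtain ⟨T', hTT', hT', hR⟩ := hT.exists_thMove_symmDiff hij hQi (by simp) (by simpa using hQe)
    exact ⟨T', .single hTT', pair_symmDiff_linesThrough he hQe ▸ hT', hR⟩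
  obtain ⟨i, hi, hQi⟩ := Theta.mem_diagram.1 hQ
  have hi3 : i ≠ 3 := (hT.cross hi.symm P hP Q hQi false hPQ).2.2
  obtain rfl | rfl : i = 1 ∨ i = 2 := by omega
  exacts [hmove 1 2 (by simp) hQi, hmove 2 1 (by simp) hQi]

theorem ThetaWithEnds.tr {T : Theta} {l₁ l₂ : Bool × ℝ} (hT : ThetaWithEnds T {l₁, l₂}) :
    ThetaWithEnds T.tr {(!l₁.1, l₁.2), (!l₂.1, l₂.2)} := by
  have h := isMoveSymmetry_swap.preservesLines.thetaWithEnds hT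
  rwa [Set.image_pair] at h

theorem ThetaWithEnds.exists_thetaEquiv_pair {T : Theta} {e : Bool × ℝ} {Q : Pt} {d : Bool}
    (hT : ThetaWithEnds T {(d, coord d Q), e}) (he : (d, coord d Q) ≠ e) (hQ : Q ∈ T.diagram)
    (hQe : (!d, coord (!d) Q) ≠ e) :
    ∃ T', ThetaEquiv T T' ∧ ThetaWithEnds T' {(!d, coord (!d) Q), e} ∧
      T'.diagram = T.diagram := by
  cases d
  · exact hT.exists_thetaEquiv_pair_of_horizontal he hQ hQe
  · have hne : ∀ {d t}, (d, t) ≠ e → (!d, t) ≠ (!e.1, e.2) := by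
      rintro d t h h'
      exact h (Prod.ext (Bool.not_inj (Prod.mk.inj h').1) (Prod.mk.inj h').2)
    obtain ⟨T', hTT', hT', hR⟩ := hT.tr.exists_thetaEquiv_pair_of_horizontal (Q := Q.swap) (hne he)
      (Theta.diagram_mapTheta Prod.swap T ▸ Finset.mem_image_of_mem _ hQ) (hne hQe)
    refine ⟨T'.tr, T.tr_tr ▸ hTT'.tr, ?_, ?_⟩
    · simpa using hT'.tr
    · rw [← congrArg Theta.diagram T.tr_tr]
      simp only [Theta.tr, Theta.diagram_mapTheta] at hR ⊢
      rw [hR]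

theorem IsDiagram.exists_lt_forall_coord_eq {R : Finset Pt} (hR : IsDiagram R) {d : Bool} {t : ℝ}
    (ht : ∃ p ∈ R, coord d p = t) :
    ∃ a b, a < b ∧ ofCoord d t a ∈ R ∧ ofCoord d t b ∈ R ∧
      ∀ p ∈ R, coord d p = t → coord (!d) p = a ∨ coord (!d) p = b := by
  obtain ⟨p, hp, rfl⟩ := ht
  have hcard : (R.filter (coord d · = coord d p)).card = 2 :=
    (isDiagram_iff_lineCard_coord.1 hR) p hp d
  obtain ⟨u, v, huv, hfilter⟩ := Finset.card_eq_two.1 hcard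
  have hmem : ∀ q, q ∈ R ∧ coord d q = coord d p ↔ q = u ∨ q = v := fun q => by
    simpa only [Finset.mem_filter, Finset.mem_insert, Finset.mem_singleton] using
      Finset.ext_iff.1 hfilter q
  wlog hlt : coord (!d) u < coord (!d) v generalizing u v
  · have hu := (hmem u).2 (.inl rfl)
    have hv := (hmem v).2 (.inr rfl)
    have hne : coord (!d) u ≠ coord (!d) v := fun h => huv (ext_coord d (hu.2.trans hv.2.symm) h)
    exact this v u huv.symm (by rw [hfilter, Finset.pair_comm]) (fun q => (hmem q).trans or_comm)
      (lt_of_le_of_ne (not_lt.1 hlt) hne.symm)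
  have hvertex : ∀ q, q = u ∨ q = v → ofCoord d (coord d p) (coord (!d) q) ∈ R := fun q hq => by
    have hqR := (hmem q).2 hq
    rw [ext_coord d (p := ofCoord _ _ _) (q := q) (by simpa using hqR.2.symm) (by simp)]
    exact hqR.1
  exact ⟨_, _, hlt, hvertex u (.inl rfl), hvertex v (.inr rfl), fun q hq hqt =>
    ((hmem q).1 ⟨hq, hqt⟩).imp (congrArg _) (congrArg _)⟩

theorem ThetaWithEnds.exists_thetaEquiv_pair_not {T : Theta} {d : Bool} {t : ℝ} {e : Bool × ℝ}
    (hT : ThetaWithEnds T {(d, t), e}) (hne : (d, t) ≠ e) :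
    ∃ T' u, ThetaEquiv T T' ∧ ThetaWithEnds T' {(!d, u), e} ∧ (!d, u) ≠ e ∧
      T'.diagram = T.diagram := by
  obtain ⟨P, ⟨hP, rfl⟩, -⟩ := hT.existsUnique_coord_eq (i := 1) (by decide) (.inl rfl)
  obtain ⟨Q, ⟨hQ, hQP⟩, -⟩ := hT.existsUnique_coord_eq (i := 2) (by decide) (.inl rfl)
  obtain ⟨W, hW, hWP, hWe⟩ : ∃ W ∈ T.diagram, coord d W = coord d P ∧
      (!d, coord (!d) W) ≠ e := by
    by_contra! h
    have hPe := h P (Theta.mem_diagram.2 ⟨1, by decide, hP⟩) rfl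
    have hQe := h Q (Theta.mem_diagram.2 ⟨2, by decide, hQ⟩) hQP
    refine hT.ne_of_mem (by decide) hP hQ (ext_coord d hQP.symm ?_)
    exact congrArg Prod.snd (hPe.trans hQe.symm)
  rw [← hWP] at hT hne
  obtain ⟨T', hTT', hT', hR⟩ := hT.exists_thetaEquiv_pair hne hW hWe
  exact ⟨T', _, hTT', hT', hWe, hR⟩

theorem ThetaOK.exists_thetaEquiv_horizontal {T : Theta} (hT : ThetaOK T) :
    ∃ T' q r, ThetaEquiv T T' ∧ ThetaWithEnds T' {(false, q), (false, r)} ∧ q ≠ r ∧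
      T'.diagram = T.diagram := by
  have hT₀ := hT.withEnds
  obtain ⟨e₁, e₂, hne, he⟩ := hT₀.ends
  rw [he] at hT₀
  obtain ⟨T₁, q, hTT₁, hT₁, hne₁, hR₁⟩ : ∃ T₁ q, ThetaEquiv T T₁ ∧
      ThetaWithEnds T₁ {(false, q), e₂} ∧ (false, q) ≠ e₂ ∧ T₁.diagram = T.diagram := by
    rcases e₁ with ⟨_ | _, t⟩
    · exact ⟨T, t, .refl, hT₀, hne, rfl⟩
    · exact hT₀.exists_thetaEquiv_pair_not hne
  rcases e₂ with ⟨_ | _, t⟩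
  · exact ⟨T₁, q, t, hTT₁, hT₁, fun h => hne₁ (by rw [h]), hR₁⟩
  · rw [Set.pair_comm] at hT₁
    obtain ⟨T₂, r, hT₁₂, hT₂, hne₂, hR₂⟩ := hT₁.exists_thetaEquiv_pair_not hne₁.symm
    exact ⟨T₂, r, q, hTT₁.trans hT₁₂, hT₂, fun h => hne₂ (by rw [h]; rfl), hR₂.trans hR₁⟩

theorem ThetaWithEnds.exists_thetaEquiv_horizontal_ne_left {T : Theta} {r x y x' y' : ℝ}
    (hT : ThetaWithEnds T {(false, y'), (false, r)}) (hr : r ≠ y') (hy : y ≠ y')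
    (hR : IsDiagram T.diagram) (h₁ : (x', y) ∈ T.diagram) (h₂ : (x, y') ∈ T.diagram)
    (h₃ : (x', y') ∈ T.diagram) (h₀ : (x, y) ∉ T.diagram) :
    ∃ T' q, ThetaEquiv T T' ∧ ThetaWithEnds T' {(false, q), (false, r)} ∧ q ≠ y' ∧
      T'.diagram = T.diagram := by
  obtain ⟨V, W, hV, hW, hVy, hWV, hWr, hWy⟩ : ∃ V W, V ∈ T.diagram ∧ W ∈ T.diagram ∧
      V.2 = y' ∧ W.1 = V.1 ∧ W.2 ≠ r ∧ W.2 ≠ y' := by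
    by_cases hry : r = y
    · obtain ⟨a, b, hab, ha, hb, hV⟩ := hR.exists_lt_forall_coord_eq (d := true) ⟨_, h₂, rfl⟩
      subst hry
      have hne : ∀ u, (x, u) ∈ T.diagram → u ≠ r := by rintro u hu rfl; exact h₀ hu
      rcases hV _ h₂ rfl with h | h
      · exact ⟨(x, y'), (x, b), h₂, hb, rfl, rfl, hne b hb, fun h' => hab.ne (h.symm.trans h'.symm)⟩
      · exact ⟨(x, y'), (x, a), h₂, ha, rfl, rfl, hne a ha, fun h' => hab.ne (h'.trans h)⟩
    · exact ⟨(x', y'), (x', y), h₃, h₁, rfl, rfl, Ne.symm hry, hy⟩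
  subst hVy
  obtain ⟨T₁, hTT₁, hT₁, hR₁⟩ := hT.exists_thetaEquiv_pair (d := false) (Q := V)
    (by simpa using hr.symm) hV (by simp)
  replace hT₁ : ThetaWithEnds T₁ {(true, coord true W), (false, r)} := by
    rw [coord_true, hWV]
    exact hT₁
  obtain ⟨T₂, hT₁₂, hT₂, hR₂⟩ := hT₁.exists_thetaEquiv_pair (by simp) (hR₁ ▸ hW)
    (by simpa using hWr)
  exact ⟨T₂, W.2, hTT₁.trans hT₁₂, hT₂, hWy, hR₂.trans hR₁⟩

theorem ThetaOK.exists_thetaEquiv_horizontal_ne {T : Theta} {x y x' y' : ℝ} (hT : ThetaOK T)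
    (hy : y ≠ y') (hR : IsDiagram T.diagram) (h₁ : (x', y) ∈ T.diagram)
    (h₂ : (x, y') ∈ T.diagram) (h₃ : (x', y') ∈ T.diagram) (h₀ : (x, y) ∉ T.diagram) :
    ∃ T' q r, ThetaEquiv T T' ∧ ThetaWithEnds T' {(false, q), (false, r)} ∧ q ≠ y' ∧ r ≠ y' ∧
      T'.diagram = T.diagram := by
  obtain ⟨T₁, q, r, hTT₁, hT₁, hqr, hR₁⟩ := hT.exists_thetaEquiv_horizontal
  wlog hr : r ≠ y' generalizing q r
  · exact this r q (by rwa [Set.pair_comm]) hqr.symm (fun hq => hqr (hq.trans (not_not.1 hr).symm))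
  by_cases hq : q = y'
  · subst hq
    rw [← hR₁] at hR h₁ h₂ h₃ h₀
    obtain ⟨T₂, q', hT₁₂, hT₂, hq', hR₂⟩ :=
      hT₁.exists_thetaEquiv_horizontal_ne_left hr hy hR h₁ h₂ h₃ h₀
    exact ⟨T₂, q', r, hTT₁.trans hT₁₂, hT₂, hq', hr, hR₂.trans hR₁⟩
  · exact ⟨T₁, q, r, hTT₁, hT₁, hq, hr, hR₁⟩

/-- The Θ-diagram `T` is Legendrian equivalent to one whose path `α` is attached to `R`. -/
def TransfersTo (T : Theta) (R : Finset Pt) : Prop :=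
  ∃ T', ThetaOK T' ∧ ThetaEquiv T T' ∧ T'.diagram = R

section TransfersTo

variable {T T' : Theta} {R R' : Finset Pt} {d : Bool}

theorem TransfersTo.of_thetaEquiv (h : ThetaEquiv T T') (h' : TransfersTo T' R) :
    TransfersTo T R := by
  obtain ⟨T'', hT'', hequiv, hR⟩ := h'
  exact ⟨T'', hT'', h.trans hequiv, hR⟩

theorem BasicEquiv.transfersTo (h : BasicEquiv T T') (hT : ThetaOK T) :
    TransfersTo T T'.diagram :=
  ⟨T', h.thetaOK hT, h.thetaEquiv, rfl⟩

theorem TransfersTo.of_tr (h : TransfersTo T.tr (R.image Prod.swap)) : TransfersTo T R := by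
  obtain ⟨T', hT', hequiv, hR⟩ := h
  refine ⟨T'.tr, isMoveSymmetry_swap.thetaOK hT', T.tr_tr ▸ hequiv.tr, ?_⟩
  change (mapTheta Prod.swap T').diagram = R
  rw [Theta.diagram_mapTheta, hR, Finset.image_image, Prod.swap_swap_eq, Finset.image_id]

theorem transfersTo_image_mapCoord {f g φ : ℝ → ℝ} (hT : ThetaOK T)
    (hf : BasicEquiv T (mapTheta (mapCoord d f) T))
    (hg : StrictMonoOn g (f '' (coord d '' T.diagram)))
    (hgf : Set.EqOn (g ∘ f) φ (coord d '' T.diagram)) :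
    TransfersTo T (T.diagram.image (mapCoord d φ)) := by
  have himage : coord d '' (T.diagram.image (mapCoord d f)) = f '' (coord d '' T.diagram) := by
    rw [Finset.coe_image, Set.image_image, Set.image_image]
    simp only [coord_mapCoord]
  rw [← himage] at hg
  obtain ⟨ψ, hψ, hψg⟩ := exists_basicEquiv_mapCoord_eqOn (hf.thetaOK hT) hg
  rw [mapTheta_mapCoord_mapCoord] at hψ
  convert BasicEquiv.transfersTo (hf.trans hψ) hT using 1
  rw [Theta.diagram_mapTheta]
  refine Finset.image_congr fun p hp => mapCoord_congr ?_
  rw [← hgf ⟨p, hp, rfl⟩]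
  exact (hψg (himage ▸ ⟨_, ⟨p, hp, rfl⟩, rfl⟩)).symm

theorem exists_basicEquiv_mapCoord_piecewise_add (hT : ThetaOK T) (d : Bool) {L : Set ℝ}
    (hL : IsLowerSet L) : ∃ M, (∀ p ∈ T.U, ∀ q ∈ T.U, coord d p < coord d q + M) ∧
      BasicEquiv T (mapTheta (mapCoord d (L.piecewise (· + M) id)) T) := by
  obtain ⟨M, hM⟩ := ((T.U ×ˢ T.U).image fun p => coord d p.1 - coord d p.2).exists_le
  have hlt : ∀ p ∈ T.U, ∀ q ∈ T.U, coord d p < coord d q + (M + 1) := fun p hp q hq => by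
    have := hM _ (Finset.mem_image_of_mem _ (Finset.mk_mem_product hp hq))
    linarith
  refine ⟨M + 1, hlt, ?_⟩
  have hmem : ∀ s, s ∈ (T.U.image (coord d)).filter (· ∈ L) ↔ s ∈ coord d '' T.U ∧ s ∈ L := by simp
  rw [← mapTheta_mapCoord_congr
    (φ := ((T.U.image (coord d)).filter (· ∈ L)).piecewise (· + (M + 1)) id) fun s hs => by
      simp only [Finset.piecewise, Set.piecewise, hmem, hs, true_and]]
  refine basicEquiv_mapCoord_piecewise hT (fun s _ t _ hst => by simpa using hst) ?_ _
    (fun s hs => ((hmem s).1 hs).1) fun s hs t ht hts => (hmem t).2 ⟨ht, hL hts ((hmem s).1 hs).2⟩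
  rintro _ ⟨p, hp, rfl⟩ _ ⟨q, hq, rfl⟩
  exact hlt p hp q hq

theorem IsCyclicShift.transfersTo {t t' : ℝ} (h : IsCyclicShift T.diagram d t t')
    (hT : ThetaOK T) : TransfersTo T (T.diagram.image (mapCoord d (Function.update id t t'))) := by
  obtain ⟨⟨w, hw, rfl⟩, ⟨hle, hlt⟩ | ⟨hle, hlt⟩⟩ := h
  · obtain ⟨M, hM, hf⟩ := exists_basicEquiv_mapCoord_piecewise_add hT d (isLowerSet_Iic (coord d w))
    have hcoord : ∀ p ∈ T.diagram, coord d w ≤ coord d p ∧ coord d p < coord d w + M ∧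
        (coord d p ≠ coord d w → coord d p < t') := fun p hp =>
      ⟨hle p hp, hM p (Theta.mem_U_iff.2 (.inr hp)) w (Theta.mem_U_iff.2 (.inr hw)), hlt p hp⟩
    refine transfersTo_image_mapCoord (g := Function.update id (coord d w + M) t') hT hf ?_ ?_
    · rintro _ ⟨_, ⟨p, hp, rfl⟩, rfl⟩ _ ⟨_, ⟨q, hq, rfl⟩, rfl⟩
      have := hcoord p hp
      have := hcoord q hq
      simp only [Set.piecewise, Set.mem_Iic, Function.update_apply, id_eq]
      grind
    · rintro _ ⟨p, hp, rfl⟩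
      have := hcoord p hp
      simp only [Function.comp_apply, Set.piecewise, Set.mem_Iic, Function.update_apply, id_eq]
      grind
  · obtain ⟨M, hM, hf⟩ := exists_basicEquiv_mapCoord_piecewise_add hT d (isLowerSet_Iio (coord d w))
    have hcoord : ∀ p ∈ T.diagram, coord d p ≤ coord d w ∧ coord d w < coord d p + M ∧
        (coord d p ≠ coord d w → t' < coord d p) := fun p hp =>
      ⟨hle p hp, hM w (Theta.mem_U_iff.2 (.inr hw)) p (Theta.mem_U_iff.2 (.inr hp)), hlt p hp⟩
    refine transfersTo_image_mapCoord (g := fun s => if s = coord d w then t' else s - M)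
      hT hf ?_ ?_
    · rintro _ ⟨_, ⟨p, hp, rfl⟩, rfl⟩ _ ⟨_, ⟨q, hq, rfl⟩, rfl⟩
      have := hcoord p hp
      have := hcoord q hq
      simp only [Set.piecewise, Set.mem_Iio, id_eq]
      grind
    · rintro _ ⟨p, hp, rfl⟩
      have := hcoord p hp
      simp only [Function.comp_apply, Set.piecewise, Set.mem_Iio, Function.update_apply, id_eq]
      grind

end TransfersTo

section Commutation

variable {T : Theta} {R : Finset Pt} {E : Set (Bool × ℝ)}

theorem ThetaWithEnds.mem_diagram_of_coord_eq {p q : Pt} {d : Bool} (h : ThetaWithEnds T E)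
    (hp : p ∈ T.U) (hq : q ∈ T.diagram) (hpq : coord d p = coord d q) (hE : (d, coord d p) ∉ E) :
    p ∈ T.diagram :=
  (Theta.mem_U_iff.1 hp).resolve_left fun hpa => hE (h.mem_ends_of_coord_eq hpa hq hpq)

theorem exists_isClearableStrip_of_forall_notMem_Icc {x y a b : ℝ} (hE : ∀ t, (true, t) ∉ E)
    (hxy : x ≠ y) (hx : ∃ p ∈ R, p.1 = x) (hy : ∃ p ∈ R, p.1 = y)
    (hbtw : ∀ p ∈ R, p.1 ∉ Set.uIoo x y) (hab : a < b)
    (hright : ∀ p ∈ R, p.1 = y → p.2 = a ∨ p.2 = b)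
    (hleft : ∀ p ∈ R, p.1 = x → p.2 ∉ Set.Icc a b) : ∃ c d, IsClearableStrip R E x y c d := by
  rcases hxy.lt_or_gt with h | h
  · refine ⟨a, b, hE x, hE y, hx, hy, hbtw, by nlinarith, hright, fun p hp hpx hpab => ?_,
      fun hxb => absurd (Set.right_mem_Icc.2 hab.le) (hleft _ hxb rfl)⟩
    exact absurd (Set.uIcc_of_le hab.le ▸ hpab) (hleft p hp hpx)
  · refine ⟨b, a, hE x, hE y, hx, hy, hbtw, by nlinarith, fun p hp hpy => (hright p hp hpy).symm,
      fun p hp hpx hpab => ?_, fun hxa => absurd (Set.left_mem_Icc.2 hab.le) (hleft _ hxa rfl)⟩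
    exact absurd (Set.uIcc_of_ge hab.le ▸ hpab) (hleft p hp hpx)

theorem IsCommutation.exists_isClearableStrip {x y : ℝ} (h : IsCommutation R true x y)
    (hR : IsDiagram R) (hE : ∀ t, (true, t) ∉ E) :
    (∃ c d, IsClearableStrip R E x y c d) ∨ ∃ c d, IsClearableStrip R E y x c d := by
  obtain ⟨hne, hx, hy, hbtw, hlink⟩ := h
  obtain ⟨a, b, hab, ha, hb, hx'⟩ := hR.exists_lt_forall_coord_eq hx
  obtain ⟨a', b', hab', ha', hb', hy'⟩ := hR.exists_lt_forall_coord_eq hy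
  have hsep : (a ∉ Set.Icc a' b' ∧ b ∉ Set.Icc a' b') ∨ a' ∉ Set.Icc a b ∧ b' ∉ Set.Icc a b := by
    obtain ⟨haa', hnot⟩ := hlink _ ha _ hb _ ha' _ hb' rfl rfl rfl rfl
    have hab'' := (hlink _ ha _ hb _ hb' _ ha' rfl rfl rfl rfl).1
    have hba' := (hlink _ hb _ ha _ ha' _ hb' rfl rfl rfl rfl).1
    have hbb' := (hlink _ hb _ ha _ hb' _ ha' rfl rfl rfl rfl).1
    simp only [coord_not_ofCoord] at haa' hnot hab'' hba' hbb'
    grind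
  refine hsep.imp (fun ⟨ha, hb⟩ => ?_) fun ⟨ha', hb'⟩ => ?_
  · refine exists_isClearableStrip_of_forall_notMem_Icc hE hne hx hy hbtw hab' hy'
      fun p hp hpx => ?_
    rcases hx' p hp hpx with rfl | rfl
    exacts [ha, hb]
  · refine exists_isClearableStrip_of_forall_notMem_Icc hE hne.symm hy hx
      (Set.uIoo_comm x y ▸ hbtw) hab hx' fun p hp hpy => ?_
    rcases hy' p hp hpy with rfl | rfl
    exacts [ha', hb']

theorem IsCommutation.transfersTo_vertical {x y : ℝ} (h : IsCommutation T.diagram true x y)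
    (hT : ThetaOK T) (hR : IsDiagram T.diagram) :
    TransfersTo T (T.diagram.image (mapCoord true (Equiv.swap x y))) := by
  obtain ⟨T₁, q, r, hTT₁, hT₁, -, hR₁⟩ := hT.exists_thetaEquiv_horizontal
  refine .of_thetaEquiv hTT₁ ?_
  rw [← hR₁] at h hR ⊢
  have hE : ∀ t, (true, t) ∉ ({(false, q), (false, r)} : Set (Bool × ℝ)) := by simp
  obtain ⟨T₂, hT₁₂, hsame, hT₂, hbtw⟩ : ∃ T₂, BasicEquiv T₁ T₂ ∧ SameDiagramParts T₁ T₂ ∧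
      ThetaWithEnds T₂ {(false, q), (false, r)} ∧ ∀ p ∈ T₂.U, p.1 ∉ Set.uIoo x y := by
    rcases h.exists_isClearableStrip hR hE with ⟨c, d, hs⟩ | ⟨c, d, hs⟩
    · exact hs.exists_basicEquiv_forall_notMem_uIoo hT₁
    · rw [Set.uIoo_comm]
      exact hs.exists_basicEquiv_forall_notMem_uIoo hT₁
  obtain ⟨hne, hx, hy, -, hlink⟩ := h
  rw [← hsame.diagram_eq] at hx hy hlink ⊢
  have hmem : ∀ p ∈ T₂.U, ∀ w ∈ T₂.diagram, p.1 = w.1 → p ∈ T₂.diagram := fun p hp w hw hpw =>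
    hT₂.mem_diagram_of_coord_eq (d := true) hp hw hpw (hE _)
  have hcomm : IsCommutation T₂.U true x y := by
    have ⟨v, hv, hvx⟩ := hx
    have ⟨w, hw, hwy⟩ := hy
    refine ⟨hne, ⟨v, Theta.mem_U_iff.2 (.inr hv), hvx⟩, ⟨w, Theta.mem_U_iff.2 (.inr hw), hwy⟩, hbtw,
      fun p hp p' hp' u hu u' hu' hpx hpx' huy huy' => ?_⟩
    exact hlink p (hmem p hp v hv (hpx.trans hvx.symm)) p' (hmem p' hp' v hv (hpx'.trans hvx.symm))
      u (hmem u hu w hw (huy.trans hwy.symm)) u' (hmem u' hu' w hw (huy'.trans hwy.symm))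
      hpx hpx' huy huy'
  rw [← Theta.diagram_mapTheta]
  exact .of_thetaEquiv hT₁₂.thetaEquiv
    ((hcomm.basicEquiv hT₂.thetaOK).transfersTo hT₂.thetaOK)

theorem IsCommutation.transfersTo {d : Bool} {s t : ℝ} (h : IsCommutation T.diagram d s t)
    (hT : ThetaOK T) (hR : IsDiagram T.diagram) :
    TransfersTo T (T.diagram.image (mapCoord d (Equiv.swap s t))) := by
  cases d with
  | true => exact h.transfersTo_vertical hT hR
  | false =>
    have htr : T.tr.diagram = T.diagram.image Prod.swap := T.diagram_mapTheta Prod.swap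
    have hR' : IsDiagram T.tr.diagram := by
      simpa [htr, hasEnds_empty_iff] using
        isMoveSymmetry_swap.preservesLines.hasEnds_image (hasEnds_empty_iff.2 hR)
    have htransfer := IsCommutation.transfersTo_vertical (x := s) (y := t) (T := T.tr)
      (htr ▸ isMoveSymmetry_swap.isCommutation h) (isMoveSymmetry_swap.thetaOK hT) hR'
    rw [htr, Finset.image_image] at htransfer
    apply TransfersTo.of_tr
    rwa [Finset.image_image]

end Commutation

theorem ThetaWithEnds.mem_part_of_coord_eq {T : Theta} {E : Set (Bool × ℝ)} {p q : Pt} {d : Bool}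
    {i : Fin 4} (h : ThetaWithEnds T E) (hp : p ∈ T.part i) (hq : q ∈ T.U)
    (hpq : coord d p = coord d q) (hE : (d, coord d p) ∉ E) : q ∈ T.part i := by
  obtain ⟨j, hj⟩ := Theta.mem_U.1 hq
  obtain rfl : i = j := by
    by_contra hij
    exact hE (h.cross hij p hp q hj d hpq).1
  exact hj

theorem StabilizesPart.diagram_eq {T T' : Theta} {i : Fin 4} {x y x' y' : ℝ}
    (h : StabilizesPart T T' i x y x' y') (hi : i ≠ 0) (hxy : ∀ j, j ≠ i → (x, y) ∉ T.part j) :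
    T'.diagram = stabSet x y x' y' T.diagram := by
  have hpart := h.part_eq
  have hpart' := h.part_of_ne
  ext p
  have hi' : p ∈ T'.part i ↔ _ := hpart ▸ mem_stabSet
  simp only [Theta.mem_diagram, mem_stabSet]
  grind

namespace IsStabilizationSite

variable {R : Finset Pt} {E : Set (Bool × ℝ)} {v w : Pt}

theorem coord_ne (h : IsStabilizationSite R v w) (d : Bool) : coord d v ≠ coord d w := fun hd => by
  have := h.typeI
  cases d <;> simp_all

theorem notMem_uIcc (h : IsStabilizationSite R v w) {p : Pt} (hp : p ∈ R) {d : Bool}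
    (hpv : coord d p ≠ coord d v) : coord d p ∉ Set.uIcc (coord d v) (coord d w) := by
  have hw := fresh_iff.1 h.fresh p hp d
  have hbtw := h.notMem_uIoo p hp d
  rw [mem_uIoo] at hbtw
  rw [Set.mem_uIcc]
  grind

theorem eq_of_mem_uIcc (h : IsStabilizationSite R v w) {p : Pt} (hp : p ∈ R)
    (hx : p.1 ∈ Set.uIcc v.1 w.1) (hy : p.2 ∈ Set.uIcc v.2 w.2) : p = v :=
  Prod.ext (not_imp_not.1 (h.notMem_uIcc hp (d := true)) hx)
    (not_imp_not.1 (h.notMem_uIcc hp (d := false)) hy)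

theorem notMem_stabSet (h : IsStabilizationSite R v w) : v ∉ stabSet v.1 v.2 w.1 w.2 R := by
  rw [mem_stabSet]
  rintro (hv | hv | hv | ⟨hv, -⟩)
  exacts [h.coord_ne true (Prod.ext_iff.1 hv).1, h.coord_ne false (Prod.ext_iff.1 hv).2,
    h.coord_ne true (Prod.ext_iff.1 hv).1, hv rfl]

theorem isClearableStrip (h : IsStabilizationSite R v w) (hv : (true, v.1) ∉ E)
    (hw : (true, w.1) ∉ E) (hw' : (false, w.2) ∉ E) :
    IsClearableStrip (stabSet v.1 v.2 w.1 w.2 R) E v.1 w.1 v.2 w.2 where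
  left_notMem := hv
  right_notMem := hw
  left_mem := ⟨(v.1, w.2), mem_stabSet.2 (.inr (.inl rfl)), rfl⟩
  right_mem := ⟨w, mem_stabSet.2 (.inr (.inr (.inl rfl))), rfl⟩
  notMem_uIoo p hp := by
    rcases mem_stabSet.1 hp with rfl | rfl | rfl | ⟨-, hp⟩
    exacts [Set.right_notMem_uIoo, Set.left_notMem_uIoo, Set.right_notMem_uIoo,
      h.notMem_uIoo p hp true]
  sign := h.typeI
  right_eq p hp hpw := by
    rcases mem_stabSet.1 hp with rfl | rfl | rfl | ⟨-, hp⟩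
    exacts [.inl rfl, .inr rfl, .inr rfl, (h.fresh.1 p hp hpw).elim]
  left_eq p hp hpv hpc := by
    rcases mem_stabSet.1 hp with rfl | rfl | rfl | ⟨hpv', hp⟩
    exacts [(h.coord_ne true hpv.symm).elim, rfl, rfl,
      (hpv' (h.eq_of_mem_uIcc hp (hpv ▸ Set.left_mem_uIcc) hpc)).elim]
  corner_notMem _ := hw'

end IsStabilizationSite

theorem stabMove_I_iff {R R' : Finset Pt} : StabMove .I R R' ↔ IsDiagram R ∧ IsDiagram R' ∧
    ∃ v ∈ R, ∃ w, IsStabilizationSite R v w ∧ R' = stabSet v.1 v.2 w.1 w.2 R := by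
  constructor
  · rintro ⟨v, hR, hR', x', y', ⟨hv, -, -, hx', hy', hxx', hyy', hstab⟩, hI⟩
    exact ⟨hR, hR', v, hv, (x', y'), ⟨⟨hx', hy'⟩,
      fun p hp => Bool.forall_bool.2 ⟨hyy' p hp, hxx' p hp⟩, hI.1 rfl⟩, hstab⟩
  · rintro ⟨hR, hR', v, hv, w, hsite, hstab⟩
    exact ⟨v, hR, hR', w.1, w.2, ⟨hv, hsite.coord_ne true, hsite.coord_ne false, hsite.fresh.1,
      hsite.fresh.2, fun p hp => hsite.notMem_uIoo p hp true,
      fun p hp => hsite.notMem_uIoo p hp false, hstab⟩, fun _ => hsite.typeI, fun _ => rfl⟩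

theorem exists_strictMonoOn_forall_notMem_uIcc (S F : Finset ℝ) {t t' : ℝ} (ht : t ∈ S)
    (htt' : t ≠ t') (hS : ∀ u ∈ S, u ≠ t → u ∉ Set.uIcc t t') :
    ∃ ψ : ℝ → ℝ, StrictMonoOn ψ (S ∪ F : Finset ℝ) ∧ Set.EqOn ψ id S ∧
      ∀ u ∈ F, u ≠ t → ψ u ∉ Set.uIcc t t' := by
  obtain ⟨s, hs, hfar⟩ := exists_mem_uIoo_forall_notMem_uIcc F htt'.symm
  simp only [mem_uIoo, Set.mem_uIcc] at hs hfar hS ⊢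
  have hmono : StrictMonoOn (Function.update id s t') (insert s S : Finset ℝ) := by
    intro u hu u' hu' huu'
    simp only [Finset.mem_coe, Finset.mem_insert] at hu hu'
    simp only [Function.update_apply, id_eq]
    grind
  obtain ⟨ψ, hψ, hψS⟩ := exists_strictMonoOn_union_eqOn (insert s S) F hmono
  have hψid : Set.EqOn ψ id S := fun u hu => by
    rw [hψS (Finset.mem_insert_of_mem hu), Function.update_of_ne]
    rintro rfl
    grind
  have hψs : ψ s = t' := by simpa using hψS (Finset.mem_insert_self s S)
  have hψt : ψ t = t := hψid ht
  refine ⟨ψ, hψ.mono (by gcongr; exact Finset.subset_insert s S), hψid, fun u hu hut => ?_⟩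
  have hcmp : ∀ a ∈ insert s S, (ψ a < ψ u ↔ a < u) ∧ (ψ u < ψ a ↔ u < a) := fun a ha =>
    have ha := Finset.mem_union_left F ha
    have hu := Finset.mem_union_right (insert s S) hu
    ⟨hψ.lt_iff_lt ha hu, hψ.lt_iff_lt hu ha⟩
  have hcmp_s := hψs ▸ hcmp s (Finset.mem_insert_self s S)
  have hcmp_t := hψt ▸ hcmp t (Finset.mem_insert_of_mem ht)
  have hus := hfar u hu hut
  clear hfar hS hcmp
  grind

theorem exists_basicEquiv_mapCoord_forall_notMem_uIcc {T : Theta} {d : Bool} {t t' : ℝ}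
    (hT : ThetaOK T) (ht : ∃ p ∈ T.diagram, coord d p = t) (htt' : t ≠ t')
    (h : ∀ p ∈ T.diagram, coord d p ≠ t → coord d p ∉ Set.uIcc t t') :
    ∃ ψ, BasicEquiv T (mapTheta (mapCoord d ψ) T) ∧
      (mapTheta (mapCoord d ψ) T).diagram = T.diagram ∧
      ∀ p ∈ T.U, ψ (coord d p) ≠ t → ψ (coord d p) ∉ Set.uIcc t t' := by
  have ht := Finset.mem_image.2 ht
  obtain ⟨ψ, hψ, hψid, hfar⟩ := exists_strictMonoOn_forall_notMem_uIcc
    (T.diagram.image (coord d)) (T.U.image (coord d)) ht htt'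
    (Finset.forall_mem_image.2 h)
  refine ⟨ψ, basicEquiv_mapCoord_of_strictMonoOn hT (hψ.mono (by simp)), ?_, fun p hp hpt => ?_⟩
  · rw [Theta.diagram_mapTheta, Finset.image_congr (g := id), Finset.image_id]
    exact fun p hp => mapCoord_eq_self (hψid (Finset.mem_image_of_mem _ hp))
  · refine hfar _ (Finset.mem_image_of_mem _ hp) fun hpt' => hpt ?_
    rw [hpt']
    exact hψid ht

-- After `α` is pushed off the rectangle, the same stabilization is permitted for the Θ-diagram.
theorem IsStabilizationSite.transfersTo {T : Theta} {v w : Pt} (hT : ThetaOK T)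
    (h : IsStabilizationSite T.diagram v w) (hv : v ∈ T.diagram) :
    TransfersTo T (stabSet v.1 v.2 w.1 w.2 T.diagram) := by
  obtain ⟨φ, hφ, hφR, hfar⟩ := exists_basicEquiv_mapCoord_forall_notMem_uIcc hT ⟨v, hv, rfl⟩
    (h.coord_ne true) fun p hp => h.notMem_uIcc hp
  rw [← hφR] at h hv
  obtain ⟨ψ, hψ, hψR, hfar'⟩ := exists_basicEquiv_mapCoord_forall_notMem_uIcc (hφ.thetaOK hT)
    ⟨v, hv, rfl⟩ (h.coord_ne false) fun p hp => h.notMem_uIcc hp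
  rw [← hψR] at h hv
  have hT' := hψ.thetaOK (hφ.thetaOK hT)
  set T' := mapTheta (mapCoord false ψ) (mapTheta (mapCoord true φ) T)
  have hoff : ∀ p ∈ T'.U, ∀ d, coord d p ≠ coord d v →
      coord d p ∉ Set.uIcc (coord d v) (coord d w) := by
    simp only [T', U_mapTheta, Finset.forall_mem_image] at hfar' ⊢
    exact fun p hp => Bool.forall_bool.2 ⟨hfar' hp, hfar p hp⟩
  obtain ⟨i, hi, hvi⟩ := Theta.mem_diagram.1 hv
  obtain ⟨T'', hT''⟩ := exists_stabilizesPart hvi w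
  have hfresh : Fresh w.1 w.2 T'.U := fresh_iff.2 fun p hp d hpw => hoff p hp d
    (hpw ▸ (h.coord_ne d).symm) (hpw ▸ Set.right_mem_uIcc)
  have hequiv := hT''.basicEquiv hT' hfresh h.typeI fun p hp hx hy =>
    Prod.ext (not_imp_not.1 (hoff p hp true) hx) (not_imp_not.1 (hoff p hp false) hy)
  rw [← hφR, ← hψR, ← hT''.diagram_eq hi fun j hj hvj => hj (hT'.withEnds.eq_of_mem hvj hvi)]
  exact BasicEquiv.transfersTo ((hφ.trans hψ).trans hequiv) hT

theorem IsStabilizationSite.exists_stabilizesPart {R : Finset Pt} {T : Theta}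
    {E : Set (Bool × ℝ)} {v w : Pt} (h : IsStabilizationSite R v w) (hvR : v ∈ R)
    (hT : ThetaWithEnds T E) (hTR : T.diagram = stabSet v.1 v.2 w.1 w.2 R)
    (hv : (true, v.1) ∉ E) (hw : (true, w.1) ∉ E) (hw' : (false, w.2) ∉ E) :
    ∃ T' i, StabilizesPart T' T i v.1 v.2 w.1 w.2 ∧ T'.a = T.a ∧ T'.diagram = R ∧
      ∀ j, j ≠ i → v ∉ T'.part j := by
  have hmem : ∀ {p}, p ∈ T.diagram ↔ _ := fun {p} => hTR ▸ mem_stabSet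
  have hU : ∀ {p}, p ∈ T.diagram → p ∈ T.U := fun hp => Theta.mem_U_iff.2 (.inr hp)
  obtain ⟨i, hi, hwi⟩ := Theta.mem_diagram.1 (hmem.2 (.inr (.inr (.inl rfl))))
  have hxi : (w.1, v.2) ∈ T.part i :=
    hT.mem_part_of_coord_eq (d := true) hwi (hU (hmem.2 (.inl rfl))) rfl hw
  have hyi : (v.1, w.2) ∈ T.part i :=
    hT.mem_part_of_coord_eq (d := false) hwi (hU (hmem.2 (.inr (.inl rfl)))) rfl hw'
  obtain ⟨T', hi', hj'⟩ := T.exists_part_eq_and_part_of_ne i (R ∩ insert v (T.part i))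
  have hvi : v ∈ T'.part i := hi' ▸ Finset.mem_inter.2 ⟨hvR, Finset.mem_insert_self _ _⟩
  have hmem_i : ∀ {p}, p ∈ T.part i → p ∈ T.diagram := fun hp => Theta.mem_diagram.2 ⟨i, hi, hp⟩
  refine ⟨T', i, ⟨hvi, ?_, fun j hj => (hj' j hj).symm⟩, hj' 0 hi.symm, ?_, fun j hj hvj => ?_⟩
  · ext p
    rw [mem_stabSet, hi', Finset.mem_inter, Finset.mem_insert]
    grind
  · ext p
    rw [Theta.mem_diagram]
    refine ⟨fun ⟨j, hj, hp⟩ => ?_, fun hp => ?_⟩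
    · rcases eq_or_ne j i with rfl | hji
      · exact (Finset.mem_inter.1 (hi' ▸ hp)).1
      · rw [hj' j hji] at hp
        have hne : ∀ {q}, q ∈ T.part i → p ≠ q := fun hq hpq => hji (hT.eq_of_mem hp (hpq ▸ hq))
        rcases hmem.1 (Theta.mem_diagram.2 ⟨j, hj, hp⟩) with hp | hp | hp | ⟨-, hp⟩
        exacts [(hne hxi hp).elim, (hne hyi hp).elim, (hne hwi hp).elim, hp]
    · rcases eq_or_ne p v with rfl | hpv
      · exact ⟨i, hi, hvi⟩
      obtain ⟨j, hj, hpj⟩ := Theta.mem_diagram.1 (hmem.2 (.inr (.inr (.inr ⟨hpv, hp⟩))))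
      rcases eq_or_ne j i with rfl | hji
      · exact ⟨j, hj, hi' ▸ Finset.mem_inter.2 ⟨hp, Finset.mem_insert_of_mem hpj⟩⟩
      · exact ⟨j, hj, hj' j hji ▸ hpj⟩
  · rw [hj' j hj] at hvj
    exact hj (hT.eq_of_mem hvj
      (hT.mem_part_of_coord_eq (d := true) hyi (T.part_subset_U j hvj) rfl hv))

theorem IsStabilizationSite.transfersTo_of_forall_notMem_uIoo {R : Finset Pt} {T : Theta}
    {E : Set (Bool × ℝ)} {v w : Pt} (h : IsStabilizationSite R v w) (hvR : v ∈ R)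
    (hT : ThetaWithEnds T E) (hTR : T.diagram = stabSet v.1 v.2 w.1 w.2 R)
    (hv : (true, v.1) ∉ E) (hw : (true, w.1) ∉ E) (hw' : (false, w.2) ∉ E)
    (hclear : ∀ p ∈ T.U, p.1 ∉ Set.uIoo v.1 w.1) : TransfersTo T R := by
  obtain ⟨T', i, hstab, ha, hR, hvi⟩ := h.exists_stabilizesPart hvR hT hTR hv hw hw'
  have hyw : (v.1, w.2) ∈ T.diagram := hTR ▸ mem_stabSet.2 (.inr (.inl rfl))
  have hww : w ∈ T.diagram := hTR ▸ mem_stabSet.2 (.inr (.inr (.inl rfl)))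
  have hoff : ∀ p ∈ T.a, p.1 ∉ Set.uIcc v.1 w.1 ∧ p.2 ≠ w.2 := fun p hp => by
    have hpv : p.1 ≠ v.1 := fun hpv => hv (hpv ▸ hT.mem_ends_of_coord_eq (d := true) hp hyw hpv)
    have hpw : p.1 ≠ w.1 := fun hpw => hw (hpw ▸ hT.mem_ends_of_coord_eq (d := true) hp hww hpw)
    have hpc := hclear p (Theta.mem_U_iff.2 (.inl hp))
    rw [mem_uIoo] at hpc
    rw [Set.mem_uIcc]
    exact ⟨by grind, fun hpw' => hw' (hpw' ▸ hT.mem_ends_of_coord_eq (d := false) hp hww hpw')⟩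
  have hU : ∀ p ∈ T'.U, (p.1 ∉ Set.uIcc v.1 w.1 ∧ p.2 ≠ w.2) ∨ p ∈ R := fun p hp =>
    hR ▸ (Theta.mem_U_iff.1 hp).imp_left fun hp => hoff p (ha ▸ hp)
  have hfresh : Fresh w.1 w.2 T'.U :=
    ⟨fun p hp => (hU p hp).elim (fun hp hpw => hp.1 (hpw ▸ Set.right_mem_uIcc)) (h.fresh.1 p),
      fun p hp => (hU p hp).elim And.right (h.fresh.2 p)⟩
  have hT' := (hT.destabilize hstab hfresh hvi).thetaOK
  have hequiv := hstab.basicEquiv hT' hfresh h.typeI fun p hp hx hy =>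
    (hU p hp).elim (fun hp => absurd hx hp.1) fun hp => h.eq_of_mem_uIcc hp hx hy
  exact hR ▸ BasicEquiv.transfersTo hequiv.symm hT.thetaOK

-- The strip swept by the destabilization is cleared of `α`, which first requires the ends of `α`
-- to avoid its boundary.
theorem IsStabilizationSite.transfersTo_of_diagram_eq_stabSet {R : Finset Pt} {T : Theta}
    {v w : Pt} (h : IsStabilizationSite R v w) (hvR : v ∈ R) (hT : ThetaOK T)
    (hdT : IsDiagram T.diagram) (hTR : T.diagram = stabSet v.1 v.2 w.1 w.2 R) :
    TransfersTo T R := by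
  have hmem : ∀ {p}, p ∈ T.diagram ↔ _ := fun {p} => hTR ▸ mem_stabSet
  obtain ⟨T₁, q, r, hTT₁, hT₁, hq, hr, hTT₁R⟩ := hT.exists_thetaEquiv_horizontal_ne
    (h.coord_ne false) hdT (hmem.2 (.inl rfl)) (hmem.2 (.inr (.inl rfl)))
    (hmem.2 (.inr (.inr (.inl rfl)))) (hTR ▸ h.notMem_stabSet)
  have hE : ∀ x, (true, x) ∉ ({(false, q), (false, r)} : Set (Bool × ℝ)) := by simp
  have hE' : (false, w.2) ∉ ({(false, q), (false, r)} : Set (Bool × ℝ)) := by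
    simpa using ⟨hq.symm, hr.symm⟩
  have hstrip := h.isClearableStrip (hE v.1) (hE w.1) hE'
  rw [← hTR, ← hTT₁R] at hstrip
  obtain ⟨T₂, hT₁T₂, hparts, hT₂, hclear⟩ := hstrip.exists_basicEquiv_forall_notMem_uIoo hT₁
  have hT₂R := (hparts.diagram_eq.trans hTT₁R).trans hTR
  exact .of_thetaEquiv (hTT₁.trans hT₁T₂.thetaEquiv)
    (h.transfersTo_of_forall_notMem_uIoo hvR hT₂ hT₂R (hE _) (hE _) hE' hclear)

theorem LegMove.transfersTo {R : Finset Pt} {T : Theta} (hT : ThetaOK T)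
    (h : LegMove .I T.diagram R) : TransfersTo T R := by
  rcases h with ⟨-, -, f, hf, rfl⟩ | ⟨hR, -, f, hf, rfl⟩ | h | h
  · obtain ⟨d, t, t', hshift, rfl⟩ := cyclicData_iff.1 hf
    exact hshift.transfersTo hT
  · obtain ⟨d, s, t, hcomm, rfl⟩ := commData_iff.1 hf
    exact hcomm.transfersTo hT hR
  · obtain ⟨-, -, v, hv, w, hsite, rfl⟩ := stabMove_I_iff.1 h
    exact hsite.transfersTo hT hv
  · obtain ⟨-, hdT, v, hv, w, hsite, hTR⟩ := stabMove_I_iff.1 h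
    exact hsite.transfersTo_of_diagram_eq_stabSet hv hT hdT hTR

theorem LegEquiv.transfersTo {R : Finset Pt} {T : Theta} (hT : ThetaOK T)
    (h : LegEquiv T.diagram R) : TransfersTo T R := by
  induction h with
  | refl => exact ⟨T, hT, .refl, rfl⟩
  | tail _ hmove ih =>
    obtain ⟨T', hT', hTT', rfl⟩ := ih
    exact .of_thetaEquiv hTT' (LegMove.transfersTo hT' hmove)

/-- **Proposition.**  If `R` and `R'` are Legendrian equivalent rectangular diagrams and `α` is
a rectangular path whose ends lie on edges of `R`, with `R = β ∪ γ ∪ δ` the corresponding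
decomposition (`β`, `γ` the two paths into which the ends of `α` divide the component of `R`
containing those edges, `δ` the remaining components), then there are a rectangular path `α'`
with ends on edges of `R'` and a decomposition `R' = β' ∪ γ' ∪ δ'` such that the rectangular
Θ-diagrams `(α, β, γ, δ)` and `(α', β', γ', δ')` are Legendrian equivalent. -/
theorem path_transfers_along_legendrian_equivalence (R R' : Finset Pt)
    (hRR' : LegEquiv R R') (α β γ δ : Finset Pt)
    (hθ : ThetaOK ⟨α, β, γ, δ⟩)
    (hdec : R = β ∪ γ ∪ δ)
    (hbg : Disjoint β γ) (hbd : Disjoint β δ) (hgd : Disjoint γ δ)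
    (hcomp : IsComponent R (β ∪ γ)) :
    ∃ α' β' γ' δ' : Finset Pt, ThetaOK ⟨α', β', γ', δ'⟩ ∧ R' = β' ∪ γ' ∪ δ' ∧
      ThetaEquiv ⟨α, β, γ, δ⟩ ⟨α', β', γ', δ'⟩ := by
  obtain ⟨T, hT, hequiv, hR⟩ :=
    LegEquiv.transfersTo (T := ⟨α, β, γ, δ⟩) hθ (R := R') (by rwa [Theta.diagram, ← hdec])
  exact ⟨T.a, T.b, T.c, T.d, hT, hR.symm, hequiv⟩
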